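/- Assume the stated hypotheses on Ω and u, and let a ∈ ∂Ω be a GBU point. Then u has the universal final blow-up profile in the normal direction at a: lim_{s→0⁺} s^β ∇u(a + s ν_a, T) = d_p ν_a (the values ∇u(·,T) being defined since u is C² in space on Ω up to time T). -/

import Mathlib

open Set Metric Filter RealInnerProductSpace

noncomputable section

/-- A set `Ω ⊆ ℝⁿ` has boundary of class `C²`: near each boundary point, `Ω` is the strict
sublevel set of a `C²` function with nonvanishing gradient (equivalently, after a rigid motion,
the boundary is locally the graph of a `C²` function with `Ω` strictly on one side). -/
def IsC2Boundary {n : ℕ} (Ω : Set (EuclideanSpace ℝ (Fin n))) : Prop :=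
  ∀ x ∈ frontier Ω, ∃ f : EuclideanSpace ℝ (Fin n) → ℝ, ∃ U ∈ nhds x,
    ContDiffOn ℝ 2 f U ∧ (∀ y ∈ U, fderiv ℝ f y ≠ 0) ∧
    U ∩ Ω = U ∩ {y | f y < 0} ∧ U ∩ frontier Ω = U ∩ {y | f y = 0}

/-!
Since `∂ₜu` is bounded, each time slice `w = u(·, t)` near `T` solves `Δw + ‖∇w‖ ^ p = O(1)`.
Blow up at a boundary point `a`: rescaling lengths by `s` and values by `s ^ (β - 1)` makes the
error vanish and flattens the domain to a half-space, where the one-dimensional steady profile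
`U(y) = cₚ y ^ (1 - β)` is the candidate limit.

* Comparing the rescaled slice with its tangential translates, damped by a factor `1 - θ`
  to exploit the convexity of `‖·‖ ^ p`, shows that it is almost constant on the hyperplane at
  height `1` over the boundary. Comparison in the normal direction then gives `w ≤ U + η`.
* If the final slice fell below `U - η` at some small scale, then so would all slices at times
  close to `T`. A shifted profile, which is Lipschitz up to the boundary, would be an upper barrier
  for them, so `|w| ≤ A dist(·, ∂Ω)` near `a` uniformly in `t`. By interior estimates the gradient
  would stay bounded near `a`, contradicting gradient blow-up.

So the rescaled final slice converges to `U`, and an interior gradient estimate for functions with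
bounded Laplacian upgrades this to convergence of the gradients.
-/

open scoped Topology
open Module (finrank)

/-! ### Pointwise Laplacians -/

section Laplacian

variable {E : Type*} [NormedAddCommGroup E] [InnerProductSpace ℝ E]

theorem deriv_le_of_eventually_sub_le {f g : ℝ → ℝ} {f' g' a : ℝ} (hf : HasDerivAt f f' a)
    (hg : HasDerivAt g g' a) (h : ∀ᶠ t in 𝓝[>] a, f t - f a ≤ g t - g a) : f' ≤ g' := by
  have hslope {k : ℝ → ℝ} {k' : ℝ} (hk : HasDerivAt k k' a) :
      Tendsto (slope k a) (𝓝[>] a) (𝓝 k') :=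
    (hasDerivAt_iff_tendsto_slope.1 hk).mono_left (nhdsWithin_mono a fun _ ht => ne_of_gt ht)
  refine le_of_tendsto_of_tendsto (hslope hf) (hslope hg) ?_
  filter_upwards [h, self_mem_nhdsWithin] with t ht hat
  rw [slope_def_field, slope_def_field]
  exact div_le_div_of_nonneg_right ht (sub_nonneg.2 (le_of_lt hat))

theorem le_of_forall_isMaxOn_le {X : Type*} [TopologicalSpace X] {K : Set X} {φ : X → ℝ}
    {c : ℝ} (hK : IsCompact K) (hφ : ContinuousOn φ K) (h : ∀ x ∈ K, IsMaxOn φ K x → φ x ≤ c) :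
    ∀ x ∈ K, φ x ≤ c := by
  intro x hx
  obtain ⟨y, hy, hmax⟩ := hK.exists_isMaxOn ⟨x, hx⟩ hφ
  exact (hmax hx).trans (h y hy hmax)

theorem second_deriv_nonpos_of_isLocalMax {f f' : ℝ → ℝ} {f'' a : ℝ} (hmax : IsLocalMax f a)
    (hf : ∀ᶠ t in 𝓝 a, HasDerivAt f (f' t) t) (hf' : HasDerivAt f' f'' a) : f'' ≤ 0 := by
  by_contra! hpos
  have hderiv : deriv f =ᶠ[𝓝 a] f' := hf.mono fun _ ht => ht.deriv
  have hmin : IsLocalMin f a := isLocalMin_of_deriv_deriv_pos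
    (by rwa [hderiv.deriv_eq, hf'.deriv]) hmax.deriv_eq_zero hf.self_of_nhds.continuousAt
  have hconst : f =ᶠ[𝓝 a] fun _ => f a := by
    filter_upwards [hmax, hmin] with t h₁ h₂ using le_antisymm h₁ h₂
  have hzero : f' =ᶠ[𝓝 a] fun _ => 0 := by
    filter_upwards [hderiv, hconst.deriv] with t h₁ h₂
    rw [← h₁, h₂, deriv_const]
  have := hf'.deriv
  rw [hzero.deriv_eq, deriv_const] at this
  exact hpos.ne this

theorem hasDerivAt_add_smul (x e : E) (t : ℝ) : HasDerivAt (fun τ : ℝ => x + τ • e) e t := by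
  simpa using ((hasDerivAt_id t).smul_const e).const_add x

variable [FiniteDimensional ℝ E] {φ ψ : E → ℝ} {x v v' : E} {L L' : ℝ}

theorem hasGradientAt_of_hasFDerivAt {A : E →L[ℝ] ℝ} (h : HasFDerivAt φ A x)
    (hA : ∀ z, A z = ⟪v, z⟫) : HasGradientAt φ v x := by
  rw [hasGradientAt_iff_hasFDerivAt]
  have : InnerProductSpace.toDual ℝ E v = A := ContinuousLinearMap.ext fun z => by simp [hA]
  rwa [this]

theorem hasDerivAt_comp_of_hasGradientAt {γ : ℝ → E} {e : E} {t : ℝ}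
    (h : HasGradientAt φ v (γ t)) (hγ : HasDerivAt γ e t) :
    HasDerivAt (fun τ => φ (γ τ)) ⟪v, e⟫ t := by
  simpa [Function.comp_def] using (hasGradientAt_iff_hasFDerivAt.1 h).comp_hasDerivAt t hγ

theorem inner_le_of_eventually_ray_le {e : E} {q : ℝ → ℝ} {q' : ℝ} (h : HasGradientAt φ v x)
    (hq : HasDerivAt q q' 0) (hle : ∀ᶠ t in 𝓝[>] (0 : ℝ), φ (x + t • e) - φ x ≤ q t - q 0) :
    ⟪v, e⟫ ≤ q' := by
  have hx : HasGradientAt φ v (x + (0 : ℝ) • e) := by simpa using h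
  refine deriv_le_of_eventually_sub_le
    (hasDerivAt_comp_of_hasGradientAt hx (hasDerivAt_add_smul x e 0)) hq ?_
  simpa using hle

/-- `φ` is differentiable near `x` and twice differentiable at `x`, with gradient `v` and
Laplacian `L` there. The Laplacian is the trace of the derivative of the gradient; continuity of
the second derivatives is not required, so that the notion applies to every pointwise identity
between `φ`, its gradient and its Laplacian. -/
def HasLaplacianAt (φ : E → ℝ) (v : E) (L : ℝ) (x : E) : Prop :=
  ∃ (g : E → E) (A : E →L[ℝ] E), (∀ᶠ y in 𝓝 x, HasGradientAt φ (g y) y) ∧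
    HasFDerivAt g A x ∧ g x = v ∧ LinearMap.trace ℝ E A = L

namespace HasLaplacianAt

theorem hasGradientAt (h : HasLaplacianAt φ v L x) : HasGradientAt φ v x := by
  obtain ⟨g, A, hg, -, rfl, -⟩ := h
  exact hg.self_of_nhds

theorem continuousAt (h : HasLaplacianAt φ v L x) : ContinuousAt φ x :=
  h.hasGradientAt.continuousAt

theorem add (h : HasLaplacianAt φ v L x) (h' : HasLaplacianAt ψ v' L' x) :
    HasLaplacianAt (fun y => φ y + ψ y) (v + v') (L + L') x := by
  obtain ⟨g, A, hg, hA, rfl, rfl⟩ := h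
  obtain ⟨g', A', hg', hA', rfl, rfl⟩ := h'
  refine ⟨fun y => g y + g' y, A + A', ?_, hA.add hA', rfl, by simp⟩
  filter_upwards [hg, hg'] with y hy hy'
  exact hasGradientAt_of_hasFDerivAt ((hasGradientAt_iff_hasFDerivAt.1 hy).add
    (hasGradientAt_iff_hasFDerivAt.1 hy')) (by simp [inner_add_left])

theorem const_mul (c : ℝ) (h : HasLaplacianAt φ v L x) :
    HasLaplacianAt (fun y => c * φ y) (c • v) (c * L) x := by
  obtain ⟨g, A, hg, hA, rfl, rfl⟩ := h
  refine ⟨fun y => c • g y, c • A, ?_, hA.const_smul c, rfl, by simp⟩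
  filter_upwards [hg] with y hy
  exact hasGradientAt_of_hasFDerivAt ((hasGradientAt_iff_hasFDerivAt.1 hy).const_mul c)
    (by simp [inner_smul_left])

theorem sub (h : HasLaplacianAt φ v L x) (h' : HasLaplacianAt ψ v' L' x) :
    HasLaplacianAt (fun y => φ y - ψ y) (v - v') (L - L') x := by
  simpa [sub_eq_add_neg] using h.add (h'.const_mul (-1))

protected theorem const (c : ℝ) (x : E) : HasLaplacianAt (fun _ => c) 0 0 x :=
  ⟨fun _ => 0, 0, Eventually.of_forall fun y => hasGradientAt_const y c,
    hasFDerivAt_const _ _, rfl, by simp⟩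

protected theorem inner (e x : E) : HasLaplacianAt (fun y => ⟪e, y⟫) e 0 x :=
  ⟨fun _ => e, 0, Eventually.of_forall fun y => hasGradientAt_of_hasFDerivAt
    (innerSL ℝ e).hasFDerivAt (by simp), hasFDerivAt_const _ _, rfl, by simp⟩

protected theorem norm_sub_sq (b x : E) :
    HasLaplacianAt (fun y => ‖y - b‖ ^ 2) ((2 : ℝ) • (x - b)) (2 * finrank ℝ E) x := by
  refine ⟨fun y => (2 : ℝ) • (y - b), (2 : ℝ) • ContinuousLinearMap.id ℝ E,
    Eventually.of_forall fun y => ?_, ((hasFDerivAt_id x).sub_const b).const_smul (2 : ℝ), rfl,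
    by simp⟩
  exact hasGradientAt_of_hasFDerivAt ((hasFDerivAt_id y).sub_const b).norm_sq
    fun z => by simp [inner_smul_left, inner_sub_left]

theorem comp {U U' : ℝ → ℝ} {U'' : ℝ} (h : HasLaplacianAt φ v L x)
    (hU : ∀ᶠ τ in 𝓝 (φ x), HasDerivAt U (U' τ) τ) (hU' : HasDerivAt U' U'' (φ x)) :
    HasLaplacianAt (fun y => U (φ y)) (U' (φ x) • v) (U'' * ‖v‖ ^ 2 + U' (φ x) * L) x := by
  have hφ := hasGradientAt_iff_hasFDerivAt.1 h.hasGradientAt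
  obtain ⟨g, A, hg, hA, rfl, rfl⟩ := h
  refine ⟨fun y => U' (φ y) • g y, _, ?_, (hU'.comp_hasFDerivAt x hφ).smul hA, rfl, ?_⟩
  · filter_upwards [hg, hφ.continuousAt.tendsto.eventually hU] with y hy hUy
    exact hasGradientAt_of_hasFDerivAt
      (hUy.comp_hasFDerivAt y (hasGradientAt_iff_hasFDerivAt.1 hy)) (by simp [inner_smul_left])
  · have hrank : LinearMap.trace ℝ E ((U'' • InnerProductSpace.toDual ℝ E (g x)).smulRight (g x)) =
        U'' * ‖g x‖ ^ 2 := by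
      rw [← real_inner_self_eq_norm_sq]
      exact LinearMap.trace_smulRight _ _
    simp only [ContinuousLinearMap.toLinearMap_add, ContinuousLinearMap.toLinearMap_smul, map_add,
      map_smul, smul_eq_mul, Function.comp_def, hrank]
    ring

theorem inner_sq (e x : E) :
    HasLaplacianAt (fun y => ⟪e, y⟫ ^ 2) ((2 * ⟪e, x⟫) • e) (2 * ‖e‖ ^ 2) x := by
  simpa using (HasLaplacianAt.inner e x).comp (U := fun τ => τ ^ 2) (U' := fun τ => 2 * τ)
    (Eventually.of_forall fun τ => by simpa using hasDerivAt_pow 2 τ)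
    (by simpa using (hasDerivAt_id ⟪e, x⟫).const_mul 2)

open ContinuousLinearMap in
theorem comp_affine {B : E →L[ℝ] E} {k : ℝ} (c : E) (hB : B ∘L adjoint B = k • .id ℝ E)
    (h : HasLaplacianAt φ v L (c + B x)) :
    HasLaplacianAt (fun y => φ (c + B y)) (adjoint B v) (k * L) x := by
  obtain ⟨g, A, hg, hA, rfl, rfl⟩ := h
  have hd (y : E) : HasFDerivAt (fun y => c + B y) B y := B.hasFDerivAt.const_add c
  refine ⟨fun y => adjoint B (g (c + B y)), adjoint B ∘L A ∘L B, ?_,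
    (adjoint B).hasFDerivAt.comp x (hA.comp x (hd x)), rfl, ?_⟩
  · filter_upwards [(hd x).continuousAt.tendsto.eventually hg] with y hy
    exact hasGradientAt_of_hasFDerivAt ((hasGradientAt_iff_hasFDerivAt.1 hy).comp y (hd y))
      (by simp [adjoint_inner_left])
  · calc LinearMap.trace ℝ E (adjoint B ∘L A ∘L B : E →L[ℝ] E)
        = LinearMap.trace ℝ E (A ∘L (B ∘L adjoint B) : E →L[ℝ] E) :=
          LinearMap.trace_comp_comm' (A ∘L B).toLinearMap (adjoint B).toLinearMap
      _ = k * LinearMap.trace ℝ E A := by rw [hB]; simp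

theorem comp_linearIsometryEquiv (c : E) (R : E ≃ₗᵢ[ℝ] E) (h : HasLaplacianAt φ v L (c + R x)) :
    HasLaplacianAt (fun y => φ (c + R y)) (R.symm v) L x := by
  have hR : (R : E →L[ℝ] E) ∘L ContinuousLinearMap.adjoint (R : E →L[ℝ] E) =
      (1 : ℝ) • .id ℝ E := by
    rw [LinearIsometryEquiv.adjoint_eq_symm]
    ext y
    simp
  simpa [LinearIsometryEquiv.adjoint_eq_symm] using comp_affine (B := (R : E →L[ℝ] E)) c hR h

theorem comp_const_add_smul (c : E) (s : ℝ) (h : HasLaplacianAt φ v L (c + s • x)) :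
    HasLaplacianAt (fun y => φ (c + s • y)) (s • v) (s ^ 2 * L) x := by
  have hs : (s • .id ℝ E) ∘L ContinuousLinearMap.adjoint (s • .id ℝ E) = s ^ 2 • .id ℝ E := by
    ext y
    simp [smul_smul, sq, ContinuousLinearMap.adjoint_id]
  simpa [ContinuousLinearMap.adjoint_id] using comp_affine (B := s • .id ℝ E) c hs h

theorem comp_const_add (c : E) (h : HasLaplacianAt φ v L (c + x)) :
    HasLaplacianAt (fun y => φ (c + y)) v L x := by
  simpa using comp_const_add_smul c 1 (by simpa using h)

theorem isLocalMax (h : HasLaplacianAt φ v L x) (hmax : IsLocalMax φ x) : v = 0 ∧ L ≤ 0 := by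
  have hv : v = 0 := (InnerProductSpace.toDual ℝ E).map_eq_zero_iff.1
    (hmax.hasFDerivAt_eq_zero (hasGradientAt_iff_hasFDerivAt.1 h.hasGradientAt))
  obtain ⟨g, A, hg, hA, -, rfl⟩ := h
  refine ⟨hv, ?_⟩
  let b := stdOrthonormalBasis ℝ E
  rw [LinearMap.trace_eq_sum_inner _ b]
  refine Finset.sum_nonpos fun i _ => ?_
  have hline : Tendsto (fun t : ℝ => x + t • b i) (𝓝 0) (𝓝 x) := by
    simpa using (hasDerivAt_add_smul x (b i) 0).continuousAt.tendsto
  have hx : x + (0 : ℝ) • b i = x := by simp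
  refine second_deriv_nonpos_of_isLocalMax (f := fun t => φ (x + t • b i))
    (f' := fun t => ⟪b i, g (x + t • b i)⟫) (a := 0) ?_ ?_ ?_
  · simpa [IsLocalMax, IsMaxFilter] using hline.eventually hmax
  · filter_upwards [hline.eventually hg] with t ht
    rw [real_inner_comm]
    exact hasDerivAt_comp_of_hasGradientAt ht (hasDerivAt_add_smul x (b i) t)
  · rw [← hx] at hA
    simpa using (hasDerivAt_const (0 : ℝ) (b i)).inner ℝ
      (hA.comp_hasDerivAt (0 : ℝ) (hasDerivAt_add_smul x (b i) 0))

end HasLaplacianAt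

end Laplacian

/-! ### Interior gradient estimate -/

section GradientEstimate

variable {E : Type*} [NormedAddCommGroup E] [InnerProductSpace ℝ E]
  {φ : E → ℝ} {x v e : E} {S N ρ : ℝ}

/-- The odd part, in the variable `y`, of `φ (x + y)` under reflection in the hyperplane `eᗮ`. It
vanishes on that hyperplane and has the same derivative in the direction `e` as `φ`. -/
def oddPart (φ : E → ℝ) (x e y : E) : ℝ :=
  1 / 2 * (φ (x + y) - φ (x + (ℝ ∙ e)ᗮ.reflection y))

theorem oddPart_le (hφS : ∀ y ∈ closedBall x ρ, |φ y| ≤ S) :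
    ∀ y ∈ closedBall 0 ρ, oddPart φ x e y ≤ S := by
  intro y hy
  have h₁ := abs_le.1 (hφS (x + y) (by simpa using hy))
  have h₂ := abs_le.1 (hφS (x + (ℝ ∙ e)ᗮ.reflection y) (by simpa using hy))
  unfold oddPart
  linarith

variable [FiniteDimensional ℝ E]

theorem le_halfBall_barrier (he : ‖e‖ = 1) (hρ : 0 < ρ) (hS : 0 ≤ S) (hN : 0 ≤ N)
    (hL : ∀ y ∈ closedBall 0 ρ, ∃ v L, HasLaplacianAt φ v L y ∧ -N < L)
    (hφS : ∀ y ∈ closedBall 0 ρ, φ y ≤ S)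
    (hφ0 : ∀ y ∈ closedBall 0 ρ, ⟪e, y⟫ = 0 → φ y ≤ 0) :
    ∀ y ∈ closedBall 0 ρ ∩ {y | 0 ≤ ⟪e, y⟫}, φ y ≤
      S / ρ ^ 2 * ‖y‖ ^ 2 + (finrank ℝ E * S / ρ ^ 2 + N / 2) * (ρ * ⟪e, y⟫ - ⟪e, y⟫ ^ 2) := by
  set D := finrank ℝ E * S / ρ ^ 2 + N / 2 with hD
  suffices h : ∀ y ∈ closedBall 0 ρ ∩ {y | 0 ≤ ⟪e, y⟫},
      φ y - (S / ρ ^ 2 * ‖y - 0‖ ^ 2 + D * (ρ * ⟪e, y⟫ - ⟪e, y⟫ ^ 2)) ≤ 0 by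
    intro y hy
    simpa using sub_nonpos.1 (h y hy)
  have hcont : ContinuousOn φ (closedBall 0 ρ) := fun y hy =>
    let ⟨_, _, h, _⟩ := hL y hy
    h.continuousAt.continuousWithinAt
  refine le_of_forall_isMaxOn_le ((isCompact_closedBall 0 ρ).inter_right
    (isClosed_le continuous_const (by fun_prop))) ?_ ?_
  · have := hcont.mono (inter_subset_left (t := {y : E | 0 ≤ ⟪e, y⟫}))
    fun_prop
  rintro y ⟨hyρ, hy0⟩ hmax
  have hnorm : ‖y‖ ≤ ρ := mem_closedBall_zero_iff.1 hyρ
  have hinner : ⟪e, y⟫ ≤ ρ := by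
    simpa [he] using (real_inner_le_norm e y).trans (by simpa [he] using hnorm)
  have hquad : 0 ≤ S / ρ ^ 2 * ‖y - 0‖ ^ 2 := by positivity
  have hconc : 0 ≤ D * (ρ * ⟪e, y⟫ - ⟪e, y⟫ ^ 2) :=
    mul_nonneg (by positivity) (by nlinarith [mul_nonneg hy0 (sub_nonneg.2 hinner)])
  rcases (show 0 ≤ ⟪e, y⟫ from hy0).eq_or_lt with hface | hpos
  · linarith [hφ0 y hyρ hface.symm]
  rcases hnorm.eq_or_lt with hsphere | hball
  · have : S / ρ ^ 2 * ‖y - 0‖ ^ 2 = S := by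
      rw [sub_zero, hsphere]
      field_simp
    linarith [hφS y hyρ]
  have hloc := hmax.isLocalMax <| inter_mem
    (closedBall_mem_nhds_of_mem (mem_ball_zero_iff.2 hball))
    ((continuous_const.inner continuous_id).continuousAt.eventually (le_mem_nhds hpos))
  obtain ⟨v, L, hJ, hLN⟩ := hL y hyρ
  have hLap := (hJ.sub (((HasLaplacianAt.norm_sub_sq 0 y).const_mul (S / ρ ^ 2)).add
    ((((HasLaplacianAt.inner e y).const_mul ρ).sub (.inner_sq e y)).const_mul D))).isLocalMax hloc
  have hDN : D * 2 = S / ρ ^ 2 * (2 * finrank ℝ E) + N := by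
    rw [hD]
    ring
  have := hLap.2
  rw [he] at this
  linarith

theorem hasLaplacianAt_oddPart
    (hL : ∀ y ∈ closedBall x ρ, ∃ v L, HasLaplacianAt φ v L y ∧ |L| < N) :
    ∀ y ∈ closedBall 0 ρ, ∃ v L, HasLaplacianAt (oddPart φ x e) v L y ∧ -N < L := by
  intro y hy
  obtain ⟨v₁, L₁, h₁, hL₁⟩ := hL (x + y) (by simpa using hy)
  obtain ⟨v₂, L₂, h₂, hL₂⟩ := hL (x + (ℝ ∙ e)ᗮ.reflection y) (by simpa using hy)
  refine ⟨_, _, ((h₁.comp_const_add x).sub (h₂.comp_linearIsometryEquiv x _)).const_mul (1 / 2), ?_⟩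
  linarith [abs_lt.1 hL₁, abs_lt.1 hL₂]

theorem hasDerivAt_oddPart (hv : HasGradientAt φ v x) :
    HasDerivAt (fun t : ℝ => oddPart φ x e (t • e)) ⟪v, e⟫ 0 := by
  have hray (e : E) : HasDerivAt (fun t : ℝ => φ (x + t • e)) ⟪v, e⟫ 0 :=
    hasDerivAt_comp_of_hasGradientAt (by simpa using hv) (hasDerivAt_add_smul x e 0)
  have hodd (t : ℝ) : oddPart φ x e (t • e) = 1 / 2 * (φ (x + t • e) - φ (x + t • -e)) := by
    simp [oddPart, Submodule.reflection_orthogonalComplement_singleton_eq_neg]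
  simp only [hodd]
  refine (((hray e).sub (hray (-e))).const_mul (1 / 2)).congr_deriv ?_
  rw [inner_neg_right]
  ring

theorem inner_gradient_le_of_laplacian_bound (he : ‖e‖ = 1) (hρ : 0 < ρ) (hS : 0 ≤ S) (hN : 0 ≤ N)
    (hφS : ∀ y ∈ closedBall x ρ, |φ y| ≤ S)
    (hL : ∀ y ∈ closedBall x ρ, ∃ v L, HasLaplacianAt φ v L y ∧ |L| < N)
    (hv : HasGradientAt φ v x) : ⟪v, e⟫ ≤ finrank ℝ E * S / ρ + N * ρ / 2 := by
  have hbarrier := le_halfBall_barrier (φ := oddPart φ x e) he hρ hS hN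
    (hasLaplacianAt_oddPart hL) (oddPart_le hφS) fun y _ hey => by
      have hy : y ∈ (ℝ ∙ e)ᗮ := Submodule.mem_orthogonal_singleton_iff_inner_right.2 hey
      simp [oddPart, Submodule.reflection_mem_subspace_eq_self hy]
  set D := finrank ℝ E * S / ρ ^ 2 + N / 2 with hD
  have hq : HasDerivAt (fun t => S / ρ ^ 2 * t ^ 2 + D * (ρ * t - t ^ 2)) (D * ρ) 0 := by
    have hsq := hasDerivAt_pow 2 (0 : ℝ)
    simpa using (hsq.const_mul (S / ρ ^ 2)).fun_add
      ((((hasDerivAt_id (0 : ℝ)).const_mul ρ).fun_sub hsq).const_mul D)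
  have hDρ : D * ρ = finrank ℝ E * S / ρ + N * ρ / 2 := by
    rw [hD]
    field_simp
  rw [← hDρ]
  refine deriv_le_of_eventually_sub_le (hasDerivAt_oddPart hv) hq ?_
  filter_upwards [Ioo_mem_nhdsGT hρ] with t ht
  have := hbarrier (t • e) ⟨by simp [norm_smul, he, abs_of_pos ht.1, ht.2.le],
    by simp [inner_smul_right, he, ht.1.le]⟩
  simpa [oddPart, inner_smul_right, norm_smul, he] using this

theorem norm_gradient_le_of_laplacian_bound (hρ : 0 < ρ) (hS : 0 ≤ S)
    (hφS : ∀ y ∈ closedBall x ρ, |φ y| ≤ S)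
    (hL : ∀ y ∈ closedBall x ρ, ∃ v L, HasLaplacianAt φ v L y ∧ |L| < N)
    (hv : HasGradientAt φ v x) : ‖v‖ ≤ finrank ℝ E * S / ρ + N * ρ / 2 := by
  have hN : 0 ≤ N := by
    obtain ⟨_, L, -, h⟩ := hL x (mem_closedBall_self hρ.le)
    exact (abs_nonneg L).trans h.le
  rcases eq_or_ne v 0 with rfl | hv0
  · rw [norm_zero]
    positivity
  · have hunit : ‖‖v‖⁻¹ • v‖ = 1 := norm_smul_inv_norm hv0
    have hvv : ⟪v, ‖v‖⁻¹ • v⟫ = ‖v‖ := by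
      rw [inner_smul_right, real_inner_self_eq_norm_sq]
      field_simp [norm_ne_zero_iff.2 hv0]
    exact hvv ▸ inner_gradient_le_of_laplacian_bound hunit hρ hS hN hφS hL hv

end GradientEstimate

/-! ### The boundary near a point -/

section Boundary

theorem notMem_of_mem_frontier {X : Type*} [TopologicalSpace X] {Ω : Set X} {x : X}
    (hΩ : IsOpen Ω) (hx : x ∈ frontier Ω) : x ∉ Ω :=
  (hΩ.frontier_eq ▸ hx : x ∈ closure Ω \ Ω).2

theorem infDist_frontier_pos {X : Type*} [PseudoMetricSpace X] {Ω : Set X} {x : X}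
    (hΩ : IsOpen Ω) (hne : (frontier Ω).Nonempty) (hx : x ∈ Ω) :
    0 < infDist x (frontier Ω) :=
  (isClosed_frontier.notMem_iff_infDist_pos hne).1 fun h => notMem_of_mem_frontier hΩ h hx

variable {E : Type*} [NormedAddCommGroup E] [NormedSpace ℝ E] {Ω : Set E} {x y : E}

theorem ball_infDist_frontier_subset (hΩ : IsOpen Ω) (hx : x ∈ Ω) :
    ball x (infDist x (frontier Ω)) ⊆ Ω := by
  rcases (infDist_nonneg : 0 ≤ infDist x (frontier Ω)).eq_or_lt with h0 | hpos
  · simp [← h0]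
  refine (convex_ball x _).isPreconnected.subset_of_closure_inter_subset hΩ
    ⟨x, mem_ball_self hpos, hx⟩ fun y ⟨hyΩ, hyball⟩ => ?_
  by_contra hy
  exact ball_infDist_subset_compl hyball (hΩ.frontier_eq ▸ ⟨hyΩ, hy⟩)

theorem infDist_frontier_le_dist_of_notMem (hΩ : IsOpen Ω) (hx : x ∈ Ω) (hy : y ∉ Ω) :
    infDist x (frontier Ω) ≤ dist x y :=
  le_of_not_gt fun h => hy (ball_infDist_frontier_subset hΩ hx (mem_ball'.2 h))

end Boundary

section DefiningFunction

variable {E : Type*} [NormedAddCommGroup E] [InnerProductSpace ℝ E] {Ω : Set E} {a ν w : E}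

theorem abs_inner_le_norm_of_norm_eq_one (hν : ‖ν‖ = 1) (x : E) : |⟪ν, x⟫| ≤ ‖x‖ := by
  simpa [hν] using abs_real_inner_le_norm ν x

theorem eventually_add_smul_mem_ball (hν : ‖ν‖ = 1) {ρ : ℝ} (hρ : 0 < ρ) {v : E}
    (hv : 0 < ⟪ν, v⟫) : ∀ᶠ t in 𝓝[>] (0 : ℝ), a + t • v ∈ ball (a + ρ • ν) ρ := by
  filter_upwards [Ioo_mem_nhdsGT (show 0 < 2 * ρ * ⟪ν, v⟫ / (‖v‖ ^ 2 + 1) by positivity)]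
    with t ⟨ht0, ht⟩
  rw [lt_div_iff₀ (by positivity)] at ht
  rw [mem_ball, dist_eq_norm, add_sub_add_left_eq_sub]
  refine lt_of_pow_lt_pow_left₀ 2 hρ.le ?_
  rw [norm_sub_sq_real, norm_smul, norm_smul, hν, inner_smul_left, inner_smul_right,
    real_inner_comm]
  simp only [Real.norm_eq_abs, mul_pow, sq_abs, conj_trivial]
  nlinarith

theorem norm_smul_eq_neg_of_inner_nonpos (hν : ‖ν‖ = 1)
    (h : ∀ v, 0 < ⟪ν, v⟫ → ⟪w, v⟫ ≤ 0) : ‖w‖ • ν = -w := by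
  have hCS : ⟪ν, -w⟫ ≤ ‖w‖ := by simpa [hν] using real_inner_le_norm ν (-w)
  rw [inner_neg_right] at hCS
  rcases eq_or_ne w 0 with rfl | hw
  · simp
  have hinner : ⟪ν, -w⟫ = ‖ν‖ * ‖-w‖ := by
    rw [hν, one_mul, norm_neg, inner_neg_right]
    by_contra hne
    have hpos : 0 < ‖w‖ + ⟪ν, w⟫ := by linarith [lt_of_le_of_ne hCS hne]
    have h₁ := h (‖w‖ • ν + w) (by
      simpa [inner_add_right, inner_smul_right, hν] using hpos)
    have h₂ : ⟪w, ‖w‖ • ν + w⟫ = ‖w‖ * (‖w‖ + ⟪ν, w⟫) := by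
      rw [inner_add_right, inner_smul_right, real_inner_self_eq_norm_sq, real_inner_comm]
      ring
    exact h₁.not_gt (h₂ ▸ mul_pos (norm_pos_iff.2 hw) hpos)
  simpa [hν] using inner_eq_norm_mul_iff_real.1 hinner

/-- The boundary of `Ω` is of class `C²` near `a`: there, `Ω` is the strict sublevel set of a `C²`
function without critical points. -/
def IsC2BoundaryAt (Ω : Set E) (a : E) : Prop :=
  ∃ f : E → ℝ, ∃ U ∈ nhds a, ContDiffOn ℝ 2 f U ∧ (∀ y ∈ U, fderiv ℝ f y ≠ 0) ∧
    U ∩ Ω = U ∩ {y | f y < 0} ∧ U ∩ frontier Ω = U ∩ {y | f y = 0}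

/-- `ν` is the inner normal of `Ω` at `a`: near `a`, the set `Ω` coincides with the half space
`⟪ν, x - a⟫ > 0` up to an error `o(‖x - a‖)`. -/
def HasInnerNormalAt (Ω : Set E) (ν a : E) : Prop :=
  ∀ ε > 0, ∀ᶠ x in 𝓝 a, (x ∉ Ω → ⟪ν, x - a⟫ ≤ ε * ‖x - a‖) ∧
    (x ∈ closure Ω → -(ε * ‖x - a‖) ≤ ⟪ν, x - a⟫)

theorem HasInnerNormalAt.eventually_infDist_le_inner (hΩ : IsOpen Ω) (ha : a ∈ frontier Ω)
    (hν : ‖ν‖ = 1) (h : HasInnerNormalAt Ω ν a) {ε : ℝ} (hε : 0 < ε) :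
    ∀ᶠ x in 𝓝 a, x ∈ closure Ω → infDist x (frontier Ω) ≤ ⟪ν, x - a⟫ + ε * ‖x - a‖ := by
  wlog hε1 : ε ≤ 1 generalizing ε
  · filter_upwards [this one_pos le_rfl] with x hx hxΩ
    nlinarith [hx hxΩ, norm_nonneg (x - a)]
  obtain ⟨ρ, hρ, hcone⟩ := Metric.eventually_nhds_iff.1 (h (ε / 4) (by positivity))
  filter_upwards [ball_mem_nhds a (show 0 < ρ / 4 by positivity)] with x hxball hx
  rw [mem_ball, dist_eq_norm] at hxball
  have hνx := (abs_le.1 (abs_inner_le_norm_of_norm_eq_one hν (x - a))).2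
  have hlow := (hcone (y := x) (by rw [dist_eq_norm]; linarith)).2 hx
  by_cases hxΩ : x ∉ Ω
  · rw [infDist_zero_of_mem (hΩ.frontier_eq ▸ ⟨hx, hxΩ⟩)]
    nlinarith [norm_nonneg (x - a)]
  rw [not_not] at hxΩ
  have hxa : 0 < ‖x - a‖ := norm_pos_iff.2 <| sub_ne_zero.2 fun h =>
    notMem_of_mem_frontier hΩ ha (h ▸ hxΩ)
  -- Moving from `x` along `-ν` by `m` leaves the cone that contains `Ω`.
  set m := ⟪ν, x - a⟫ + ε * ‖x - a‖ with hm
  have hm0 : 0 ≤ m := by nlinarith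
  have hshift : x - m • ν - a = (x - a) - m • ν := by abel
  have hdist : ‖x - m • ν - a‖ ≤ 3 * ‖x - a‖ := by
    have := norm_sub_le (x - a) (m • ν)
    rw [norm_smul, hν, Real.norm_of_nonneg hm0] at this
    rw [hshift]
    nlinarith
  have hout : x - m • ν ∉ Ω := fun hmem => by
    have h₁ := (hcone (y := x - m • ν) (by rw [dist_eq_norm]; linarith)).2 (subset_closure hmem)
    rw [hshift, inner_sub_right, inner_smul_right, real_inner_self_eq_norm_sq, hν, ← hshift, hm]
      at h₁
    nlinarith
  simpa [dist_eq_norm, norm_smul, hν, abs_of_nonneg hm0] using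
    infDist_frontier_le_dist_of_notMem hΩ hxΩ hout

variable [FiniteDimensional ℝ E]

theorem HasInnerNormalAt.eventually_inner_le_infDist (hΩ : IsOpen Ω) (ha : a ∈ frontier Ω)
    (hν : ‖ν‖ = 1) (h : HasInnerNormalAt Ω ν a) {ε : ℝ} (hε : 0 < ε) :
    ∀ᶠ x in 𝓝 a, ⟪ν, x - a⟫ - ε * ‖x - a‖ ≤ infDist x (frontier Ω) := by
  obtain ⟨ρ, hρ, hcone⟩ := Metric.eventually_nhds_iff.1 (h (ε / 2) (half_pos hε))
  filter_upwards [ball_mem_nhds a (half_pos hρ)] with x hx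
  obtain ⟨q, hq, hxq⟩ := isClosed_frontier.exists_infDist_eq_dist ⟨a, ha⟩ x
  have hqa : dist q a ≤ 2 * dist x a := by
    linarith [dist_triangle_left q a x, hxq ▸ infDist_le_dist_of_mem (x := x) ha]
  have hq' := (hcone (by linarith [mem_ball.1 hx])).1 (notMem_of_mem_frontier hΩ hq)
  have hsplit : ⟪ν, x - a⟫ = ⟪ν, x - q⟫ + ⟪ν, q - a⟫ := by
    rw [← inner_add_right, sub_add_sub_cancel]
  rw [dist_eq_norm, dist_eq_norm] at hqa
  have hxq' := (abs_le.1 (abs_inner_le_norm_of_norm_eq_one hν (x - q))).2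
  rw [hxq, dist_eq_norm]
  nlinarith

/-- `r` is a defining function of `Ω` near the boundary point `a`, positive in `Ω`, normalized so
that its gradient at `a` is the inner normal `ν`, and with Laplacian bounded by `Λ`. -/
structure IsDefiningFunctionAt (Ω : Set E) (ν : E) (r : E → ℝ) (Λ : ℝ) (a : E) : Prop where
  mem_iff : ∀ᶠ x in 𝓝 a, x ∈ Ω ↔ 0 < r x
  mem_frontier_iff : ∀ᶠ x in 𝓝 a, x ∈ frontier Ω ↔ r x = 0
  hasLaplacianAt : ∀ ε > 0, ∀ᶠ x in 𝓝 a, ∃ v L, HasLaplacianAt r v L x ∧ ‖v - ν‖ ≤ ε ∧ |L| ≤ Λ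
  hasGradientAt : HasGradientAt r ν a

theorem norm_gradient_smul_eq_neg_of_ball_subset {f : E → ℝ} {ρ : ℝ} (hν : ‖ν‖ = 1) (hρ : 0 < ρ)
    (hball : ball (a + ρ • ν) ρ ⊆ Ω) (hf : HasGradientAt f w a)
    (hfΩ : ∀ᶠ y in 𝓝 a, y ∈ Ω → f y ≤ f a) : ‖w‖ • ν = -w := by
  refine norm_smul_eq_neg_of_inner_nonpos hν fun v hv =>
    inner_le_of_eventually_ray_le hf (hasDerivAt_const 0 0) ?_
  have hray : Tendsto (fun t : ℝ => a + t • v) (𝓝[>] 0) (𝓝 a) := by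
    simpa using (hasDerivAt_add_smul a v 0).continuousAt.tendsto.mono_left nhdsWithin_le_nhds
  filter_upwards [hray.eventually hfΩ, eventually_add_smul_mem_ball hν hρ hv] with t hft hmem
  linarith [hft (hball hmem)]

theorem exists_eventually_hasLaplacianAt_of_contDiffAt {f : E → ℝ} (hf : ContDiffAt ℝ 2 f a) :
    ∃ (g : E → E) (l : E → ℝ), ContinuousAt g a ∧ ContinuousAt l a ∧
      ∀ᶠ y in 𝓝 a, HasLaplacianAt f (g y) (l y) y := by
  have hg : ContDiffAt ℝ 1 (gradient f) a :=
    (InnerProductSpace.toDual ℝ E).symm.toContinuousLinearEquiv.contDiff.contDiffAt.comp a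
      (hf.fderiv_right (by norm_num))
  have hdiff : ∀ᶠ y in 𝓝 a, HasGradientAt f (gradient f y) y := by
    filter_upwards [hf.eventually (by simp)] with y hy
    exact (hy.differentiableAt (by norm_num)).hasGradientAt
  let tr : (E →L[ℝ] E) →ₗ[ℝ] ℝ :=
    LinearMap.trace ℝ E ∘ₗ ContinuousLinearMap.coeLM ℝ
  refine ⟨gradient f, fun y => tr (fderiv ℝ (gradient f) y), hg.continuousAt,
    tr.continuous_of_finiteDimensional.continuousAt.comp
      (hg.fderiv_right (m := 0) (by norm_num)).continuousAt, ?_⟩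
  filter_upwards [eventually_eventually_nhds.2 hdiff, hg.eventually (by simp)] with y hy hgy
  exact ⟨gradient f, _, hy, (hgy.differentiableAt (by norm_num)).hasFDerivAt, rfl, rfl⟩

theorem exists_isDefiningFunctionAt (hC2 : IsC2BoundaryAt Ω a) (ha : a ∈ frontier Ω)
    (hν : ‖ν‖ = 1) {ρ : ℝ} (hρ : 0 < ρ) (hball : ball (a + ρ • ν) ρ ⊆ Ω) :
    ∃ r Λ, IsDefiningFunctionAt Ω ν r Λ a := by
  obtain ⟨f, U, hU, hf, hf', hfΩ, hfF⟩ := hC2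
  have hfa : f a = 0 := (hfF.subset ⟨mem_of_mem_nhds hU, ha⟩).2
  have hmem {x : E} (hx : x ∈ U) : x ∈ Ω ↔ f x < 0 := by
    simpa [hx] using Set.ext_iff.1 hfΩ x
  have hmemF {x : E} (hx : x ∈ U) : x ∈ frontier Ω ↔ f x = 0 := by
    simpa [hx] using Set.ext_iff.1 hfF x
  obtain ⟨g, l, hg, hl, hfL⟩ :=
    exists_eventually_hasLaplacianAt_of_contDiffAt (hf.contDiffAt hU)
  have hga := hfL.self_of_nhds.hasGradientAt
  have hg0 : 0 < ‖g a‖ := norm_pos_iff.2 fun h => hf' a (mem_of_mem_nhds hU) <| by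
    have := (hasGradientAt_iff_hasFDerivAt.1 hga).fderiv
    rwa [h, map_zero] at this
  set k := -‖g a‖⁻¹ with hk
  have hk0 : k < 0 := neg_lt_zero.2 (inv_pos.2 hg0)
  have hkν : k • g a = ν := by
    have := norm_gradient_smul_eq_neg_of_ball_subset hν hρ hball hga <| by
      filter_upwards [hU] with y hy hyΩ using hfa ▸ ((hmem hy).1 hyΩ).le
    rw [hk, neg_smul, ← smul_neg, ← this, inv_smul_smul₀ hg0.ne']
  refine ⟨fun y => k * f y, |k * l a| + 1, ?_, ?_, fun ε hε => ?_, ?_⟩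
  · filter_upwards [hU] with x hx
    rw [hmem hx, ← neg_pos, ← neg_mul_neg,
      mul_pos_iff_of_pos_left (neg_pos.2 hk0)]
  · filter_upwards [hU] with x hx
    rw [hmemF hx, mul_eq_zero_iff_left hk0.ne]
  · have hgε : ∀ᶠ y in 𝓝 a, ‖k • g y - ν‖ < ε :=
      ContinuousAt.eventually_lt (by fun_prop) continuousAt_const (by simpa [hkν] using hε)
    have hlΛ : ∀ᶠ y in 𝓝 a, |k * l y| < |k * l a| + 1 :=
      ContinuousAt.eventually_lt (by fun_prop) continuousAt_const (lt_add_one _)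
    filter_upwards [hfL, hgε, hlΛ] with y hy hgy hly
    exact ⟨_, _, hy.const_mul k, hgy.le, hly.le⟩
  · exact hkν ▸ (hfL.self_of_nhds.const_mul k).hasGradientAt

theorem IsDefiningFunctionAt.hasInnerNormalAt {r : E → ℝ} {Λ : ℝ} (hΩ : IsOpen Ω)
    (ha : a ∈ frontier Ω) (hr : IsDefiningFunctionAt Ω ν r Λ a) : HasInnerNormalAt Ω ν a := by
  have hra : r a = 0 := hr.mem_frontier_iff.self_of_nhds.1 ha
  intro ε hε
  filter_upwards [(hasGradientAt_iff_hasFDerivAt.1 hr.hasGradientAt).isLittleO.def hε,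
    hr.mem_iff, hr.mem_frontier_iff] with x hlin hmem hmemF
  rw [hra, sub_zero, InnerProductSpace.toDual_apply_apply, Real.norm_eq_abs, abs_le] at hlin
  refine ⟨fun hx => ?_, fun hx => ?_⟩
  · linarith [not_lt.1 (hmem.not.1 hx)]
  · have : 0 ≤ r x := by
      by_cases hxΩ : x ∈ Ω
      · exact (hmem.1 hxΩ).le
      · exact (hmemF.1 (hΩ.frontier_eq ▸ ⟨hx, hxΩ⟩)).ge
    linarith

end DefiningFunction

/-! ### Rescaling at a boundary point -/

section Rescaling

/-- The exponents of the problem: `p > 2` is the power of the gradient and `β = 1 / (p - 1)` the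
blow-up rate. -/
structure IsBlowupExponent (p β : ℝ) : Prop where
  two_lt : 2 < p
  mul_sub_one : β * (p - 1) = 1

theorem isBlowupExponent_one_div {p : ℝ} (hp : 2 < p) : IsBlowupExponent p (1 / (p - 1)) :=
  ⟨hp, one_div_mul_cancel (by linarith)⟩

namespace IsBlowupExponent

variable {p β : ℝ}

theorem pos (h : IsBlowupExponent p β) : 0 < β :=
  (pos_iff_pos_of_mul_pos (h.mul_sub_one ▸ one_pos)).2 (by linarith [h.two_lt])

theorem lt_one (h : IsBlowupExponent p β) : β < 1 := by
  nlinarith [mul_pos h.pos (sub_pos.2 h.two_lt), h.mul_sub_one]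

theorem mul_eq (h : IsBlowupExponent p β) : β * p = 1 + β := by
  linarith [h.mul_sub_one]

end IsBlowupExponent

variable {E : Type*} [NormedAddCommGroup E]

theorem eventually_forall_add_smul [NormedSpace ℝ E] {a : E} {P : E → Prop} (h : ∀ᶠ x in 𝓝 a, P x)
    (R : ℝ) : ∀ᶠ s in 𝓝[>] (0 : ℝ), ∀ y, ‖y‖ ≤ R → P (a + s • y) := by
  obtain ⟨ρ, hρ, hP⟩ := Metric.eventually_nhds_iff.1 h
  filter_upwards [Ioo_mem_nhdsGT (show 0 < ρ / (|R| + 1) by positivity)] with s ⟨hs, hsρ⟩ y hy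
  rw [lt_div_iff₀ (by positivity)] at hsρ
  refine hP ?_
  rw [dist_self_add_left, norm_smul, Real.norm_of_nonneg hs.le]
  nlinarith [le_abs_self R]

variable [InnerProductSpace ℝ E]

/-- Seen from the boundary point `a` at scale `s`, the set `Ω` is within `ε` of the half space
`⟪ν, y⟫ > 0` inside the ball of radius `R`. -/
structure IsFlatAtScale (Ω : Set E) (ν a : E) (R ε s : ℝ) : Prop where
  inner_le_of_notMem : ∀ y, ‖y‖ ≤ R → a + s • y ∉ Ω → ⟪ν, y⟫ ≤ ε
  le_infDist : ∀ y, ‖y‖ ≤ R → s * (⟪ν, y⟫ - ε) ≤ infDist (a + s • y) (frontier Ω)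
  infDist_le : ∀ y, ‖y‖ ≤ R → a + s • y ∈ closure Ω →
    infDist (a + s • y) (frontier Ω) ≤ s * (⟪ν, y⟫ + ε)

variable {Ω : Set E} {a ν : E} {p β M C R ε s : ℝ} {w : E → ℝ} {g : E → E}

theorem IsFlatAtScale.neg_le_inner (h : IsFlatAtScale Ω ν a R ε s) (hs : 0 < s) {y : E}
    (hy : ‖y‖ ≤ R) (hyΩ : a + s • y ∈ closure Ω) : -ε ≤ ⟪ν, y⟫ := by
  linarith [nonneg_of_mul_nonneg_right (infDist_nonneg.trans (h.infDist_le y hy hyΩ)) hs]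

/-- The zoom of `w` into the boundary point `a` at scale `s`; its gradient at `y` is
`s ^ β • ∇w (a + s • y)`. -/
def rescale (β : ℝ) (a : E) (s : ℝ) (w : E → ℝ) (y : E) : ℝ :=
  s ^ (-(1 - β)) * w (a + s • y)

theorem IsBlowupExponent.norm_rpow_smul_rpow (h : IsBlowupExponent p β) (hs : 0 < s) (v : E) :
    ‖s ^ β • v‖ ^ p = s ^ (1 + β) * ‖v‖ ^ p := by
  rw [norm_smul, Real.norm_of_nonneg (by positivity), Real.mul_rpow (by positivity)
    (by positivity), ← Real.rpow_mul hs.le, h.mul_eq]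

variable [FiniteDimensional ℝ E]

theorem HasInnerNormalAt.eventually_isFlatAtScale (hΩ : IsOpen Ω) (ha : a ∈ frontier Ω)
    (hν : ‖ν‖ = 1) (h : HasInnerNormalAt Ω ν a) (hR : 0 < R) (hε : 0 < ε) :
    ∀ᶠ s in 𝓝[>] 0, IsFlatAtScale Ω ν a R ε s := by
  have hεR : 0 < ε / R := div_pos hε hR
  filter_upwards [self_mem_nhdsWithin, eventually_forall_add_smul (h _ hεR) R,
    eventually_forall_add_smul (h.eventually_inner_le_infDist hΩ ha hν hεR) R,
    eventually_forall_add_smul (h.eventually_infDist_le_inner hΩ ha hν hεR) R]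
    with s hs hcone hlow hup
  rw [mem_Ioi] at hs
  simp only [add_sub_cancel_left, inner_smul_right, norm_smul, Real.norm_of_nonneg hs.le]
    at hcone hlow hup
  have herr {y : E} (hy : ‖y‖ ≤ R) : ε / R * (s * ‖y‖) ≤ s * ε := by
    calc ε / R * (s * ‖y‖) ≤ ε / R * (s * R) := by gcongr
      _ = s * ε := by field_simp
  exact ⟨fun y hy hyΩ => le_of_mul_le_mul_left (((hcone y hy).1 hyΩ).trans (herr hy)) hs,
    fun y hy => by linarith [hlow y hy, herr hy],
    fun y hy hyΩ => by linarith [hup y hy hyΩ, herr hy]⟩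

/-- A function `w` with gradient `g` that vanishes on the boundary of `Ω`, solves
`Δw + |∇w| ^ p = O(M)` in `Ω` and grows from the boundary at most like `C` times the power of the
distance that the steady profile has. -/
structure IsApproxSteady (Ω : Set E) (p β M C : ℝ) (w : E → ℝ) (g : E → E) : Prop where
  continuousOn : ContinuousOn w (closure Ω)
  eq_zero : ∀ x ∈ frontier Ω, w x = 0
  abs_apply_le : ∀ x ∈ closure Ω, infDist x (frontier Ω) ≤ 1 →
    |w x| ≤ C * infDist x (frontier Ω) ^ (1 - β)
  norm_gradient_le : ∀ x ∈ Ω, infDist x (frontier Ω) ≤ 1 →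
    ‖g x‖ ≤ C * infDist x (frontier Ω) ^ (-β)
  hasLaplacianAt : ∀ x ∈ Ω, ∃ L, HasLaplacianAt w (g x) L x ∧ |L + ‖g x‖ ^ p| ≤ M

/-- The rescaled version of `IsApproxSteady`: in the ball of radius `R` the domain `D` is within `ε`
of the half space `⟪ν, x⟫ > 0`, and the equation holds up to `ε`. -/
structure IsHalfSpaceApproxSteady (ν : E) (p β C R ε : ℝ) (D : Set E) (w : E → ℝ) (g : E → E) :
    Prop where
  isOpen : IsOpen D
  neg_le_inner : ∀ x ∈ closure D, ‖x‖ ≤ R → -ε ≤ ⟪ν, x⟫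
  inner_le_of_notMem : ∀ x ∉ D, ‖x‖ ≤ R → ⟪ν, x⟫ ≤ ε
  continuousOn : ContinuousOn w (closure D)
  eq_zero : ∀ x ∈ frontier D, w x = 0
  abs_apply_le : ∀ x ∈ closure D, ‖x‖ ≤ R → |w x| ≤ C * (|⟪ν, x⟫| + ε) ^ (1 - β)
  norm_gradient_le : ∀ x ∈ D, ‖x‖ ≤ R → 0 < ⟪ν, x⟫ → 2 * ε ≤ ⟪ν, x⟫ →
    ‖g x‖ ≤ C * ⟪ν, x⟫ ^ (-β)
  hasLaplacianAt : ∀ x ∈ D, ∃ L, HasLaplacianAt w (g x) L x ∧ |L + ‖g x‖ ^ p| ≤ ε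

theorem IsHalfSpaceApproxSteady.mono {D : Set E} {R' ε' : ℝ}
    (h : IsHalfSpaceApproxSteady ν p β C R ε D w g) (hβ : β ≤ 1) (hC : 0 ≤ C) (hε : 0 ≤ ε)
    (hR : R' ≤ R) (hε' : ε ≤ ε') : IsHalfSpaceApproxSteady ν p β C R' ε' D w g where
  isOpen := h.isOpen
  neg_le_inner x hx hxR := (neg_le_neg hε').trans (h.neg_le_inner x hx (hxR.trans hR))
  inner_le_of_notMem x hx hxR := (h.inner_le_of_notMem x hx (hxR.trans hR)).trans hε'
  continuousOn := h.continuousOn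
  eq_zero := h.eq_zero
  abs_apply_le x hx hxR := (h.abs_apply_le x hx (hxR.trans hR)).trans (by gcongr)
  norm_gradient_le x hx hxR hpos hxε :=
    h.norm_gradient_le x hx (hxR.trans hR) hpos (by linarith)
  hasLaplacianAt x hx := (h.hasLaplacianAt x hx).imp fun _ hL => ⟨hL.1, hL.2.trans hε'⟩

theorem hasLaplacianAt_rescale {v x : E} {L : ℝ} (hs : 0 < s)
    (h : HasLaplacianAt w v L (a + s • x)) :
    HasLaplacianAt (rescale β a s w) (s ^ β • v) (s ^ (1 + β) * L) x := by
  convert (h.comp_const_add_smul a s).const_mul (s ^ (-(1 - β))) using 1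
  · rfl
  · rw [smul_smul, ← Real.rpow_add_one hs.ne']
    ring_nf
  · rw [← mul_assoc, ← Real.rpow_add_natCast hs.ne']
    simp only [Nat.cast_ofNat]
    ring_nf

theorem IsApproxSteady.abs_rescale_le (h : IsApproxSteady Ω p β M C w g)
    (hβ : β < 1) (hC : 0 ≤ C) (hflat : IsFlatAtScale Ω ν a R ε s) (hs : 0 < s) (hε : 0 ≤ ε) {x : E}
    (hx : a + s • x ∈ closure Ω) (hxR : ‖x‖ ≤ R)
    (hx1 : infDist (a + s • x) (frontier Ω) ≤ 1) :
    |rescale β a s w x| ≤ C * (|⟪ν, x⟫| + ε) ^ (1 - β) := by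
  have hdist : infDist (a + s • x) (frontier Ω) ≤ s * (|⟪ν, x⟫| + ε) :=
    (hflat.infDist_le x hxR hx).trans (by gcongr; exact le_abs_self _)
  rw [rescale, abs_mul, abs_of_pos (Real.rpow_pos_of_pos hs _), Real.rpow_neg hs.le,
    inv_mul_le_iff₀ (Real.rpow_pos_of_pos hs _)]
  calc |w (a + s • x)| ≤ C * infDist (a + s • x) (frontier Ω) ^ (1 - β) := h.abs_apply_le _ hx hx1
    _ ≤ C * (s * (|⟪ν, x⟫| + ε)) ^ (1 - β) := by
      gcongr
      exact infDist_nonneg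
    _ = s ^ (1 - β) * (C * (|⟪ν, x⟫| + ε) ^ (1 - β)) := by
      rw [Real.mul_rpow hs.le (by positivity)]
      ring

theorem IsApproxSteady.norm_gradient_rescale_le (h : IsApproxSteady Ω p β M C w g)
    (hβ : 0 < β) (hβ1 : β < 1) (hC : 0 ≤ C) (hflat : IsFlatAtScale Ω ν a R ε s) (hs : 0 < s) {x : E}
    (hx : a + s • x ∈ Ω) (hxR : ‖x‖ ≤ R) (hx1 : infDist (a + s • x) (frontier Ω) ≤ 1)
    (hpos : 0 < ⟪ν, x⟫) (hxε : 2 * ε ≤ ⟪ν, x⟫) :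
    ‖s ^ β • g (a + s • x)‖ ≤ 2 * C * ⟪ν, x⟫ ^ (-β) := by
  have hdist : s * (⟪ν, x⟫ / 2) ≤ infDist (a + s • x) (frontier Ω) :=
    (mul_le_mul_of_nonneg_left (by linarith) hs.le).trans (hflat.le_infDist x hxR)
  have h2β : (2 : ℝ) ^ β ≤ 2 := Real.rpow_le_self_of_one_le one_le_two hβ1.le
  rw [norm_smul, Real.norm_of_nonneg (by positivity)]
  calc s ^ β * ‖g (a + s • x)‖ ≤ s ^ β * (C * (s * (⟪ν, x⟫ / 2)) ^ (-β)) := by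
        gcongr
        refine (h.norm_gradient_le _ hx hx1).trans (mul_le_mul_of_nonneg_left ?_ hC)
        exact Real.rpow_le_rpow_of_nonpos (mul_pos hs (half_pos hpos)) hdist
          (neg_nonpos.2 hβ.le)
    _ = 2 ^ β * C * ⟪ν, x⟫ ^ (-β) := by
      rw [Real.mul_rpow hs.le (by positivity), Real.div_rpow hpos.le zero_le_two,
        Real.rpow_neg hs.le, Real.rpow_neg zero_le_two]
      field_simp
    _ ≤ 2 * C * ⟪ν, x⟫ ^ (-β) := by gcongr

theorem IsApproxSteady.isHalfSpaceApproxSteady_rescale (h : IsApproxSteady Ω p β M C w g)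
    (hβ : IsBlowupExponent p β) (hΩ : IsOpen Ω) (hν : ‖ν‖ = 1) (hC : 0 ≤ C) (hM : 0 ≤ M)
    (hflat : IsFlatAtScale Ω ν a R ε s) (hs : 0 < s) (hs1 : s ≤ 1) (hsR : s * (R + ε) ≤ 1)
    (hsM : s * M ≤ ε) : IsHalfSpaceApproxSteady ν p β (2 * C) R ε ((fun y => a + s • y) ⁻¹' Ω)
      (rescale β a s w) (fun y => s ^ β • g (a + s • y)) := by
  have hε : 0 ≤ ε := (mul_nonneg hs.le hM).trans hsM
  have hcont : Continuous fun y : E => a + s • y := by fun_prop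
  have hcl : closure ((fun y => a + s • y) ⁻¹' Ω) ⊆ (fun y => a + s • y) ⁻¹' closure Ω :=
    hcont.closure_preimage_subset Ω
  have hnear {x : E} (hx : a + s • x ∈ closure Ω) (hxR : ‖x‖ ≤ R) :
      infDist (a + s • x) (frontier Ω) ≤ 1 := by
    refine (hflat.infDist_le x hxR hx).trans (le_trans ?_ hsR)
    gcongr
    exact (abs_le.1 (abs_inner_le_norm_of_norm_eq_one hν x)).2.trans hxR
  refine ⟨hΩ.preimage hcont, fun x hx hxR => hflat.neg_le_inner hs hxR (hcl hx),
    fun x hx hxR => hflat.inner_le_of_notMem x hxR hx, ?_, fun x hx => ?_, fun x hx hxR => ?_,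
    fun x hx hxR hpos hxε => ?_, fun x hx => ?_⟩
  · exact continuousOn_const.mul (h.continuousOn.comp hcont.continuousOn hcl)
  · rw [rescale, h.eq_zero _ (hcont.frontier_preimage_subset Ω hx), mul_zero]
  · refine (h.abs_rescale_le hβ.lt_one hC hflat hs hε (hcl hx) hxR (hnear (hcl hx) hxR)).trans ?_
    gcongr
    linarith
  · exact h.norm_gradient_rescale_le hβ.pos hβ.lt_one hC hflat hs hx hxR
      (hnear (subset_closure hx) hxR) hpos hxε
  · obtain ⟨L, hL, hLM⟩ := h.hasLaplacianAt _ hx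
    refine ⟨_, hasLaplacianAt_rescale hs hL, ?_⟩
    rw [hβ.norm_rpow_smul_rpow hs, ← mul_add, abs_mul, abs_of_pos (by positivity)]
    calc s ^ (1 + β) * |L + ‖g (a + s • x)‖ ^ p| ≤ s * M := by
          gcongr
          exact Real.rpow_le_self_of_le_one hs.le hs1 (by linarith [hβ.pos])
      _ ≤ ε := hsM

theorem HasInnerNormalAt.eventually_isHalfSpaceApproxSteady (hΩ : IsOpen Ω) (ha : a ∈ frontier Ω)
    (hν : ‖ν‖ = 1) (hflat : HasInnerNormalAt Ω ν a) (hβ : IsBlowupExponent p β) (hM : 0 ≤ M)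
    (hC : 0 ≤ C) (hR : 0 < R) (hε : 0 < ε) :
    ∀ᶠ s in 𝓝[>] 0, ∀ w g, IsApproxSteady Ω p β M C w g →
      IsHalfSpaceApproxSteady ν p β (2 * C) R ε ((fun y => a + s • y) ⁻¹' Ω)
        (rescale β a s w) (fun y => s ^ β • g (a + s • y)) := by
  have hsmall (k : ℝ) {b : ℝ} (hb : 0 < b) : ∀ᶠ s in 𝓝[>] (0 : ℝ), s * k ≤ b :=
    (((continuous_mul_const k).tendsto' 0 0 (zero_mul k)).mono_left
      nhdsWithin_le_nhds).eventually_le_const hb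
  filter_upwards [hflat.eventually_isFlatAtScale hΩ ha hν hR hε, Ioo_mem_nhdsGT one_pos,
    hsmall (R + ε) one_pos, hsmall M hε] with s hs hs1 hsR hsM w g h
  exact h.isHalfSpaceApproxSteady_rescale hβ hΩ hν hC hM hs hs1.1 hs1.2.le hsR hsM

end Rescaling

/-! ### Tangential oscillation -/

section Tangential

theorem norm_one_sub_smul_add_rpow_le {E : Type*} [SeminormedAddCommGroup E] [NormedSpace ℝ E]
    {p θ : ℝ} (hp : 1 ≤ p) (hθ : 0 < θ) (hθ1 : θ ≤ 1) (v z : E) :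
    ‖(1 - θ) • v + z‖ ^ p ≤ (1 - θ) * ‖v‖ ^ p + θ * (‖z‖ / θ) ^ p := by
  have htri : ‖(1 - θ) • v + z‖ ≤ (1 - θ) * ‖v‖ + θ * (‖z‖ / θ) := by
    refine (norm_add_le _ _).trans_eq ?_
    rw [norm_smul, Real.norm_of_nonneg (by linarith), mul_div_cancel₀ _ hθ.ne']
  calc ‖(1 - θ) • v + z‖ ^ p ≤ ((1 - θ) * ‖v‖ + θ * (‖z‖ / θ)) ^ p := by gcongr
    _ ≤ (1 - θ) * ‖v‖ ^ p + θ * (‖z‖ / θ) ^ p := by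
      simpa using (convexOn_rpow hp).2 (norm_nonneg v : ‖v‖ ∈ Ici (0 : ℝ))
        (show 0 ≤ ‖z‖ / θ by positivity) (sub_nonneg.2 hθ1) hθ.le (by ring)

theorem tendsto_sq_mul_div_rpow_atTop {p k : ℝ} (hp : 2 < p) (hk : 0 ≤ k) :
    Tendsto (fun R : ℝ => R ^ 2 * (k / R) ^ p) atTop (𝓝 0) := by
  have h := (tendsto_rpow_neg_atTop (sub_pos.2 hp)).const_mul (k ^ p)
  rw [mul_zero] at h
  refine h.congr' ?_
  filter_upwards [eventually_gt_atTop 0] with R hR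
  rw [Real.div_rpow hk hR.le, neg_sub, Real.rpow_sub hR, Real.rpow_two]
  ring

variable {E : Type*} [NormedAddCommGroup E] [InnerProductSpace ℝ E] {ν x x₀ h : E}
  {p β C K η H θ R κ ε : ℝ}

/-- The barrier for the difference of `w` and its tangential translate: it is nonnegative for
`|⟪ν, x⟫| ≤ H`, large for `‖x - x₀‖` large, and its Laplacian is the constant `-2nκ`. -/
def tangentialBarrier (ν x₀ : E) (κ H : ℝ) (x : E) : ℝ :=
  κ * (‖x - x₀‖ ^ 2 + 2 * finrank ℝ E * (H ^ 2 - ⟪ν, x⟫ ^ 2))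

theorem mul_norm_sq_le_tangentialBarrier (hκ : 0 ≤ κ) (hx : |⟪ν, x⟫| ≤ H) :
    κ * ‖x - x₀‖ ^ 2 ≤ tangentialBarrier ν x₀ κ H x := by
  have : 0 ≤ H ^ 2 - ⟪ν, x⟫ ^ 2 := sub_nonneg.2 (sq_le_sq.2 (hx.trans (le_abs_self H)))
  rw [tangentialBarrier]
  gcongr
  exact le_add_of_nonneg_right (by positivity)

variable [FiniteDimensional ℝ E] {D : Set E} {w : E → ℝ} {g : E → E}

namespace IsHalfSpaceApproxSteady

theorem mem_of_lt_inner (hw : IsHalfSpaceApproxSteady ν p β C R ε D w g) (hx : ‖x‖ ≤ R)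
    (hε : ε < ⟪ν, x⟫) : x ∈ D :=
  by_contra fun hxD => hε.not_ge (hw.inner_le_of_notMem x hxD hx)

theorem abs_apply_le_of_inner_le (hw : IsHalfSpaceApproxSteady ν p β C R ε D w g) (hβ : β ≤ 1)
    (hC : 0 ≤ C) (hε : 0 ≤ ε) (hx : x ∈ closure D) (hxR : ‖x‖ ≤ R) {m : ℝ} (hεm : ε ≤ m)
    (hxm : ⟪ν, x⟫ ≤ m) : |w x| ≤ C * (m + ε) ^ (1 - β) := by
  have habs : |⟪ν, x⟫| ≤ m := abs_le.2 ⟨by linarith [hw.neg_le_inner x hx hxR], hxm⟩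
  refine (hw.abs_apply_le x hx hxR).trans ?_
  gcongr

theorem abs_apply_le_linear (hw : IsHalfSpaceApproxSteady ν p β C R ε D w g) (hβ : 0 ≤ β)
    (hβ1 : β ≤ 1) (hC : 0 ≤ C) (hε : 0 ≤ ε) (hε1 : ε ≤ 1) (hx : x ∈ closure D) (hxR : ‖x‖ ≤ R)
    {m : ℝ} (hm : 1 ≤ m) (hxm : ⟪ν, x⟫ ≤ m) : |w x| ≤ C * (m + 1) := by
  refine (hw.abs_apply_le_of_inner_le hβ1 hC hε hx hxR (hε1.trans hm) hxm).trans ?_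
  gcongr
  calc (m + ε) ^ (1 - β) ≤ m + ε := Real.rpow_le_self_of_one_le (by linarith) (by linarith)
    _ ≤ m + 1 := by gcongr

theorem abs_sub_le_of_inner_eq (hw : IsHalfSpaceApproxSteady ν p β C R ε D w g) {y : E}
    (hε : 0 < ε) (hHε : 2 * ε ≤ H) (hx : ‖x‖ ≤ R) (hy : ‖y‖ ≤ R) (hxH : ⟪ν, x⟫ = H)
    (hyH : ⟪ν, y⟫ = H) : |w y - w x| ≤ C * H ^ (-β) * ‖y - x‖ := by
  have hconv : Convex ℝ (closedBall 0 R ∩ {z | innerSL ℝ ν z = H}) :=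
    (convex_closedBall _ _).inter (convex_hyperplane (innerSL ℝ ν).isLinear H)
  have hmem : ∀ z ∈ closedBall 0 R ∩ {z | innerSL ℝ ν z = H}, z ∈ D ∧ ‖z‖ ≤ R ∧ ⟪ν, z⟫ = H := by
    rintro z ⟨hzR, hzH : ⟪ν, z⟫ = H⟩
    rw [mem_closedBall_zero_iff] at hzR
    exact ⟨hw.mem_of_lt_inner hzR (by linarith), hzR, hzH⟩
  refine hconv.norm_image_sub_le_of_norm_hasFDerivWithin_le
    (f' := fun z => InnerProductSpace.toDual ℝ E (g z)) (fun z hz => ?_) (fun z hz => ?_)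
    ⟨by simpa using hx, by simpa using hxH⟩ ⟨by simpa using hy, by simpa using hyH⟩
  · obtain ⟨L, hL, -⟩ := hw.hasLaplacianAt z (hmem z hz).1
    exact (hasGradientAt_iff_hasFDerivAt.1 hL.hasGradientAt).hasFDerivWithinAt
  · obtain ⟨hzD, hzR, hzH⟩ := hmem z hz
    rw [LinearIsometryEquiv.norm_map, ← hzH]
    exact hw.norm_gradient_le z hzD hzR (by linarith) (by linarith)

end IsHalfSpaceApproxSteady

theorem hasLaplacianAt_tangentialBarrier (hν : ‖ν‖ = 1) (x₀ x : E) (κ H : ℝ) :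
    HasLaplacianAt (tangentialBarrier ν x₀ κ H)
      (κ • ((2 : ℝ) • (x - x₀) - (4 * finrank ℝ E * ⟪ν, x⟫) • ν)) (-(2 * finrank ℝ E * κ)) x := by
  convert ((HasLaplacianAt.norm_sub_sq x₀ x).add (((HasLaplacianAt.const (H ^ 2) x).sub
    (HasLaplacianAt.inner_sq ν x)).const_mul (2 * finrank ℝ E))).const_mul κ using 1
  · rfl
  · module
  · rw [hν]
    ring

/-- The parameters of the comparison of `w` with its tangential translates: the height `H` and the
radius `R` of the region, the damping `θ`, the coefficient `κ` of the barrier, and the error `ε`. -/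
structure IsTangentialParams (n p β C K η H θ R κ ε : ℝ) : Prop where
  one_le_height : 1 ≤ H
  height_le_radius : H ≤ R
  damping_pos : 0 < θ
  damping_le_one : θ ≤ 1
  coeff_pos : 0 < κ
  error_pos : 0 < ε
  error_le : ε ≤ 1 / 2
  top_le : C * H ^ (-β) * K ≤ η / 4
  damping_le : θ * (C * (H + 3)) ≤ η / 4
  le_lateral : 2 * C * (H + 1) ≤ κ * R ^ 2
  center_le : 2 * n * κ * H ^ 2 ≤ η / 4
  gradient_le : θ * (6 * n * κ * R / θ) ^ p ≤ κ / 2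
  error_lt_coeff : ε < κ / 2
  bottom_le : 2 * (C * (ε + ε) ^ (1 - β)) ≤ η / 4

theorem exists_isTangentialParams {n : ℝ} (hn : 0 < n) (hβ : IsBlowupExponent p β) (hC : 0 < C)
    (K : ℝ) (hη : 0 < η) : ∃ H θ R κ ε, IsTangentialParams n p β C K η H θ R κ ε := by
  have hη4 : 0 < η / 4 := by positivity
  have htop : Tendsto (fun H : ℝ => C * H ^ (-β) * K) atTop (𝓝 0) := by
    simpa using ((tendsto_rpow_neg_atTop hβ.pos).const_mul C).mul_const K
  obtain ⟨H, hH, hH1⟩ := ((htop.eventually_le_const hη4).and (eventually_ge_atTop 1)).exists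
  set θ := min 1 (η / 4 / (C * (H + 3)))
  have hθ0 : 0 < θ := by positivity
  set A := 2 * C * (H + 1)
  have hA0 : 0 < A := by positivity
  have hcenter : Tendsto (fun R : ℝ => 2 * n * A * H ^ 2 * (R ^ 2)⁻¹) atTop (𝓝 0) := by
    have := (tendsto_pow_atTop (α := ℝ) two_ne_zero).inv_tendsto_atTop.const_mul
      (2 * n * A * H ^ 2)
    rwa [mul_zero] at this
  have hgrad : Tendsto (fun R : ℝ => θ * (R ^ 2 * (6 * n * A / θ / R) ^ p)) atTop (𝓝 0) := by
    simpa using (tendsto_sq_mul_div_rpow_atTop hβ.two_lt (by positivity)).const_mul θ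
  obtain ⟨R, hRc, hRg, hHR⟩ := ((hcenter.eventually_le_const hη4).and
    ((hgrad.eventually_le_const (half_pos hA0)).and (eventually_ge_atTop H))).exists
  have hR0 : 0 < R := by linarith
  have hκ0 : 0 < A / R ^ 2 := by positivity
  have hbottom : ContinuousAt (fun ε : ℝ => 2 * (C * (ε + ε) ^ (1 - β))) 0 :=
    (((continuousAt_id.add continuousAt_id).rpow_const
      (Or.inr (sub_nonneg.2 hβ.lt_one.le))).const_mul C).const_mul 2
  have hbottom' : ∀ᶠ ε : ℝ in 𝓝[>] 0, 2 * (C * (ε + ε) ^ (1 - β)) < η / 4 :=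
    nhdsWithin_le_nhds <| hbottom.eventually_lt_const <| by
      simpa [Real.zero_rpow (sub_pos.2 hβ.lt_one).ne'] using hη
  obtain ⟨ε, hεb, hε0, hε⟩ := (hbottom'.and (Ioo_mem_nhdsGT
    (show 0 < min (1 / 2) (A / R ^ 2 / 2) by positivity))).exists
  refine ⟨H, θ, R, A / R ^ 2, ε, hH1, hHR, hθ0, min_le_left _ _, hκ0, hε0,
    (hε.trans_le (min_le_left _ _)).le, hH, ?_, ?_, ?_, ?_, hε.trans_le (min_le_right _ _), hεb.le⟩
  · rw [← le_div_iff₀ (by positivity)]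
    exact min_le_right _ _
  · rw [div_mul_cancel₀ _ (by positivity)]
  · calc 2 * n * (A / R ^ 2) * H ^ 2 = 2 * n * A * H ^ 2 * (R ^ 2)⁻¹ := by ring
      _ ≤ η / 4 := hRc
  · have hscale : 6 * n * (A / R ^ 2) * R / θ = 6 * n * A / θ / R := by field_simp
    rw [hscale, div_right_comm A, le_div_iff₀ (by positivity)]
    linarith

theorem norm_gradient_tangentialBarrier_le (hν : ‖ν‖ = 1) (hκ : 0 ≤ κ)
    (hx : ‖x - x₀‖ ≤ R) (hxν : |⟪ν, x⟫| ≤ R) :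
    ‖κ • ((2 : ℝ) • (x - x₀) - (4 * finrank ℝ E * ⟪ν, x⟫) • ν)‖ ≤ 6 * finrank ℝ E * κ * R := by
  have : Nontrivial E := ⟨ν, 0, by rintro rfl; simp at hν⟩
  have hn : (1 : ℝ) ≤ finrank ℝ E := mod_cast Module.finrank_pos (R := ℝ) (M := E)
  have hR : 0 ≤ R := (norm_nonneg _).trans hx
  rw [norm_smul, Real.norm_of_nonneg hκ]
  calc κ * ‖(2 : ℝ) • (x - x₀) - (4 * finrank ℝ E * ⟪ν, x⟫) • ν‖
      ≤ κ * (2 * R + 4 * finrank ℝ E * R) := by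
        gcongr
        refine (norm_sub_le _ _).trans (add_le_add ?_ ?_)
        · rw [norm_smul, Real.norm_two]
          gcongr
        · rw [norm_smul, hν, mul_one, Real.norm_eq_abs, abs_mul, abs_of_nonneg (by positivity)]
          gcongr
    _ ≤ κ * (2 * finrank ℝ E * R + 4 * finrank ℝ E * R) := by
        gcongr
        linarith
    _ = 6 * finrank ℝ E * κ * R := by ring

-- The damping `1 - θ` is what makes the nonlinearity harmless: by convexity, the gradient `z` of
-- the barrier contributes `θ * (‖z‖ / θ) ^ p`, which is superlinear in the small coefficient `κ`.
theorem not_isLocalMax_sub_tangentialBarrier (hw : IsHalfSpaceApproxSteady ν p β C R' ε D w g)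
    (hν : ‖ν‖ = 1) (hp : 1 ≤ p)
    (hP : IsTangentialParams (finrank ℝ E) p β C K η H θ R κ ε) (hx : x ∈ D) (hhx : h + x ∈ D)
    (hxR : ‖x - x₀‖ ≤ R) (hxν : |⟪ν, x⟫| ≤ R) :
    ¬IsLocalMax (fun x => w (h + x) - (1 - θ) * w x - tangentialBarrier ν x₀ κ H x) x := by
  intro hmax
  have : Nontrivial E := ⟨ν, 0, by rintro rfl; simp at hν⟩
  have hn : (1 : ℝ) ≤ finrank ℝ E := mod_cast Module.finrank_pos (R := ℝ) (M := E)
  obtain ⟨L, hL, hLε⟩ := hw.hasLaplacianAt x hx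
  obtain ⟨L', hL', hLε'⟩ := hw.hasLaplacianAt (h + x) hhx
  obtain ⟨hgrad, hlap⟩ := (((hL'.comp_const_add h).sub (hL.const_mul (1 - θ))).sub
    (hasLaplacianAt_tangentialBarrier hν x₀ x κ H)).isLocalMax hmax
  set z := κ • ((2 : ℝ) • (x - x₀) - (4 * finrank ℝ E * ⟪ν, x⟫) • ν)
  have hgz : g (h + x) = (1 - θ) • g x + z := by
    rw [← sub_eq_zero, ← hgrad]
    abel
  have hz : θ * (‖z‖ / θ) ^ p ≤ κ / 2 := by
    refine le_trans ?_ hP.gradient_le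
    have := norm_gradient_tangentialBarrier_le hν hP.coeff_pos.le hxR hxν
    have := hP.damping_pos
    gcongr
  have hconv := norm_one_sub_smul_add_rpow_le hp hP.damping_pos hP.damping_le_one (g x) z
  rw [← hgz] at hconv
  have hLx : (1 - θ) * L ≤ (1 - θ) * (ε - ‖g x‖ ^ p) :=
    mul_le_mul_of_nonneg_left (by linarith [(abs_le.1 hLε).2]) (by linarith [hP.damping_le_one])
  have hκn : κ ≤ κ * finrank ℝ E := le_mul_of_one_le_right hP.coeff_pos.le hn
  linarith [(abs_le.1 hLε').1, mul_pos hP.damping_pos hP.error_pos, hP.error_lt_coeff,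
    hP.coeff_pos]

theorem neg_one_sub_mul_le {θ t B : ℝ} (hθ : 0 ≤ θ) (hθ1 : θ ≤ 1) (ht : |t| ≤ B) :
    -((1 - θ) * t) ≤ B := by
  nlinarith [(abs_le.1 ht).1, (abs_nonneg t).trans ht]

theorem sub_tangentialBarrier_le_of_boundary
    (hw : IsHalfSpaceApproxSteady ν p β C R' ε D w g) (hβ : 0 ≤ β) (hβ1 : β ≤ 1) (hC : 0 ≤ C)
    (hP : IsTangentialParams (finrank ℝ E) p β C K η H θ R κ ε) (hhν : ⟪ν, h⟫ = 0)
    (hhK : ‖h‖ ≤ K) (hx : x ∈ closure D) (hhx : h + x ∈ closure D) (hxR' : ‖x‖ ≤ R')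
    (hhxR' : ‖h + x‖ ≤ R') (hxH : ⟪ν, x⟫ ≤ H)
    (hbdry : x ∉ D ∨ h + x ∉ D ∨ ‖x - x₀‖ = R ∨ ⟪ν, x⟫ = H) :
    w (h + x) - (1 - θ) * w x - tangentialBarrier ν x₀ κ H x ≤ η / 2 + θ * (C * (H + 1)) := by
  obtain ⟨hH, -, hθ, hθ1, hκ, hε, hε2, htop, -, hlateral, -, -, -, hbottom⟩ := hP
  have hhxν : ⟪ν, h + x⟫ = ⟪ν, x⟫ := by rw [inner_add_right, hhν, zero_add]
  have hθC : 0 ≤ θ * (C * (H + 1)) := by positivity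
  have hη : 0 ≤ η / 4 := le_trans (by positivity) hbottom
  have hxν : |⟪ν, x⟫| ≤ H := abs_le.2 ⟨by linarith [hw.neg_le_inner x hx hxR'], hxH⟩
  have hbar : κ * ‖x - x₀‖ ^ 2 ≤ tangentialBarrier ν x₀ κ H x :=
    mul_norm_sq_le_tangentialBarrier hκ.le hxν
  have hbar₀ : 0 ≤ tangentialBarrier ν x₀ κ H x := le_trans (by positivity) hbar
  have hwx : |w x| ≤ C * (H + 1) :=
    hw.abs_apply_le_linear hβ hβ1 hC hε.le (by linarith) hx hxR' hH hxH
  have hbot (hxε : ⟪ν, x⟫ ≤ ε) : w (h + x) - (1 - θ) * w x ≤ η / 4 := by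
    have h₁ := hw.abs_apply_le_of_inner_le hβ1 hC hε.le hx hxR' le_rfl hxε
    have h₂ := hw.abs_apply_le_of_inner_le hβ1 hC hε.le hhx hhxR' le_rfl (hhxν.trans_le hxε)
    linarith [neg_one_sub_mul_le hθ.le hθ1 h₁, (abs_le.1 h₂).2]
  rcases hbdry with hxD | hhxD | hlat | htopx
  · linarith [hbot (hw.inner_le_of_notMem x hxD hxR')]
  · linarith [hbot (hhxν ▸ hw.inner_le_of_notMem _ hhxD hhxR')]
  · have hwhx : |w (h + x)| ≤ C * (H + 1) := hw.abs_apply_le_linear hβ hβ1 hC hε.le (by linarith)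
      hhx hhxR' hH (hhxν.trans_le hxH)
    rw [hlat] at hbar
    linarith [neg_one_sub_mul_le hθ.le hθ1 hwx, (abs_le.1 hwhx).2]
  · have hosc := hw.abs_sub_le_of_inner_eq hε (by linarith) hxR' hhxR' htopx (hhxν.trans htopx)
    rw [add_sub_cancel_right] at hosc
    have hK : C * H ^ (-β) * ‖h‖ ≤ C * H ^ (-β) * K := by gcongr
    have hθw : θ * w x ≤ θ * (C * (H + 1)) := by
      gcongr
      exact (abs_le.1 hwx).2
    linarith [(abs_le.1 hosc).2]

theorem sub_tangentialBarrier_le (hw : IsHalfSpaceApproxSteady ν p β C (R + 2 * K) ε D w g)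
    (hν : ‖ν‖ = 1) (hβ : IsBlowupExponent p β) (hC : 0 ≤ C)
    (hP : IsTangentialParams (finrank ℝ E) p β C K η H θ R κ ε) (hhν : ⟪ν, h⟫ = 0)
    (hhK : ‖h‖ ≤ K) (hx₀K : ‖x₀‖ ≤ K) (hx : x ∈ closure D) (hhx : h + x ∈ closure D)
    (hxR : ‖x - x₀‖ ≤ R) (hxH : ⟪ν, x⟫ ≤ H) :
    w (h + x) - (1 - θ) * w x - tangentialBarrier ν x₀ κ H x ≤ η / 2 + θ * (C * (H + 1)) := by
  let S : Set E := {x | x ∈ closure D ∧ h + x ∈ closure D ∧ ‖x - x₀‖ ≤ R ∧ ⟪ν, x⟫ ≤ H}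
  have hS : IsCompact S := by
    refine (isCompact_closedBall x₀ R).of_isClosed_subset ?_ fun x hx => by
      simpa [dist_eq_norm] using hx.2.2.1
    exact isClosed_closure.inter ((isClosed_closure.preimage (continuous_const_add h)).inter
      ((isClosed_Iic.preimage (f := fun x => ‖x - x₀‖) (by fun_prop)).inter
        (isClosed_Iic.preimage (f := fun x => ⟪ν, x⟫) (by fun_prop))))
  have hcont : ContinuousOn
      (fun x => w (h + x) - (1 - θ) * w x - tangentialBarrier ν x₀ κ H x) S := by
    have h₁ : ContinuousOn (fun x => w (h + x)) S :=
      hw.continuousOn.comp (by fun_prop) fun x hx => hx.2.1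
    have h₂ : ContinuousOn w S := hw.continuousOn.mono fun x hx => hx.1
    exact (h₁.sub (continuousOn_const.mul h₂)).sub (by unfold tangentialBarrier; fun_prop)
  refine le_of_forall_isMaxOn_le hS hcont (fun x hx hmax => ?_) x ⟨hx, hhx, hxR, hxH⟩
  obtain ⟨hxD, hhxD, hxR, hxH⟩ := hx
  have hxK : ‖x‖ ≤ R + K := by linarith [norm_le_norm_sub_add x x₀]
  have hK : 0 ≤ K := (norm_nonneg h).trans hhK
  by_contra hgt
  have hint := mt (sub_tangentialBarrier_le_of_boundary hw hβ.pos.le hβ.lt_one.le hC hP hhν hhK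
    hxD hhxD (by linarith) (by linarith [norm_add_le h x]) hxH) hgt
  push Not at hint
  obtain ⟨hxD', hhxD', hxR', hxH'⟩ := hint
  have hnhds : S ∈ 𝓝 x := by
    filter_upwards [hw.isOpen.mem_nhds hxD',
      (hw.isOpen.preimage (continuous_const_add h)).mem_nhds hhxD',
      (isOpen_Iio.preimage (f := fun x => ‖x - x₀‖) (by fun_prop)).mem_nhds (hxR.lt_of_ne hxR'),
      (isOpen_Iio.preimage (f := fun x => ⟪ν, x⟫) (by fun_prop)).mem_nhds (hxH.lt_of_ne hxH')]
      with y h₁ h₂ h₃ h₄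
    exact ⟨subset_closure h₁, subset_closure h₂, le_of_lt h₃, le_of_lt h₄⟩
  have hxν : |⟪ν, x⟫| ≤ R := abs_le.2
    ⟨by linarith [hw.neg_le_inner x hxD (by linarith), hP.error_le, hP.one_le_height,
      hP.height_le_radius], hxH.trans hP.height_le_radius⟩
  exact not_isLocalMax_sub_tangentialBarrier hw hν (by linarith [hβ.two_lt]) hP hxD' hhxD' hxR hxν
    (hmax.isLocalMax hnhds)

theorem IsTangentialParams.apply_le_add (hw : IsHalfSpaceApproxSteady ν p β C (R + 2 * K) ε D w g)
    (hν : ‖ν‖ = 1) (hβ : IsBlowupExponent p β) (hC : 0 ≤ C)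
    (hP : IsTangentialParams (finrank ℝ E) p β C K η H θ R κ ε) (hhν : ⟪ν, h⟫ = 0)
    (hhK : ‖h‖ ≤ K) (hx₀ : ⟪ν, x₀⟫ = 1) (hx₀K : ‖x₀‖ ≤ K) : w (h + x₀) ≤ w x₀ + η := by
  obtain ⟨hH, hHR, hθ, -, hκ, hε, hε2, -, hdamping, -, hcenter, -⟩ := id hP
  have hx₀D : x₀ ∈ closure D :=
    subset_closure (hw.mem_of_lt_inner (by linarith [norm_nonneg x₀]) (by linarith))
  have hhx₀D : h + x₀ ∈ closure D := subset_closure <| hw.mem_of_lt_inner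
    (by linarith [norm_add_le h x₀]) (by rw [inner_add_right, hhν, hx₀]; linarith)
  have hmain := sub_tangentialBarrier_le hw hν hβ hC hP hhν hhK hx₀K hx₀D hhx₀D
    (by rw [sub_self, norm_zero]; linarith) (hx₀.trans_le hH)
  have hwx₀ := hw.abs_apply_le_linear hβ.pos.le hβ.lt_one.le hC hε.le (by linarith) hx₀D
    (by linarith [norm_nonneg x₀]) le_rfl hx₀.le
  have hθw : θ * -w x₀ ≤ θ * (C * (1 + 1)) := by
    gcongr
    exact neg_le.1 (abs_le.1 hwx₀).1
  have hbar : tangentialBarrier ν x₀ κ H x₀ ≤ η / 4 := by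
    refine le_trans ?_ hcenter
    rw [tangentialBarrier, sub_self, norm_zero, hx₀]
    have : 0 ≤ κ * finrank ℝ E := by positivity
    linarith
  linarith

theorem exists_forall_apply_le_add_of_inner_eq_one (hν : ‖ν‖ = 1) (hβ : IsBlowupExponent p β)
    (hC : 0 < C) (hη : 0 < η) (K : ℝ) : ∃ R > 0, ∃ ε > 0, ∀ D w g,
      IsHalfSpaceApproxSteady ν p β C R ε D w g → ∀ x y, ⟪ν, x⟫ = 1 → ⟪ν, y⟫ = 1 →
        ‖x‖ ≤ K → ‖y‖ ≤ K → w y ≤ w x + η := by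
  have : Nontrivial E := ⟨ν, 0, by rintro rfl; simp at hν⟩
  obtain ⟨H, θ, R, κ, ε, hP⟩ := exists_isTangentialParams (n := finrank ℝ E)
    (mod_cast Module.finrank_pos (R := ℝ) (M := E)) hβ hC (2 * |K|) hη
  refine ⟨R + 2 * (2 * |K|), by linarith [hP.one_le_height, hP.height_le_radius, abs_nonneg K],
    ε, hP.error_pos, fun D w g hw x y hx hy hxK hyK => ?_⟩
  have hyx : ⟪ν, y - x⟫ = 0 := by rw [inner_sub_right, hx, hy, sub_self]
  simpa using hP.apply_le_add hw hν hβ hC.le hyx (by linarith [norm_sub_le y x, le_abs_self K])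
    hx (by linarith [le_abs_self K, abs_nonneg K])

end Tangential

/-! ### The steady profile -/

section Profile

variable {p β μ : ℝ}

/-- The solution `U` of `U'' + (U') ^ p = 0` on the half line with `U 0 = 0` and `U' 0 = ∞`,
where `β = 1 / (p - 1)`. -/
def profile (β τ : ℝ) : ℝ :=
  β ^ β / (1 - β) * τ ^ (1 - β)

/-- The derivative of `profile`. -/
def profileDeriv (β τ : ℝ) : ℝ :=
  β ^ β * τ ^ (-β)

theorem profile_nonneg (hβ : 0 ≤ β) (hβ1 : β ≤ 1) {τ : ℝ} (hτ : 0 ≤ τ) : 0 ≤ profile β τ := by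
  have : 0 ≤ 1 - β := sub_nonneg.2 hβ1
  unfold profile
  positivity

theorem profile_pos (hβ : 0 < β) (hβ1 : β < 1) {τ : ℝ} (hτ : 0 < τ) : 0 < profile β τ := by
  have : 0 < 1 - β := sub_pos.2 hβ1
  unfold profile
  positivity

theorem profile_le_profile (hβ : 0 ≤ β) (hβ1 : β ≤ 1) {s t : ℝ} (hs : 0 ≤ s) (hst : s ≤ t) :
    profile β s ≤ profile β t := by
  have : 0 ≤ 1 - β := sub_nonneg.2 hβ1
  unfold profile
  gcongr

theorem profile_eq_profile_one_mul (β τ : ℝ) : profile β τ = profile β 1 * τ ^ (1 - β) := by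
  simp [profile]

theorem continuous_profile (hβ : β ≤ 1) : Continuous (profile β) :=
  continuous_const.mul (Real.continuous_rpow_const (sub_nonneg.2 hβ))

theorem profile_zero (hβ : β < 1) : profile β 0 = 0 := by
  rw [profile, Real.zero_rpow (sub_pos.2 hβ).ne', mul_zero]

theorem profileDeriv_pos (hβ : 0 < β) {τ : ℝ} (hτ : 0 < τ) : 0 < profileDeriv β τ := by
  unfold profileDeriv
  positivity

theorem profileDeriv_le_profileDeriv (hβ : 0 ≤ β) {s t : ℝ} (hs : 0 < s) (hst : s ≤ t) :
    profileDeriv β t ≤ profileDeriv β s :=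
  mul_le_mul_of_nonneg_left (Real.rpow_le_rpow_of_nonpos hs hst (neg_nonpos.2 hβ)) (by positivity)

theorem profileDeriv_one (β : ℝ) : profileDeriv β 1 = β ^ β := by
  simp [profileDeriv]

theorem hasDerivAt_profile (hβ : β ≠ 1) {τ : ℝ} (hτ : τ ≠ 0) :
    HasDerivAt (profile β) (profileDeriv β τ) τ := by
  have : 1 - β ≠ 0 := sub_ne_zero.2 hβ.symm
  refine ((Real.hasDerivAt_rpow_const (Or.inl hτ)).const_mul _).congr_deriv ?_
  rw [profileDeriv, show 1 - β - 1 = -β by ring]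
  field_simp

theorem IsBlowupExponent.profileDeriv_rpow (h : IsBlowupExponent p β) {τ : ℝ} (hτ : 0 < τ) :
    profileDeriv β τ ^ p = β * (β ^ β * τ ^ (-β - 1)) := by
  have hβ := h.pos
  rw [profileDeriv, Real.mul_rpow (by positivity) (by positivity), ← Real.rpow_mul hβ.le,
    ← Real.rpow_mul hτ.le, h.mul_eq, show -β * p = -β - 1 by linarith [h.mul_eq],
    Real.rpow_add hβ, Real.rpow_one]
  ring

theorem IsBlowupExponent.hasDerivAt_profileDeriv (h : IsBlowupExponent p β) {τ : ℝ} (hτ : 0 < τ) :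
    HasDerivAt (profileDeriv β) (-profileDeriv β τ ^ p) τ := by
  refine ((Real.hasDerivAt_rpow_const (Or.inl hτ.ne')).const_mul _).congr_deriv ?_
  rw [h.profileDeriv_rpow hτ]
  ring

theorem hasLaplacianAt_const_mul_profile {E : Type*} [NormedAddCommGroup E]
    [InnerProductSpace ℝ E] [FiniteDimensional ℝ E] {f : E → ℝ} {v x : E} {L : ℝ}
    (h : IsBlowupExponent p β) (hμ : 0 < μ) (hf : HasLaplacianAt f v L x) (hfx : 0 < f x) :
    HasLaplacianAt (fun y => μ * profile β (f y)) ((μ * profileDeriv β (f x)) • v)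
      (-(μ ^ (1 - p) * (μ * profileDeriv β (f x)) ^ p) * ‖v‖ ^ 2
        + μ * profileDeriv β (f x) * L) x := by
  convert (hf.comp (U := profile β) (U' := profileDeriv β) ?_
    (h.hasDerivAt_profileDeriv hfx)).const_mul μ using 1
  · rw [smul_smul]
  · rw [Real.mul_rpow hμ.le (profileDeriv_pos h.pos hfx).le, ← mul_assoc, ← Real.rpow_add hμ,
      sub_add_cancel, Real.rpow_one]
    ring
  · filter_upwards [eventually_gt_nhds hfx] with τ hτ
    exact hasDerivAt_profile h.lt_one.ne hτ.ne'

end Profile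

/-! ### Upper estimate -/

section Upper

/-- The parameters of the comparison from below with the profile: the factor `μ` and the coefficient
`κ` of the barrier, its height `c` and shifted height `e` at the inner face, the radius `K` of the
region, and the error `ε`. -/
structure IsUpperParams (n p β C η μ c e K κ ε : ℝ) : Prop where
  one_lt_factor : 1 < μ
  shift_pos : 0 < e
  shift_lt : e < c
  height_lt_one : c < 1
  one_le_radius : 1 ≤ K
  coeff_pos : 0 < κ
  coeff_le_one : κ ≤ 1
  error_pos : 0 < ε
  error_le : 2 * ε ≤ c
  top_le : μ * profile β 1 ≤ profile β 1 + η / 2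
  bottom_lt : C * (2 * c) ^ (1 - β) + c ^ 2 < η / 4
  slope_lt : 2 + C * c ^ (-β) < profileDeriv β e
  lateral_le : μ * profile β 1 + η / 4 + 2 * C ≤ κ * K ^ 2
  gradient_lt : 2 * κ * K < β ^ β
  interior_lt :
    μ ^ (1 - p) + (2 * n * κ + ε) / (β ^ β) ^ p < (1 - 2 * κ * K / β ^ β) ^ p

variable {n p β C η : ℝ}

theorem exists_upper_height (hβ : 0 < β) (hβ1 : β < 1) (C : ℝ) (hη : 0 < η) : ∃ c e, 0 < e ∧ e < c ∧
    c < 1 ∧ C * (2 * c) ^ (1 - β) + c ^ 2 < η / 4 ∧ 2 + C * c ^ (-β) < profileDeriv β e := by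
  have hcont : ContinuousAt (fun c : ℝ => C * (2 * c) ^ (1 - β) + c ^ 2) 0 := by
    have := (Real.continuous_rpow_const (sub_pos.2 hβ1).le).comp (continuous_const_mul (2 : ℝ))
    exact ((this.const_mul C).add (continuous_pow 2)).continuousAt
  have hbottom : ∀ᶠ c : ℝ in 𝓝[>] 0, C * (2 * c) ^ (1 - β) + c ^ 2 < η / 4 :=
    nhdsWithin_le_nhds <| hcont.eventually_lt_const <| by
      simpa [Real.zero_rpow (sub_pos.2 hβ1).ne'] using hη
  obtain ⟨c, hc, hc0, hc1⟩ := (hbottom.and (Ioo_mem_nhdsGT one_pos)).exists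
  have hslope : Tendsto (profileDeriv β) (𝓝[>] 0) atTop :=
    (tendsto_rpow_neg_nhdsGT_zero (neg_neg_iff_pos.2 hβ)).const_mul_atTop (by positivity)
  obtain ⟨e, he, he0, hec⟩ :=
    ((hslope.eventually_gt_atTop (2 + C * c ^ (-β))).and (Ioo_mem_nhdsGT hc0)).exists
  exact ⟨c, e, he0, hec, hc1, hc, he⟩

theorem exists_isUpperParams (n : ℝ) (hβ : IsBlowupExponent p β) (hC : 0 < C) (hη : 0 < η) :
    ∃ μ c e K κ ε, IsUpperParams n p β C η μ c e K κ ε := by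
  have hβ0 := hβ.pos
  have hp := hβ.two_lt
  have hU : 0 < profile β 1 := profile_pos hβ.pos hβ.lt_one one_pos
  obtain ⟨c, e, he, hec, hc1, hbottom, hslope⟩ := exists_upper_height hβ.pos hβ.lt_one C hη
  set μ := 1 + η / 2 / profile β 1
  have hμ : 1 < μ := lt_add_of_pos_right 1 (by positivity)
  have hm : μ ^ (1 - p) < 1 := Real.rpow_lt_one_of_one_lt_of_neg hμ (by linarith)
  set A := μ * profile β 1 + η / 4 + 2 * C
  have hA : 0 < A := by positivity
  have hleft : ContinuousAt
      (fun t : ℝ => μ ^ (1 - p) + (2 * n * (A * t ^ 2) + A * t ^ 2) / (β ^ β) ^ p) 0 := by fun_prop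
  have hright : ContinuousAt (fun t : ℝ => (1 - 2 * A * t / β ^ β) ^ p) 0 :=
    ContinuousAt.rpow_const (by fun_prop) (Or.inr (by linarith))
  have hκ : ContinuousAt (fun t : ℝ => A * t ^ 2) 0 := by fun_prop
  have hgrad : ContinuousAt (fun t : ℝ => 2 * A * t) 0 := by fun_prop
  obtain ⟨t, ⟨⟨hint, hgrad⟩, hκ⟩, ht, ht1⟩ :=
    ((((hleft.eventually_lt hright (by simpa using hm)).and
    (hgrad.eventually_lt_const (u := β ^ β) (by simpa using Real.rpow_pos_of_pos hβ0 β))).and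
    (hκ.eventually_lt_const (u := min 1 (c / 2))
      (by simpa using he.trans hec))).filter_mono nhdsWithin_le_nhds |>.and
      (Ioo_mem_nhdsGT one_pos)).exists
  have hκK : 2 * (A * t ^ 2) * t⁻¹ = 2 * A * t := by field_simp
  refine ⟨μ, c, e, t⁻¹, A * t ^ 2, A * t ^ 2, hμ, he, hec, hc1, one_le_inv_iff₀.2 ⟨ht, ht1.le⟩,
    by positivity, hκ.le.trans (min_le_left _ _), by positivity,
    by linarith [min_le_right 1 (c / 2)], ?_, hbottom, hslope, ?_, ?_, ?_⟩
  · rw [add_mul, one_mul, div_mul_cancel₀ _ hU.ne']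
  · rw [inv_pow, mul_inv_cancel_right₀ (by positivity)]
  · rwa [hκK]
  · rwa [hκK]

variable {E : Type*} [NormedAddCommGroup E] [InnerProductSpace ℝ E] {ν x : E}
  {μ c e K κ ε b R : ℝ}

/-- The part of the slab between the heights `c` and `1` in the direction `ν` that lies in the
closed ball of radius `K`. -/
def slab (ν : E) (c K : ℝ) : Set E :=
  {x | c ≤ ⟪ν, x⟫ ∧ ⟪ν, x⟫ ≤ 1 ∧ ‖x‖ ≤ K}

theorem slab_mem_nhds (hxc : c < ⟪ν, x⟫) (hx1 : ⟪ν, x⟫ < 1) (hxK : ‖x‖ < K) : slab ν c K ∈ 𝓝 x := by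
  have hinner : Continuous fun x : E => ⟪ν, x⟫ := by fun_prop
  filter_upwards [(isOpen_Ioi.preimage hinner).mem_nhds hxc,
    (isOpen_Iio.preimage hinner).mem_nhds hx1,
    (isOpen_Iio.preimage continuous_norm).mem_nhds hxK] with y h₁ h₂ h₃
  exact ⟨le_of_lt h₁, le_of_lt h₂, le_of_lt h₃⟩

theorem eventually_add_smul_mem_slab (hν : ‖ν‖ = 1) (hxc : ⟪ν, x⟫ = c) (hc : c < 1)
    (hxK : ‖x‖ < K) :
    ∀ᶠ t in 𝓝[>] (0 : ℝ), x + t • ν ∈ slab ν c K := by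
  have hinner (t : ℝ) : ⟪ν, x + t • ν⟫ = c + t := by
    rw [inner_add_right, inner_smul_right, real_inner_self_eq_norm_sq, hν, hxc]
    ring
  have hcont : Continuous fun t : ℝ => ‖x + t • ν‖ := by fun_prop
  filter_upwards [Ioo_mem_nhdsGT (sub_pos.2 hc), nhdsWithin_le_nhds
    (hcont.continuousAt.eventually_lt_const (u := K) (by simpa using hxK))] with t ⟨ht0, ht1⟩ htK
  exact ⟨by linarith [hinner t], by linarith [hinner t], htK.le⟩

/-- The profile in the direction `ν`, multiplied by `μ`, moved so that it starts at height `b`, and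
bent down by `κ * ‖x‖ ^ 2`. -/
def upperBarrier (ν : E) (β μ b k κ : ℝ) (x : E) : ℝ :=
  μ * profile β (⟪ν, x⟫ - b) + k - κ * ‖x‖ ^ 2

theorem upperBarrier_le (hβ : 0 ≤ β) (hβ1 : β ≤ 1) (hμ : 0 ≤ μ) (hxb : b ≤ ⟪ν, x⟫)
    (hx : ⟪ν, x⟫ ≤ b + 1) (k κ : ℝ) :
    upperBarrier ν β μ b k κ x ≤ μ * profile β 1 + k - κ * ‖x‖ ^ 2 := by
  unfold upperBarrier
  gcongr
  exact profile_le_profile hβ hβ1 (sub_nonneg.2 hxb) (by linarith)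

theorem continuous_upperBarrier (hβ : β ≤ 1) (ν : E) (μ b k κ : ℝ) :
    Continuous (upperBarrier ν β μ b k κ) := by
  have := continuous_profile hβ
  unfold upperBarrier
  fun_prop

variable [FiniteDimensional ℝ E] {D : Set E} {w : E → ℝ} {g : E → E}

theorem isCompact_slab (ν : E) (c K : ℝ) : IsCompact (slab ν c K) := by
  have hinner : Continuous fun x : E => ⟪ν, x⟫ := by fun_prop
  exact (isCompact_closedBall 0 K).of_isClosed_subset
    ((isClosed_Ici.preimage hinner).inter ((isClosed_Iic.preimage hinner).inter
      (isClosed_Iic.preimage continuous_norm))) fun x hx => by simpa using hx.2.2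

theorem hasLaplacianAt_upperBarrier (hν : ‖ν‖ = 1) (hβ : IsBlowupExponent p β) (hμ : 0 < μ)
    (hx : b < ⟪ν, x⟫) (k κ : ℝ) :
    HasLaplacianAt (upperBarrier ν β μ b k κ)
      ((μ * profileDeriv β (⟪ν, x⟫ - b)) • ν - κ • (2 : ℝ) • x)
      (-(μ ^ (1 - p) * (μ * profileDeriv β (⟪ν, x⟫ - b)) ^ p) - κ * (2 * finrank ℝ E)) x := by
  convert ((hasLaplacianAt_const_mul_profile hβ hμ ((HasLaplacianAt.inner ν x).sub
    (HasLaplacianAt.const b x)) (sub_pos.2 hx)).add (HasLaplacianAt.const k x)).sub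
    ((HasLaplacianAt.norm_sub_sq 0 x).const_mul κ) using 1
  · simp [upperBarrier, funext_iff]
  · simp
  · simp [hν]

theorem IsUpperParams.lt_rpow_sub (hP : IsUpperParams n p β C η μ c e K κ ε) (hβ : 0 < β)
    (hp : 0 ≤ p) (hn : 0 ≤ n) {Y : ℝ} (hY : β ^ β ≤ Y) :
    μ ^ (1 - p) * Y ^ p + 2 * n * κ + ε < (Y - 2 * κ * K) ^ p := by
  have hd : 0 < β ^ β := by positivity
  have hY0 : 0 < Y := hd.trans_le hY
  have hκ := hP.coeff_pos
  have hK : 0 < K := one_pos.trans_le hP.one_le_radius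
  have hε := hP.error_pos
  have herr : 2 * n * κ + ε ≤ (2 * n * κ + ε) / (β ^ β) ^ p * Y ^ p := by
    rw [div_mul_eq_mul_div, le_div_iff₀ (by positivity)]
    gcongr
  have hgrad : 2 * κ * K ≤ 2 * κ * K / β ^ β * Y := by
    rw [div_mul_eq_mul_div, le_div_iff₀ hd]
    gcongr
  have h1 : 0 ≤ 1 - 2 * κ * K / β ^ β := sub_nonneg.2 ((div_le_one hd).2 hP.gradient_lt.le)
  calc μ ^ (1 - p) * Y ^ p + 2 * n * κ + ε
      ≤ (μ ^ (1 - p) + (2 * n * κ + ε) / (β ^ β) ^ p) * Y ^ p := by linarith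
    _ < (1 - 2 * κ * K / β ^ β) ^ p * Y ^ p :=
      mul_lt_mul_of_pos_right hP.interior_lt (by positivity)
    _ = ((1 - 2 * κ * K / β ^ β) * Y) ^ p := (Real.mul_rpow h1 hY0.le).symm
    _ ≤ (Y - 2 * κ * K) ^ p := by
      gcongr
      linarith

theorem IsUpperParams.le_mul_profileDeriv (hP : IsUpperParams n p β C η μ c e K κ ε) (hβ : 0 < β)
    {τ : ℝ} (hτ : 0 < τ) (hτ1 : τ ≤ 1) : β ^ β ≤ μ * profileDeriv β τ := by
  rw [← profileDeriv_one]
  exact (profileDeriv_le_profileDeriv hβ.le hτ hτ1).trans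
    (le_mul_of_one_le_left (profileDeriv_pos hβ hτ).le hP.one_lt_factor.le)

theorem not_isLocalMax_upperBarrier_sub (hw : IsHalfSpaceApproxSteady ν p β C R ε D w g)
    (hν : ‖ν‖ = 1) (hβ : IsBlowupExponent p β)
    (hP : IsUpperParams (finrank ℝ E) p β C η μ c e K κ ε) (hx : x ∈ D) (hxc : c ≤ ⟪ν, x⟫)
    (hx1 : ⟪ν, x⟫ ≤ 1) (hxK : ‖x‖ ≤ K) (k : ℝ) :
    ¬IsLocalMax (fun x => upperBarrier ν β μ (c - e) k κ x - w x) x := by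
  intro hmax
  have hp : 0 ≤ p := zero_le_two.trans hβ.two_lt.le
  have hec := hP.shift_lt
  obtain ⟨L, hL, hLε⟩ := hw.hasLaplacianAt x hx
  obtain ⟨hgrad, hlap⟩ := ((hasLaplacianAt_upperBarrier hν hβ (one_pos.trans hP.one_lt_factor)
    (by linarith [hP.shift_pos]) k κ).sub hL).isLocalMax hmax
  set Y := μ * profileDeriv β (⟪ν, x⟫ - (c - e))
  have hY : β ^ β ≤ Y := hP.le_mul_profileDeriv hβ.pos (by linarith [hP.shift_pos]) (by linarith)
  have hYK : Y - 2 * κ * K ≤ ‖g x‖ := by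
    have hκx : ‖κ • (2 : ℝ) • x‖ ≤ 2 * κ * K := by
      rw [smul_smul, norm_smul, Real.norm_of_nonneg (by linarith [hP.coeff_pos]), mul_comm κ]
      gcongr
      linarith [hP.coeff_pos]
    have hYν : ‖Y • ν‖ = Y := by
      rw [norm_smul, hν, mul_one, Real.norm_of_nonneg (le_trans (by have := hβ.pos; positivity) hY)]
    rw [← sub_eq_zero.1 hgrad]
    linarith [norm_sub_norm_le (Y • ν) (κ • (2 : ℝ) • x)]
  have hpow : (Y - 2 * κ * K) ^ p ≤ ‖g x‖ ^ p :=
    Real.rpow_le_rpow (by linarith [hP.gradient_lt]) hYK hp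
  linarith [hP.lt_rpow_sub hβ.pos hp (Nat.cast_nonneg (finrank ℝ E)) hY, (abs_le.1 hLε).2]

-- At the inner face the barrier is steeper than `w` can be, so moving inwards increases the
-- difference.
theorem not_isMaxOn_upperBarrier_sub (hw : IsHalfSpaceApproxSteady ν p β C K ε D w g)
    (hν : ‖ν‖ = 1) (hβ : IsBlowupExponent p β)
    (hP : IsUpperParams (finrank ℝ E) p β C η μ c e K κ ε) (hx : x ∈ D) (hxc : ⟪ν, x⟫ = c)
    (hxK : ‖x‖ < K) (k : ℝ) :
    ¬IsMaxOn (fun x => upperBarrier ν β μ (c - e) k κ x - w x) (slab ν c K) x := by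
  intro hmax
  have hc : 0 < c := hP.shift_pos.trans hP.shift_lt
  obtain ⟨L, hL, -⟩ := hw.hasLaplacianAt x hx
  have hray := inner_le_of_eventually_ray_le (e := ν) (q := fun _ => 0)
    ((hasLaplacianAt_upperBarrier hν hβ (one_pos.trans hP.one_lt_factor)
      (show c - e < ⟪ν, x⟫ by linarith [hP.shift_pos]) k κ).sub hL).hasGradientAt
    (hasDerivAt_const _ _) <| by
      filter_upwards [eventually_add_smul_mem_slab hν hxc hP.height_lt_one hxK] with t ht
      simpa using hmax ht
  rw [hxc, sub_sub_cancel] at hray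
  simp only [inner_sub_left, real_inner_smul_left, real_inner_self_eq_norm_sq, hν,
    real_inner_comm ν x, hxc] at hray
  have hg : ⟪g x, ν⟫ ≤ C * c ^ (-β) := by
    have hgx := hw.norm_gradient_le x hx hxK.le (by rwa [hxc]) (hxc ▸ hP.error_le)
    rw [hxc] at hgx
    rw [real_inner_comm]
    exact (abs_le.1 (abs_inner_le_norm_of_norm_eq_one hν _)).2.trans hgx
  have hμ : profileDeriv β e ≤ μ * profileDeriv β e :=
    le_mul_of_one_le_left (profileDeriv_pos hβ.pos hP.shift_pos).le hP.one_lt_factor.le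
  have hκc : κ * (2 * c) ≤ 2 := by nlinarith [hP.coeff_le_one, hP.height_lt_one]
  linarith [hP.slope_lt]

theorem upperBarrier_sub_le (hw : IsHalfSpaceApproxSteady ν p β C K ε D w g) (hν : ‖ν‖ = 1)
    (hβ : IsBlowupExponent p β) (hC : 0 ≤ C)
    (hP : IsUpperParams (finrank ℝ E) p β C η μ c e K κ ε)
    (htop : ∀ x, ⟪ν, x⟫ = 1 → ‖x‖ ≤ K → profile β 1 + 3 * η / 4 ≤ w x) :
    ∀ x ∈ slab ν c K, upperBarrier ν β μ (c - e) (η / 4) κ x - w x ≤ 0 := by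
  have hec := hP.shift_lt
  have he := hP.shift_pos
  have hε : ε < c := by linarith [hP.error_pos, hP.error_le]
  have hSD : slab ν c K ⊆ D := fun x hx => hw.mem_of_lt_inner hx.2.2 (hε.trans_le hx.1)
  refine le_of_forall_isMaxOn_le (isCompact_slab ν c K)
    ((continuous_upperBarrier hβ.lt_one.le _ _ _ _ _).continuousOn.sub
      (hw.continuousOn.mono (hSD.trans subset_closure))) fun x hx hmax => ?_
  have hxD := hSD hx
  obtain ⟨hxc, hx1, hxK⟩ := hx
  have hbar := upperBarrier_le hβ.pos.le hβ.lt_one.le (one_pos.trans hP.one_lt_factor).le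
    (show c - e ≤ ⟪ν, x⟫ by linarith) (by linarith) (η / 4) κ
  have hκx : 0 ≤ κ * ‖x‖ ^ 2 := mul_nonneg hP.coeff_pos.le (sq_nonneg _)
  rcases hxK.eq_or_lt with hlat | hxK'
  · have hwx := hw.abs_apply_le_linear hβ.pos.le hβ.lt_one.le hC hP.error_pos.le
      (by linarith [hP.height_lt_one]) (subset_closure hxD) hxK le_rfl hx1
    rw [hlat] at hbar
    linarith [(abs_le.1 hwx).1, hP.lateral_le]
  rcases hx1.eq_or_lt with htopx | hx1'
  · linarith [htop x htopx hxK, hP.top_le]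
  rcases hxc.eq_or_lt with hface | hxc'
  · exact absurd hmax (not_isMaxOn_upperBarrier_sub hw hν hβ hP hxD hface.symm hxK' _)
  · exact absurd (hmax.isLocalMax (slab_mem_nhds hxc' hx1' hxK'))
      (not_isLocalMax_upperBarrier_sub hw hν hβ hP hxD hxc hx1 hxK _)

theorem IsUpperParams.exists_apply_lt (hP : IsUpperParams (finrank ℝ E) p β C η μ c e K κ ε)
    (hw : IsHalfSpaceApproxSteady ν p β C K ε D w g) (hν : ‖ν‖ = 1) (hβ : IsBlowupExponent p β)
    (hC : 0 ≤ C) : ∃ x, ⟪ν, x⟫ = 1 ∧ ‖x‖ ≤ K ∧ w x < profile β 1 + 3 * η / 4 := by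
  by_contra! htop
  have hc : 0 < c := hP.shift_pos.trans hP.shift_lt
  have hcν : ⟪ν, c • ν⟫ = c := by
    rw [inner_smul_right, real_inner_self_eq_norm_sq, hν, one_pow, mul_one]
  have hcnorm : ‖c • ν‖ = c := by rw [norm_smul, hν, mul_one, Real.norm_of_nonneg hc.le]
  have hcK : ‖c • ν‖ ≤ K := by linarith [hP.height_lt_one, hP.one_le_radius]
  have hbar := upperBarrier_sub_le hw hν hβ hC hP htop (c • ν)
    ⟨hcν.ge, hcν.trans_le hP.height_lt_one.le, hcK⟩
  have hwc := hw.abs_apply_le_of_inner_le hβ.lt_one.le hC hP.error_pos.le (subset_closure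
    (hw.mem_of_lt_inner hcK (by linarith [hP.error_le, hP.error_pos]))) hcK
    (by linarith [hP.error_le, hP.error_pos]) hcν.le
  have hCc : C * (c + ε) ^ (1 - β) ≤ C * (2 * c) ^ (1 - β) := by
    have := sub_nonneg.2 hβ.lt_one.le
    have := hP.error_pos
    gcongr
    linarith [hP.error_le]
  have hprof : 0 ≤ μ * profile β e := mul_nonneg (one_pos.trans hP.one_lt_factor).le
    (profile_nonneg hβ.pos.le hβ.lt_one.le hP.shift_pos.le)
  have hκc : κ * c ^ 2 ≤ c ^ 2 := mul_le_of_le_one_left (sq_nonneg c) hP.coeff_le_one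
  rw [upperBarrier, hcν, sub_sub_cancel, hcnorm] at hbar
  linarith [(abs_le.1 hwc).2, hP.bottom_lt]

theorem exists_forall_apply_le_profile_add (hν : ‖ν‖ = 1) (hβ : IsBlowupExponent p β) (hC : 0 < C)
    (hη : 0 < η) : ∃ R > 0, ∃ ε > 0, ∀ D w g, IsHalfSpaceApproxSteady ν p β C R ε D w g →
      w ν ≤ profile β 1 + η := by
  obtain ⟨μ, c, e, K, κ, ε₁, hP⟩ := exists_isUpperParams (finrank ℝ E) hβ hC hη
  obtain ⟨R, hR, ε₂, hε₂, hosc⟩ :=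
    exists_forall_apply_le_add_of_inner_eq_one hν hβ hC (show 0 < η / 4 by positivity) K
  refine ⟨max R K, lt_max_of_lt_left hR, min ε₁ ε₂, lt_min hP.error_pos hε₂, fun D w g hw => ?_⟩
  have hε : 0 ≤ min ε₁ ε₂ := (lt_min hP.error_pos hε₂).le
  obtain ⟨x, hx, hxK, hwx⟩ := hP.exists_apply_lt
    (hw.mono hβ.lt_one.le hC.le hε (le_max_right _ _) (min_le_left _ _)) hν hβ hC.le
  have := hosc D w g (hw.mono hβ.lt_one.le hC.le hε (le_max_left _ _) (min_le_right _ _)) x ν hx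
    (by rw [real_inner_self_eq_norm_sq, hν, one_pow]) hxK (hν.trans_le hP.one_le_radius)
  linarith

end Upper

/-! ### Lower estimate -/

section Lower

/-- The parameters of the comparison from above with the profile: the factor `μ`, the shift `e` and
the coefficient `κ` of the barrier, the radius `K` of the region, and the error `ε`. -/
structure IsLowerParams (n p β C η μ e K κ ε : ℝ) : Prop where
  factor_pos : 0 < μ
  factor_lt_one : μ < 1
  shift_pos : 0 < e
  shift_le_one : e ≤ 1
  one_le_radius : 1 ≤ K
  coeff_pos : 0 < κ
  error_pos : 0 < ε
  error_le_half : ε ≤ 1 / 2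
  le_top : profile β 1 - η ≤ μ * (profile β (1 - ε) - profile β e)
  lateral_le : 2 * C ≤ κ * K ^ 2
  interior_lt : (1 + ε + 2 * κ * K / (μ * profileDeriv β 3)) ^ p +
    (μ * profileDeriv β 3 * ε + 2 * n * κ + ε) / (μ * profileDeriv β 3) ^ p <
      μ ^ (1 - p) * (1 - ε) ^ 2

variable {n p β C η μ e K κ ε : ℝ}

theorem exists_lower_factor (hβ : 0 < β) (hβ1 : β < 1) (hη : 0 < η) (hη1 : η < profile β 1) :
    ∃ μ e, 0 < μ ∧ μ < 1 ∧ 0 < e ∧ e < 1 ∧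
      profile β 1 - η < μ * (profile β 1 - profile β e) := by
  have hU : 0 < profile β 1 := profile_pos hβ hβ1 one_pos
  obtain ⟨μ, hμ, hμ1⟩ := exists_between (sub_lt_self (profile β 1) hη)
  have hcont : ContinuousAt (fun e => μ - μ / profile β 1 * profile β e) 0 :=
    (continuous_const.sub (continuous_const.mul (continuous_profile hβ1.le))).continuousAt
  obtain ⟨e, he, he0, he1⟩ := ((hcont.eventually_const_lt (u := profile β 1 - η)
    (by simpa [profile_zero hβ1] using hμ)).filter_mono nhdsWithin_le_nhds |>.and
    (Ioo_mem_nhdsGT one_pos)).exists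
  refine ⟨μ / profile β 1, e, div_pos (by linarith) hU, (div_lt_one hU).2 hμ1, he0, he1, ?_⟩
  rwa [mul_sub, div_mul_cancel₀ _ hU.ne']

theorem exists_isLowerParams (n : ℝ) (hβ : IsBlowupExponent p β) (hC : 0 < C) (hη : 0 < η)
    (hη1 : η < profile β 1) : ∃ μ e K κ ε, IsLowerParams n p β C η μ e K κ ε := by
  have hp := hβ.two_lt
  obtain ⟨μ, e, hμ, hμ1, he, he1, htop⟩ := exists_lower_factor hβ.pos hβ.lt_one hη hη1
  have hm : 1 < μ ^ (1 - p) := Real.one_lt_rpow_of_pos_of_lt_one_of_neg hμ hμ1 (by linarith)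
  set d := μ * profileDeriv β 3
  have htop' : ContinuousAt (fun t => μ * (profile β (1 - t) - profile β e)) 0 :=
    (continuous_const.mul (((continuous_profile hβ.lt_one.le).comp
      (continuous_sub_left 1)).sub continuous_const)).continuousAt
  have hleft : ContinuousAt (fun t : ℝ => (1 + t + 2 * (2 * C) * t / d) ^ p +
      (d * t + 2 * n * (2 * C * t ^ 2) + t) / d ^ p) 0 :=
    (ContinuousAt.rpow_const (by fun_prop) (Or.inr (by linarith))).add (by fun_prop)
  have hright : ContinuousAt (fun t : ℝ => μ ^ (1 - p) * (1 - t) ^ 2) 0 := by fun_prop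
  obtain ⟨t, ⟨htop, hint⟩, ht, ht1⟩ :=
    (((htop'.eventually_const_lt (by simpa using htop)).and
    (hleft.eventually_lt hright (by simpa using hm))).filter_mono nhdsWithin_le_nhds |>.and
      (Ioo_mem_nhdsGT one_half_pos)).exists
  have hκK : 2 * (2 * C * t ^ 2) * t⁻¹ = 2 * (2 * C) * t := by field_simp
  refine ⟨μ, e, t⁻¹, 2 * C * t ^ 2, t, hμ, hμ1, he, he1.le, one_le_inv_iff₀.2 ⟨ht, by linarith⟩,
    by positivity, ht, ht1.le, htop.le, ?_, ?_⟩
  · rw [inv_pow, mul_inv_cancel_right₀ (by positivity)]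
  · rwa [hκK]

theorem profile_add_sub_le (hβ : 0 ≤ β) (hβ1 : β < 1) (he : 0 < e) {τ : ℝ} (hτ : 0 ≤ τ) :
    profile β (τ + e) - profile β e ≤ profileDeriv β e * τ := by
  have hβ' : 0 < 1 - β := sub_pos.2 hβ1
  have hbernoulli : (1 + τ / e) ^ (1 - β) ≤ 1 + (1 - β) * (τ / e) :=
    rpow_one_add_le_one_add_mul_self (by linarith [div_nonneg hτ he.le]) hβ'.le (by linarith)
  have hsplit : (τ + e) ^ (1 - β) = e ^ (1 - β) * (1 + τ / e) ^ (1 - β) := by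
    rw [← Real.mul_rpow he.le (by positivity)]
    congr 1
    field_simp
    ring
  have he' : e ^ (1 - β) = e ^ (-β) * e := by
    rw [← Real.rpow_add_one he.ne']
    ring_nf
  unfold profile profileDeriv
  calc β ^ β / (1 - β) * (τ + e) ^ (1 - β) - β ^ β / (1 - β) * e ^ (1 - β)
      = β ^ β / (1 - β) * e ^ (1 - β) * ((1 + τ / e) ^ (1 - β) - 1) := by rw [hsplit]; ring
    _ ≤ β ^ β / (1 - β) * e ^ (1 - β) * ((1 - β) * (τ / e)) := by
      gcongr
      linarith
    _ = β ^ β * e ^ (-β) * τ := by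
      rw [he']
      field_simp

variable {E : Type*} [NormedAddCommGroup E] {ν x b v : E} {R A : ℝ} {D : Set E} {r w : E → ℝ}
  {g : E → E}

/-- The profile of the function `r`, multiplied by `μ`, shifted by `e` to make it Lipschitz up to
`r = 0`, and bent up by `κ * ‖x - b‖ ^ 2`. -/
def lowerBarrier (β μ e κ : ℝ) (b : E) (r : E → ℝ) (x : E) : ℝ :=
  μ * (profile β (r x + e) - profile β e) + κ * ‖x - b‖ ^ 2

theorem le_lowerBarrier (hβ : 0 ≤ β) (hβ1 : β ≤ 1) (hμ : 0 ≤ μ) (he : 0 ≤ e) (hr : 0 ≤ r x)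
    (κ : ℝ) (b : E) : κ * ‖x - b‖ ^ 2 ≤ lowerBarrier β μ e κ b r x :=
  le_add_of_nonneg_left <| mul_nonneg hμ <| sub_nonneg.2 <|
    profile_le_profile hβ hβ1 he (le_add_of_nonneg_left hr)

variable [InnerProductSpace ℝ E]

theorem IsLowerParams.rpow_norm_add_lt (hP : IsLowerParams n p β C η μ e K κ ε) (hβ : 0 < β)
    (hp : 1 ≤ p) (hn : 0 ≤ n) (hν : ‖ν‖ = 1) (hv : ‖v - ν‖ ≤ ε) (hx : ‖x‖ ≤ K) {Y : ℝ}
    (hY : μ * profileDeriv β 3 ≤ Y) :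
    ‖Y • v + κ • (2 : ℝ) • x‖ ^ p + Y * ε + 2 * n * κ + ε < μ ^ (1 - p) * Y ^ p * ‖v‖ ^ 2 := by
  have hε := hP.error_pos
  have hκ := hP.coeff_pos
  have hμ := hP.factor_pos
  have hK : 0 < K := one_pos.trans_le hP.one_le_radius
  have hd : 0 < μ * profileDeriv β 3 := mul_pos hμ (profileDeriv_pos hβ three_pos)
  have hint := hP.interior_lt
  set d := μ * profileDeriv β 3
  have hY0 : 0 < Y := hd.trans_le hY
  have hv1 : ‖v‖ ≤ 1 + ε := by linarith [norm_sub_norm_le v ν]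
  have hv2 : 1 - ε ≤ ‖v‖ := by linarith [norm_sub_norm_le ν v, norm_sub_rev v ν]
  have hnorm : ‖Y • v + κ • (2 : ℝ) • x‖ ≤ Y * (1 + ε + 2 * κ * K / d) := by
    have hYd : 2 * κ * K ≤ Y * (2 * κ * K / d) := by
      rw [mul_div_left_comm]
      exact le_mul_of_one_le_right (by positivity) ((one_le_div hd).2 hY)
    calc ‖Y • v + κ • (2 : ℝ) • x‖ ≤ Y * ‖v‖ + κ * (2 * ‖x‖) := (norm_add_le _ _).trans_eq <| by
          simp [norm_smul, abs_of_pos, hY0, hκ]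
      _ ≤ Y * (1 + ε) + κ * (2 * K) := by gcongr
      _ ≤ Y * (1 + ε + 2 * κ * K / d) := by linarith
  have hpow : Y / d ≤ (Y / d) ^ p := Real.self_le_rpow_of_one_le ((one_le_div hd).2 hY) hp
  have herr : Y * ε + 2 * n * κ + ε ≤ Y ^ p * ((d * ε + 2 * n * κ + ε) / d ^ p) := by
    calc Y * ε + 2 * n * κ + ε = Y / d * (d * ε) + 1 * (2 * n * κ + ε) := by field_simp; ring
      _ ≤ (Y / d) ^ p * (d * ε) + (Y / d) ^ p * (2 * n * κ + ε) := by
        gcongr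
        exact ((one_le_div hd).2 hY).trans hpow
      _ = Y ^ p * ((d * ε + 2 * n * κ + ε) / d ^ p) := by
        rw [Real.div_rpow hY0.le hd.le]
        ring
  calc ‖Y • v + κ • (2 : ℝ) • x‖ ^ p + Y * ε + 2 * n * κ + ε
      ≤ (Y * (1 + ε + 2 * κ * K / d)) ^ p + Y ^ p * ((d * ε + 2 * n * κ + ε) / d ^ p) := by
        linarith [Real.rpow_le_rpow (norm_nonneg _) hnorm (zero_le_one.trans hp)]
    _ = Y ^ p * ((1 + ε + 2 * κ * K / d) ^ p + (d * ε + 2 * n * κ + ε) / d ^ p) := by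
        rw [Real.mul_rpow hY0.le (by positivity), mul_add]
    _ < Y ^ p * (μ ^ (1 - p) * (1 - ε) ^ 2) := by gcongr
    _ ≤ μ ^ (1 - p) * Y ^ p * ‖v‖ ^ 2 := by
        rw [mul_left_comm, mul_assoc]
        gcongr
        linarith [hP.error_le_half]

/-- The part of `closure D` that lies below height `1` in the direction `ν` and in the closed ball
of radius `K` about `b`. -/
def boundaryRegion (ν b : E) (K : ℝ) (D : Set E) : Set E :=
  {x | x ∈ closure D ∧ ⟪ν, x⟫ ≤ 1 ∧ ‖x - b‖ ≤ K}

theorem norm_le_of_mem_boundaryRegion (hb : ‖b‖ ≤ 1) (hx : x ∈ boundaryRegion ν b K D) :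
    ‖x‖ ≤ K + 1 := by
  linarith [norm_sub_norm_le x b, hx.2.2]

theorem boundaryRegion_mem_nhds (hD : IsOpen D) (hx : x ∈ D) (hx1 : ⟪ν, x⟫ < 1)
    (hxK : ‖x - b‖ < K) : boundaryRegion ν b K D ∈ 𝓝 x := by
  have hinner : Continuous fun x : E => ⟪ν, x⟫ := by fun_prop
  have hnorm : Continuous fun x : E => ‖x - b‖ := by fun_prop
  filter_upwards [hD.mem_nhds hx, (isOpen_Iio.preimage hinner).mem_nhds hx1,
    (isOpen_Iio.preimage hnorm).mem_nhds hxK] with y h₁ h₂ h₃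
  exact ⟨subset_closure h₁, le_of_lt h₂, le_of_lt h₃⟩

variable [FiniteDimensional ℝ E]

theorem isCompact_boundaryRegion (ν b : E) (K : ℝ) (D : Set E) :
    IsCompact (boundaryRegion ν b K D) := by
  have hinner : Continuous fun x : E => ⟪ν, x⟫ := by fun_prop
  have hnorm : Continuous fun x : E => ‖x - b‖ := by fun_prop
  exact (isCompact_closedBall b K).of_isClosed_subset
    (isClosed_closure.inter ((isClosed_Iic.preimage hinner).inter
      (isClosed_Iic.preimage hnorm))) fun x hx => by simpa [dist_eq_norm] using hx.2.2

/-- The rescaled version of `IsDefiningFunctionAt`: in the ball of radius `R` the function `r` is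
a defining function of `D` that is within `ε` of `⟪ν, x⟫` in a `C²` sense. -/
structure IsHalfSpaceDefiningFunction (ν : E) (R ε : ℝ) (D : Set E) (r : E → ℝ) : Prop where
  hasLaplacianAt : ∀ x, ‖x‖ ≤ R → ∃ v L, HasLaplacianAt r v L x ∧ ‖v - ν‖ ≤ ε ∧ |L| ≤ ε
  pos : ∀ x ∈ D, ‖x‖ ≤ R → 0 < r x
  eq_zero : ∀ x ∈ frontier D, ‖x‖ ≤ R → r x = 0
  abs_sub_inner_le : ∀ x, ‖x‖ ≤ R → |r x - ⟪ν, x⟫| ≤ ε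

theorem IsHalfSpaceDefiningFunction.nonneg (hr : IsHalfSpaceDefiningFunction ν R ε D r)
    (hx : x ∈ closure D) (hxR : ‖x‖ ≤ R) : 0 ≤ r x := by
  by_cases hxD : x ∈ D
  · exact (hr.pos x hxD hxR).le
  · exact (hr.eq_zero x ⟨hx, fun h => hxD (interior_subset h)⟩ hxR).ge

theorem IsHalfSpaceDefiningFunction.le_two_mul (hr : IsHalfSpaceDefiningFunction ν R ε D r)
    (hν : ‖ν‖ = 1) (hε : ε ≤ 1) (hx : ‖x‖ ≤ R) (hb : b ∈ frontier D) (hbR : ‖b‖ ≤ R) :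
    r x ≤ 2 * ‖x - b‖ := by
  choose! v L hL hv _ using hr.hasLaplacianAt
  have hlip := (convex_closedBall (0 : E) R).norm_image_sub_le_of_norm_hasFDerivWithin_le
    (f := r) (C := 2) (x := b) (y := x)
    (fun y hy => (hL y (by simpa using hy)).hasGradientAt.hasFDerivAt.hasFDerivWithinAt)
    (fun y hy => by
      rw [LinearIsometryEquiv.norm_map]
      linarith [norm_sub_norm_le (v y) ν, hv y (by simpa using hy)])
    (by simpa using hbR) (by simpa using hx)
  rw [hr.eq_zero b hb hbR, sub_zero] at hlip
  exact (le_abs_self _).trans hlip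

theorem IsHalfSpaceDefiningFunction.hasLaplacianAt_lowerBarrier_lt
    (hr : IsHalfSpaceDefiningFunction ν R ε D r) (hν : ‖ν‖ = 1) (hβ : IsBlowupExponent p β)
    (hP : IsLowerParams (finrank ℝ E) p β C η μ e K κ ε) (hx : x ∈ D) (hx1 : ⟪ν, x⟫ ≤ 1)
    (hxR : ‖x‖ ≤ R) (hxK : ‖x - b‖ ≤ K) :
    ∃ V Λ, HasLaplacianAt (lowerBarrier β μ e κ b r) V Λ x ∧ Λ + ‖V‖ ^ p < -ε := by
  have he := hP.shift_pos
  have hμ := hP.factor_pos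
  have hrx := hr.pos x hx hxR
  obtain ⟨v, L, hL, hv, hLε⟩ := hr.hasLaplacianAt x hxR
  have hbar := ((hasLaplacianAt_const_mul_profile hβ hμ (hL.add (HasLaplacianAt.const e x))
    (add_pos hrx he)).sub (HasLaplacianAt.const (μ * profile β e) x)).add
    ((HasLaplacianAt.norm_sub_sq b x).const_mul κ)
  simp only [add_zero, sub_zero, ← mul_sub] at hbar
  refine ⟨_, _, hbar, ?_⟩
  set Y := μ * profileDeriv β (r x + e)
  have hY : μ * profileDeriv β 3 ≤ Y := by
    refine mul_le_mul_of_nonneg_left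
      (profileDeriv_le_profileDeriv hβ.pos.le (add_pos hrx he) ?_) hμ.le
    linarith [(abs_le.1 (hr.abs_sub_inner_le x hxR)).2, hP.shift_le_one, hP.error_le_half]
  have hY0 : 0 ≤ Y := (mul_pos hμ (profileDeriv_pos hβ.pos three_pos)).le.trans hY
  have hYL : Y * L ≤ Y * ε := mul_le_mul_of_nonneg_left ((le_abs_self _).trans hLε) hY0
  linarith [hP.rpow_norm_add_lt hβ.pos (by linarith [hβ.two_lt]) (Nat.cast_nonneg _) hν hv hxK hY]

theorem IsHalfSpaceApproxSteady.not_isLocalMax_sub_lowerBarrier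
    (hw : IsHalfSpaceApproxSteady ν p β C R ε D w g) (hr : IsHalfSpaceDefiningFunction ν R ε D r)
    (hν : ‖ν‖ = 1) (hβ : IsBlowupExponent p β)
    (hP : IsLowerParams (finrank ℝ E) p β C η μ e K κ ε) (hx : x ∈ D) (hx1 : ⟪ν, x⟫ ≤ 1)
    (hxR : ‖x‖ ≤ R) (hxK : ‖x - b‖ ≤ K) :
    ¬IsLocalMax (fun x => w x - 1 * lowerBarrier β μ e κ b r x) x := by
  intro hmax
  obtain ⟨V, Λ, hΛ, hlt⟩ := hr.hasLaplacianAt_lowerBarrier_lt hν hβ hP hx hx1 hxR hxK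
  obtain ⟨L, hL, hLε⟩ := hw.hasLaplacianAt x hx
  obtain ⟨hgrad, hlap⟩ := (hL.sub (hΛ.const_mul 1)).isLocalMax hmax
  rw [sub_eq_zero, one_smul] at hgrad
  rw [← hgrad] at hlt
  linarith [(abs_le.1 hLε).1]

theorem IsHalfSpaceApproxSteady.not_isLocalMax_neg_sub_lowerBarrier
    (hw : IsHalfSpaceApproxSteady ν p β C R ε D w g) (hr : IsHalfSpaceDefiningFunction ν R ε D r)
    (hν : ‖ν‖ = 1) (hβ : IsBlowupExponent p β)
    (hP : IsLowerParams (finrank ℝ E) p β C η μ e K κ ε) (hx : x ∈ D) (hx1 : ⟪ν, x⟫ ≤ 1)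
    (hxR : ‖x‖ ≤ R) (hxK : ‖x - b‖ ≤ K) (hA : 1 ≤ A) :
    ¬IsLocalMax (fun x => -1 * w x - A * lowerBarrier β μ e κ b r x) x := by
  intro hmax
  obtain ⟨V, Λ, hΛ, hlt⟩ := hr.hasLaplacianAt_lowerBarrier_lt hν hβ hP hx hx1 hxR hxK
  obtain ⟨L, hL, hLε⟩ := hw.hasLaplacianAt x hx
  have hlap := (((hL.const_mul (-1)).sub (hΛ.const_mul A)).isLocalMax hmax).2
  have hΛε : Λ < -ε := by linarith [Real.rpow_nonneg (norm_nonneg V) p]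
  nlinarith [(abs_le.1 hLε).2, Real.rpow_nonneg (norm_nonneg (g x)) p, hP.error_pos]

theorem IsHalfSpaceDefiningFunction.continuousOn_lowerBarrier
    (hr : IsHalfSpaceDefiningFunction ν R ε D r) (hβ : β ≤ 1) (μ e κ : ℝ) (b : E) :
    ContinuousOn (lowerBarrier β μ e κ b r) {x | ‖x‖ ≤ R} := by
  have hprofile := continuous_profile hβ
  have hrcont : ContinuousOn r {x | ‖x‖ ≤ R} := fun x hx =>
    have ⟨_, _, hL, _⟩ := hr.hasLaplacianAt x hx
    hL.continuousAt.continuousWithinAt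
  unfold lowerBarrier
  fun_prop

theorem IsHalfSpaceDefiningFunction.le_lowerBarrier_of_inner_eq_one
    (hr : IsHalfSpaceDefiningFunction ν R ε D r) (hβ : 0 ≤ β) (hβ1 : β ≤ 1)
    (hP : IsLowerParams n p β C η μ e K κ ε) (hx1 : ⟪ν, x⟫ = 1) (hxR : ‖x‖ ≤ R) (b : E) :
    profile β 1 - η ≤ lowerBarrier β μ e κ b r x := by
  have hrx := (abs_le.1 (hr.abs_sub_inner_le x hxR)).1
  have hprof : profile β (1 - ε) ≤ profile β (r x + e) :=
    profile_le_profile hβ hβ1 (by linarith [hP.error_le_half]) (by linarith [hP.shift_pos])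
  have hmul := mul_le_mul_of_nonneg_left (sub_le_sub_right hprof (profile β e)) hP.factor_pos.le
  exact (hP.le_top.trans hmul).trans
    (le_add_of_nonneg_right (mul_nonneg hP.coeff_pos.le (sq_nonneg _)))

theorem IsHalfSpaceDefiningFunction.sub_mul_lowerBarrier_nonpos {φ : E → ℝ}
    (hr : IsHalfSpaceDefiningFunction ν (K + 1) ε D r) (hD : IsOpen D)
    (hβ : 0 ≤ β) (hβ1 : β ≤ 1) (hP : IsLowerParams n p β C η μ e K κ ε) (hb : ‖b‖ ≤ 1)
    (hA : 1 ≤ A) (hφ : ContinuousOn φ (closure D)) (hφ0 : ∀ x ∈ frontier D, φ x = 0)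
    (hφC : ∀ x ∈ boundaryRegion ν b K D, φ x ≤ 2 * C)
    (htop : ∀ x ∈ boundaryRegion ν b K D, ⟪ν, x⟫ = 1 → φ x ≤ A * (profile β 1 - η))
    (hmax : ∀ x ∈ D, ⟪ν, x⟫ ≤ 1 → ‖x‖ ≤ K + 1 → ‖x - b‖ ≤ K →
      ¬IsLocalMax (fun x => φ x - A * lowerBarrier β μ e κ b r x) x) :
    ∀ x ∈ boundaryRegion ν b K D, φ x - A * lowerBarrier β μ e κ b r x ≤ 0 := by
  have hA0 : 0 ≤ A := zero_le_one.trans hA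
  refine le_of_forall_isMaxOn_le (isCompact_boundaryRegion ν b K D) ?_ fun x hx hxmax => ?_
  · exact (hφ.mono fun x hx => hx.1).sub (continuousOn_const.mul
      ((hr.continuousOn_lowerBarrier hβ1 μ e κ b).mono fun x => norm_le_of_mem_boundaryRegion hb))
  have hxR := norm_le_of_mem_boundaryRegion hb hx
  have hκ : κ * ‖x - b‖ ^ 2 ≤ lowerBarrier β μ e κ b r x :=
    le_lowerBarrier hβ hβ1 hP.factor_pos.le hP.shift_pos.le (hr.nonneg hx.1 hxR) κ b
  have hbar : 0 ≤ lowerBarrier β μ e κ b r x :=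
    (mul_nonneg hP.coeff_pos.le (sq_nonneg _)).trans hκ
  by_cases hxD : x ∈ D
  swap
  · rw [hφ0 x ⟨hx.1, fun h => hxD (interior_subset h)⟩, zero_sub]
    exact neg_nonpos.2 (mul_nonneg hA0 hbar)
  rcases hx.2.2.eq_or_lt with hlat | hxK
  · rw [hlat] at hκ
    linarith [hφC x hx, hP.lateral_le, le_mul_of_one_le_left hbar hA]
  rcases hx.2.1.eq_or_lt with hx1 | hx1
  · linarith [htop x hx hx1, mul_le_mul_of_nonneg_left
      (hr.le_lowerBarrier_of_inner_eq_one hβ hβ1 hP hx1 hxR b) hA0]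
  · exact absurd (hxmax.isLocalMax (boundaryRegion_mem_nhds hD hxD hx1 hxK))
      (hmax x hxD hx1.le hxR hxK.le)

theorem IsHalfSpaceApproxSteady.abs_apply_le_mul_lowerBarrier
    (hw : IsHalfSpaceApproxSteady ν p β C (K + 1) ε D w g)
    (hr : IsHalfSpaceDefiningFunction ν (K + 1) ε D r) (hν : ‖ν‖ = 1)
    (hβ : IsBlowupExponent p β) (hC : 0 ≤ C) (hη : η < profile β 1)
    (hP : IsLowerParams (finrank ℝ E) p β C η μ e K κ ε)
    (htop : ∀ x, ⟪ν, x⟫ = 1 → ‖x‖ ≤ K + 1 → w x ≤ profile β 1 - η) (hb : ‖b‖ ≤ 1)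
    (hx : x ∈ boundaryRegion ν b K D) :
    |w x| ≤ (1 + 2 * C / (profile β 1 - η)) * lowerBarrier β μ e κ b r x := by
  have hη' : 0 < profile β 1 - η := sub_pos.2 hη
  have hA : 1 ≤ 1 + 2 * C / (profile β 1 - η) := le_add_of_nonneg_right (by positivity)
  have hε := hP.error_le_half
  have hwC : ∀ y ∈ boundaryRegion ν b K D, |w y| ≤ 2 * C := fun y hy =>
    (hw.abs_apply_le_linear hβ.pos.le hβ.lt_one.le hC hP.error_pos.le (by linarith) hy.1
      (norm_le_of_mem_boundaryRegion hb hy) le_rfl hy.2.1).trans_eq (by ring)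
  have hupper := hr.sub_mul_lowerBarrier_nonpos hw.isOpen hβ.pos.le hβ.lt_one.le hP hb le_rfl
    hw.continuousOn hw.eq_zero (fun y hy => (abs_le.1 (hwC y hy)).2)
    (fun y hy hy1 => by simpa using htop y hy1 (norm_le_of_mem_boundaryRegion hb hy))
    (fun y hy hy1 hyR hyK => hw.not_isLocalMax_sub_lowerBarrier hr hν hβ hP hy hy1 hyR hyK) x hx
  have hlower := hr.sub_mul_lowerBarrier_nonpos hw.isOpen hβ.pos.le hβ.lt_one.le hP hb hA
    (φ := fun y => -1 * w y) (continuousOn_const.mul hw.continuousOn)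
    (fun y hy => by simp [hw.eq_zero y hy])
    (fun y hy => by linarith [(abs_le.1 (hwC y hy)).1])
    (fun y hy _ => by
      rw [add_mul, div_mul_cancel₀ _ hη'.ne']
      linarith [(abs_le.1 (hwC y hy)).1])
    (fun y hy hy1 hyR hyK =>
      hw.not_isLocalMax_neg_sub_lowerBarrier hr hν hβ hP hy hy1 hyR hyK hA) x hx
  have hbar : 0 ≤ lowerBarrier β μ e κ b r x :=
    (mul_nonneg hP.coeff_pos.le (sq_nonneg _)).trans (le_lowerBarrier hβ.pos.le hβ.lt_one.le
      hP.factor_pos.le hP.shift_pos.le (hr.nonneg hx.1 (norm_le_of_mem_boundaryRegion hb hx)) κ b)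
  exact abs_le.2 ⟨by linarith, by linarith [le_mul_of_one_le_left hbar hA]⟩

theorem IsHalfSpaceDefiningFunction.lowerBarrier_le
    (hr : IsHalfSpaceDefiningFunction ν R ε D r) (hν : ‖ν‖ = 1) (hβ : 0 < β) (hβ1 : β < 1)
    (hP : IsLowerParams n p β C η μ e K κ ε) (hx : x ∈ closure D) (hxR : ‖x‖ ≤ R)
    (hb : b ∈ frontier D) (hbR : ‖b‖ ≤ R) (hxb : ‖x - b‖ ≤ 1) :
    lowerBarrier β μ e κ b r x ≤ (2 * μ * profileDeriv β e + κ) * ‖x - b‖ := by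
  have hprof : profile β (r x + e) - profile β e ≤ profileDeriv β e * (2 * ‖x - b‖) := by
    refine (profile_add_sub_le hβ.le hβ1 hP.shift_pos (hr.nonneg hx hxR)).trans ?_
    have := (profileDeriv_pos hβ hP.shift_pos).le
    gcongr
    exact hr.le_two_mul hν (by linarith [hP.error_le_half]) hxR hb hbR
  have hκ : κ * ‖x - b‖ ^ 2 ≤ κ * ‖x - b‖ :=
    mul_le_mul_of_nonneg_left (by nlinarith [norm_nonneg (x - b)]) hP.coeff_pos.le
  calc lowerBarrier β μ e κ b r x
      ≤ μ * (profileDeriv β e * (2 * ‖x - b‖)) + κ * ‖x - b‖ :=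
        add_le_add (mul_le_mul_of_nonneg_left hprof hP.factor_pos.le) hκ
    _ = (2 * μ * profileDeriv β e + κ) * ‖x - b‖ := by ring

theorem exists_forall_abs_apply_le_mul_norm_sub (hν : ‖ν‖ = 1) (hβ : IsBlowupExponent p β)
    (hC : 0 < C) (hη : 0 < η) (hη1 : η < profile β 1) :
    ∃ R > 0, ∃ ε > 0, ∃ A > 0, ∀ D w g r, IsHalfSpaceApproxSteady ν p β C R ε D w g →
      IsHalfSpaceDefiningFunction ν R ε D r →
      (∀ x, ⟪ν, x⟫ = 1 → ‖x‖ ≤ R → w x ≤ profile β 1 - η) →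
      ∀ b ∈ frontier D, ‖b‖ ≤ 1 → ∀ x ∈ closure D, ‖x - b‖ ≤ 1 / 4 → |w x| ≤ A * ‖x - b‖ := by
  obtain ⟨μ, e, K, κ, ε, hP⟩ := exists_isLowerParams (finrank ℝ E) hβ hC hη hη1
  have hμ := hP.factor_pos
  have hκ := hP.coeff_pos
  have hK := hP.one_le_radius
  have := sub_pos.2 hη1
  have hY := profileDeriv_pos hβ.pos hP.shift_pos
  refine ⟨K + 1, by linarith, ε, hP.error_pos,
    (1 + 2 * C / (profile β 1 - η)) * (2 * μ * profileDeriv β e + κ), by positivity,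
    fun D w g r hw hr htop b hb hb1 x hx hxb => ?_⟩
  have hbinner : ⟪ν, b⟫ ≤ ε :=
    hw.inner_le_of_notMem b (notMem_of_mem_frontier hw.isOpen hb) (by linarith)
  have hx1 : ⟪ν, x⟫ ≤ 1 := by
    have := (abs_le.1 (abs_inner_le_norm_of_norm_eq_one hν (x - b))).2
    rw [inner_sub_right] at this
    linarith [hP.error_le_half]
  have hregion : x ∈ boundaryRegion ν b K D := ⟨hx, hx1, by linarith⟩
  calc |w x| ≤ (1 + 2 * C / (profile β 1 - η)) * lowerBarrier β μ e κ b r x :=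
        hw.abs_apply_le_mul_lowerBarrier hr hν hβ hC.le hη1 hP htop hb1 hregion
    _ ≤ (1 + 2 * C / (profile β 1 - η)) * ((2 * μ * profileDeriv β e + κ) * ‖x - b‖) := by
        gcongr
        exact hr.lowerBarrier_le hν hβ.pos hβ.lt_one hP hx
          (norm_le_of_mem_boundaryRegion hb1 hregion) hb (by linarith) (by linarith)
    _ = _ := (mul_assoc _ _ _).symm

end Lower

/-! ### Time slices of a solution -/

section Slices

theorem apply_le_of_deriv_le_mul_rpow {β C d : ℝ} {f f' : ℝ → ℝ} (hβ : β < 1) (hd : 0 ≤ d)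
    (hf : ContinuousOn f (Icc 0 d)) (hf0 : f 0 = 0) (hf' : ∀ τ ∈ Ioo 0 d, HasDerivAt f (f' τ) τ)
    (hle : ∀ τ ∈ Ioo 0 d, f' τ ≤ C * τ ^ (-β)) : f d ≤ C / (1 - β) * d ^ (1 - β) := by
  have hq : 0 < 1 - β := by linarith
  have hderiv : ∀ τ ∈ Ioo 0 d, HasDerivAt (fun τ => C / (1 - β) * τ ^ (1 - β) - f τ)
      (C * τ ^ (-β) - f' τ) τ := by
    intro τ hτ
    refine (((Real.hasDerivAt_rpow_const (p := 1 - β) (Or.inl hτ.1.ne')).const_mul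
      (C / (1 - β))).sub (hf' τ hτ)).congr_deriv ?_
    rw [show 1 - β - 1 = -β by ring]
    field_simp
  have hmono : MonotoneOn (fun τ => C / (1 - β) * τ ^ (1 - β) - f τ) (Icc 0 d) := by
    refine monotoneOn_of_deriv_nonneg (convex_Icc 0 d)
      ((continuousOn_const.mul (Real.continuous_rpow_const hq.le).continuousOn).sub hf) ?_ ?_ <;>
      rw [interior_Icc] <;> intro τ hτ
    · exact (hderiv τ hτ).differentiableAt.differentiableWithinAt
    · rw [(hderiv τ hτ).deriv]
      exact sub_nonneg.2 (hle τ hτ)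
  have := hmono (left_mem_Icc.2 hd) (right_mem_Icc.2 hd) hd
  simp only [Real.zero_rpow hq.ne', hf0] at this
  linarith

variable {E : Type*} [NormedAddCommGroup E]

theorem exists_mem_frontier_eq_add_infDist_smul [NormedSpace ℝ E] [FiniteDimensional ℝ E]
    {Ω : Set E} {x : E} (hΩ : IsOpen Ω) (hne : (frontier Ω).Nonempty) (hx : x ∈ Ω) :
    ∃ b ∈ frontier Ω, ∃ e : E, ‖e‖ = 1 ∧ b + infDist x (frontier Ω) • e = x ∧
      ∀ τ ∈ Ioc 0 (infDist x (frontier Ω)),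
        b + τ • e ∈ Ω ∧ infDist (b + τ • e) (frontier Ω) = τ := by
  obtain ⟨b, hb, hdb⟩ := (isClosed_frontier (s := Ω)).exists_infDist_eq_dist hne x
  have hpos := infDist_frontier_pos hΩ hne hx
  set d := infDist x (frontier Ω)
  have hx' : b + d • d⁻¹ • (x - b) = x := by rw [smul_inv_smul₀ hpos.ne', add_sub_cancel]
  have he : ‖d⁻¹ • (x - b)‖ = 1 := by
    rw [norm_smul, norm_inv, Real.norm_of_nonneg hpos.le, ← dist_eq_norm, ← hdb,
      inv_mul_cancel₀ hpos.ne']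
  refine ⟨b, hb, d⁻¹ • (x - b), he, hx', fun τ hτ => ?_⟩
  set e := d⁻¹ • (x - b)
  have hdist : dist (b + τ • e) x = d - τ := by
    rw [← hx', dist_add_left, dist_eq_norm, ← sub_smul, norm_smul, he, mul_one,
      Real.norm_eq_abs, abs_sub_comm, abs_of_nonneg (sub_nonneg.2 hτ.2)]
  have hdist' : dist (b + τ • e) b = τ := by
    rw [dist_self_add_left, norm_smul, he, mul_one, Real.norm_of_nonneg hτ.1.le]
  refine ⟨ball_infDist_frontier_subset hΩ hx ?_, le_antisymm ?_ ?_⟩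
  · rw [mem_ball, hdist]
    exact sub_lt_self d hτ.1
  · exact (infDist_le_dist_of_mem hb).trans_eq hdist'
  · have := infDist_le_infDist_add_dist (s := frontier Ω) (x := x) (y := b + τ • e)
    rw [dist_comm, hdist] at this
    linarith

variable [InnerProductSpace ℝ E] [FiniteDimensional ℝ E] {Ω : Set E} {p β M C C₀ T₀ T : ℝ}

theorem abs_apply_le_of_norm_gradient_le {w : E → ℝ} {g : E → E} (hΩ : IsOpen Ω)
    (hne : (frontier Ω).Nonempty) (hβ : β < 1) (hC : 0 ≤ C) (hw : ContinuousOn w (closure Ω))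
    (hw0 : ∀ x ∈ frontier Ω, w x = 0) (hg : ∀ x ∈ Ω, HasGradientAt w (g x) x)
    (hle : ∀ x ∈ Ω, infDist x (frontier Ω) ≤ 1 → ‖g x‖ ≤ C * infDist x (frontier Ω) ^ (-β)) :
    ∀ x ∈ closure Ω, infDist x (frontier Ω) ≤ 1 →
      |w x| ≤ C / (1 - β) * infDist x (frontier Ω) ^ (1 - β) := by
  intro x hx hx1
  by_cases hxΩ : x ∈ Ω
  swap
  · rw [hw0 x ⟨hx, by rwa [hΩ.interior_eq]⟩, abs_zero]
    have : 0 < 1 - β := sub_pos.2 hβ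
    exact mul_nonneg (by positivity) (Real.rpow_nonneg infDist_nonneg _)
  obtain ⟨b, hb, e, he, hbx, hray⟩ := exists_mem_frontier_eq_add_infDist_smul hΩ hne hxΩ
  set d := infDist x (frontier Ω)
  have hcont : ContinuousOn (fun τ : ℝ => w (b + τ • e)) (Icc 0 d) := by
    refine hw.comp (by fun_prop) fun τ hτ => ?_
    rcases hτ.1.eq_or_lt with rfl | h
    · simpa using hb.1
    · exact subset_closure (hray τ ⟨h, hτ.2⟩).1
  have hderiv (τ : ℝ) (hτ : τ ∈ Ioo 0 d) :
      HasDerivAt (fun τ : ℝ => w (b + τ • e)) ⟪g (b + τ • e), e⟫ τ :=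
    hasDerivAt_comp_of_hasGradientAt (hg _ (hray τ ⟨hτ.1, hτ.2.le⟩).1) (hasDerivAt_add_smul b e τ)
  have hbound (τ : ℝ) (hτ : τ ∈ Ioo 0 d) : |⟪g (b + τ • e), e⟫| ≤ C * τ ^ (-β) := by
    obtain ⟨hmem, hdist⟩ := hray τ ⟨hτ.1, hτ.2.le⟩
    have := hle _ hmem (by rw [hdist]; exact hτ.2.le.trans hx1)
    rw [hdist] at this
    exact ((abs_real_inner_le_norm _ _).trans_eq (by rw [he, mul_one])).trans this
  have hw0' : w (b + (0 : ℝ) • e) = 0 := by rw [zero_smul, add_zero, hw0 b hb]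
  rw [abs_le', ← hbx]
  exact ⟨apply_le_of_deriv_le_mul_rpow hβ infDist_nonneg hcont hw0' hderiv
      fun τ hτ => (le_abs_self _).trans (hbound τ hτ),
    apply_le_of_deriv_le_mul_rpow (f := fun τ => -w (b + τ • e)) hβ infDist_nonneg hcont.neg
      (by rw [hw0', neg_zero]) (fun τ hτ => (hderiv τ hτ).neg)
      fun τ hτ => (neg_le_abs _).trans (hbound τ hτ)⟩

/-- `u` is a classical solution of `∂ₜu - Δu = |∇u|ᵖ` in `Ω × (T₀, T]` with zero boundary values;
`G`, `H` and `u'` are its spatial gradient, its spatial Hessian and its time derivative. -/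
structure IsClassicalSolution (Ω : Set E) (p T₀ T : ℝ) (u : E → ℝ → ℝ) (G : E → ℝ → E)
    (H : E → ℝ → E →L[ℝ] E) (u' : E → ℝ → ℝ) : Prop where
  continuousOn : ∀ t ∈ Ioc T₀ T, ContinuousOn (fun x => u x t) (closure Ω)
  eq_zero : ∀ t ∈ Ioc T₀ T, ∀ x ∈ frontier Ω, u x t = 0
  hasGradientAt : ∀ t ∈ Ioc T₀ T, ∀ x ∈ Ω, HasGradientAt (fun y => u y t) (G x t) x
  hasFDerivAt : ∀ t ∈ Ioc T₀ T, ∀ x ∈ Ω, HasFDerivAt (fun y => G y t) (H x t) x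
  hasDerivAt : ∀ t ∈ Ioc T₀ T, ∀ x ∈ Ω, HasDerivAt (fun s => u x s) (u' x t) t
  continuousOn_gradient : ∀ x ∈ Ω, ContinuousOn (fun t => G x t) (Ioc T₀ T)
  equation : ∀ t ∈ Ioc T₀ T, ∀ x ∈ Ω, u' x t - LinearMap.trace ℝ E (H x t) = ‖G x t‖ ^ p

namespace IsClassicalSolution

variable {u u' : E → ℝ → ℝ} {G : E → ℝ → E} {H : E → ℝ → E →L[ℝ] E}

theorem mono (h : IsClassicalSolution Ω p T₀ T u G H u') {T₁ : ℝ} (hT : T₀ ≤ T₁) :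
    IsClassicalSolution Ω p T₁ T u G H u' :=
  have hsub : Ioc T₁ T ⊆ Ioc T₀ T := Ioc_subset_Ioc_left hT
  { continuousOn := fun t ht => h.continuousOn t (hsub ht)
    eq_zero := fun t ht => h.eq_zero t (hsub ht)
    hasGradientAt := fun t ht => h.hasGradientAt t (hsub ht)
    hasFDerivAt := fun t ht => h.hasFDerivAt t (hsub ht)
    hasDerivAt := fun t ht => h.hasDerivAt t (hsub ht)
    continuousOn_gradient := fun x hx => (h.continuousOn_gradient x hx).mono hsub
    equation := fun t ht => h.equation t (hsub ht) }

theorem norm_gradient_le (hu : IsClassicalSolution Ω p T₀ T u G H u') (hT : T₀ < T)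
    {c : E → ℝ} (hG : ∀ x ∈ Ω, ∀ t ∈ Ioo T₀ T, ‖G x t‖ ≤ c x) :
    ∀ x ∈ Ω, ∀ t ∈ Ioc T₀ T, ‖G x t‖ ≤ c x := by
  intro x hx t ht
  rcases ht.2.lt_or_eq with h | rfl
  · exact hG x hx t ⟨ht.1, h⟩
  have hlim : Tendsto (fun s => ‖G x s‖) (𝓝[Ioo T₀ t] t) (𝓝 ‖G x t‖) :=
    ((hu.continuousOn_gradient x hx t ht).mono Ioo_subset_Ioc_self).norm
  have := right_nhdsWithin_Ioo_neBot hT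
  exact le_of_tendsto hlim (eventually_mem_nhdsWithin.mono fun s hs => hG x hx s hs)

theorem isApproxSteady (hu : IsClassicalSolution Ω p T₀ T u G H u') (hΩ : IsOpen Ω)
    (hne : (frontier Ω).Nonempty) (hβ : IsBlowupExponent p β) (hC : 0 ≤ C)
    (hM : ∀ x ∈ Ω, ∀ t ∈ Ioc T₀ T, |u' x t| ≤ M)
    (hG : ∀ x ∈ Ω, ∀ t ∈ Ioc T₀ T, infDist x (frontier Ω) ≤ 1 →
      ‖G x t‖ ≤ C * infDist x (frontier Ω) ^ (-β)) {t : ℝ} (ht : t ∈ Ioc T₀ T) :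
    IsApproxSteady Ω p β M (C / (1 - β)) (fun x => u x t) (fun x => G x t) where
  continuousOn := hu.continuousOn t ht
  eq_zero := hu.eq_zero t ht
  abs_apply_le := abs_apply_le_of_norm_gradient_le hΩ hne hβ.lt_one hC (hu.continuousOn t ht)
    (hu.eq_zero t ht) (hu.hasGradientAt t ht) fun x hx => hG x hx t ht
  norm_gradient_le x hx hx1 := by
    refine (hG x hx t ht hx1).trans
      (mul_le_mul_of_nonneg_right ?_ (Real.rpow_nonneg infDist_nonneg _))
    exact le_div_self hC (sub_pos.2 hβ.lt_one) (sub_le_self 1 hβ.pos.le)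
  hasLaplacianAt x hx := by
    refine ⟨LinearMap.trace ℝ E (H x t), ⟨fun y => G y t, H x t,
      (hΩ.eventually_mem hx).mono (hu.hasGradientAt t ht), hu.hasFDerivAt t ht x hx, rfl, rfl⟩, ?_⟩
    rw [← hu.equation t ht x hx, add_sub_cancel]
    exact hM x hx t ht

theorem exists_forall_isApproxSteady (hu : IsClassicalSolution Ω p T₀ T u G H u')
    (hΩ : IsOpen Ω) (hne : (frontier Ω).Nonempty) (hβ : IsBlowupExponent p β) (hT : T₀ < T)
    (hM : ∀ x ∈ Ω, ∀ t ∈ Ioc T₀ T, |u' x t| ≤ M)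
    (hG : ∀ x ∈ Ω, ∀ t ∈ Ioo T₀ T, ‖G x t‖ ≤ C₀ * (infDist x (frontier Ω) ^ (-β) + 1)) :
    ∃ C > 0, ∀ t ∈ Ioc T₀ T, IsApproxSteady Ω p β M C (fun x => u x t) (fun x => G x t) := by
  have hβ1 : 0 < 1 - β := sub_pos.2 hβ.lt_one
  refine ⟨2 * max C₀ 1 / (1 - β), by positivity, fun t ht =>
    hu.isApproxSteady hΩ hne hβ (by positivity) hM (fun x hx t ht hx1 => ?_) ht⟩
  have hpos := infDist_frontier_pos hΩ hne hx
  have hone : 1 ≤ infDist x (frontier Ω) ^ (-β) :=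
    Real.one_le_rpow_of_pos_of_le_one_of_nonpos hpos hx1 (neg_nonpos.2 hβ.pos.le)
  calc ‖G x t‖ ≤ C₀ * (infDist x (frontier Ω) ^ (-β) + 1) := hu.norm_gradient_le hT hG x hx t ht
    _ ≤ max C₀ 1 * (infDist x (frontier Ω) ^ (-β) + infDist x (frontier Ω) ^ (-β)) := by
        gcongr
        exact le_max_left _ _
    _ = 2 * max C₀ 1 * infDist x (frontier Ω) ^ (-β) := by ring

theorem abs_sub_le (hu : IsClassicalSolution Ω p T₀ T u G H u')
    (hM : ∀ x ∈ Ω, ∀ t ∈ Ioc T₀ T, |u' x t| ≤ M) {x : E} (hx : x ∈ Ω) {t : ℝ}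
    (ht : t ∈ Ioc T₀ T) : |u x t - u x T| ≤ M * (T - t) := by
  have hmem : ∀ s ∈ Icc t T, s ∈ Ioc T₀ T := fun s hs => ⟨ht.1.trans_le hs.1, hs.2⟩
  have := (convex_Icc t T).norm_image_sub_le_of_norm_hasDerivWithin_le
    (fun s hs => (hu.hasDerivAt s (hmem s hs) x hx).hasDerivWithinAt)
    (fun s hs => hM x hx s (hmem s hs)) (right_mem_Icc.2 ht.2) (left_mem_Icc.2 ht.2)
  rwa [Real.norm_eq_abs, Real.norm_eq_abs, abs_sub_comm t T,
    abs_of_nonneg (sub_nonneg.2 ht.2)] at this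

end IsClassicalSolution

end Slices

/-! ### Linear growth at the boundary bounds the gradient -/

section LinearGrowth

variable {E : Type*} [NormedAddCommGroup E] [InnerProductSpace ℝ E] [FiniteDimensional ℝ E]
  {Ω : Set E} {a x : E} {p β γ κ d r A C M : ℝ}

-- The equation bounds the Laplacian by a multiple of `d ^ (-(γ * p))`, so the interior estimate
-- on a ball of radius `d ^ κ / 2` improves the exponent `γ` to `κ - 1`.
theorem norm_gradient_le_rpow_of_bounds_on_closedBall {w : E → ℝ} {g : E → E} (hp : 0 ≤ p)
    (hγ : 0 ≤ γ) (hκ : 1 + γ * p ≤ 2 * κ) (hd : 0 < d) (hd1 : d ≤ 1) (hA : 0 ≤ A) (hC : 0 ≤ C)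
    (hM : 0 ≤ M)
    (hL : ∀ y ∈ closedBall x (d ^ κ / 2), ∃ L, HasLaplacianAt w (g y) L y ∧ |L + ‖g y‖ ^ p| ≤ M)
    (hw : ∀ y ∈ closedBall x (d ^ κ / 2), |w y| ≤ A * d)
    (hg : ∀ y ∈ closedBall x (d ^ κ / 2), ‖g y‖ ≤ C * d ^ (-γ)) :
    ‖g x‖ ≤ (2 * finrank ℝ E * A + (M + 1 + C ^ p) / 4) * d ^ (-(κ - 1)) := by
  have hρ : 0 < d ^ κ / 2 := by positivity
  have hlap (y) (hy : y ∈ closedBall x (d ^ κ / 2)) :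
      ∃ v L, HasLaplacianAt w v L y ∧ |L| < (M + 1 + C ^ p) * d ^ (-(γ * p)) := by
    obtain ⟨L, hLy, hLM⟩ := hL y hy
    refine ⟨g y, L, hLy, ?_⟩
    have hgp : ‖g y‖ ^ p ≤ C ^ p * d ^ (-(γ * p)) := by
      refine (Real.rpow_le_rpow (norm_nonneg _) (hg y hy) hp).trans_eq ?_
      rw [Real.mul_rpow hC (by positivity), ← Real.rpow_mul hd.le, neg_mul]
    have hone : M + 1 ≤ (M + 1) * d ^ (-(γ * p)) := le_mul_of_one_le_right (by positivity)
      (Real.one_le_rpow_of_pos_of_le_one_of_nonpos hd hd1 (neg_nonpos.2 (by positivity)))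
    have hgp0 : 0 ≤ ‖g y‖ ^ p := by positivity
    rw [abs_le] at hLM
    rw [abs_lt, add_mul]
    constructor <;> linarith
  obtain ⟨L, hLx, -⟩ := hL x (mem_closedBall_self hρ.le)
  have hpow : d ^ (-(γ * p)) * d ^ κ ≤ d ^ (-(κ - 1)) := by
    rw [← Real.rpow_add hd]
    exact Real.rpow_le_rpow_of_exponent_ge hd hd1 (by linarith)
  calc ‖g x‖ ≤ finrank ℝ E * (A * d) / (d ^ κ / 2)
        + (M + 1 + C ^ p) * d ^ (-(γ * p)) * (d ^ κ / 2) / 2 :=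
        norm_gradient_le_of_laplacian_bound hρ (by positivity) hw hlap hLx.hasGradientAt
    _ = 2 * finrank ℝ E * A * d ^ (-(κ - 1))
        + (M + 1 + C ^ p) / 4 * (d ^ (-(γ * p)) * d ^ κ) := by
        rw [neg_sub, Real.rpow_sub hd, Real.rpow_one]
        field_simp
        ring
    _ ≤ 2 * finrank ℝ E * A * d ^ (-(κ - 1)) + (M + 1 + C ^ p) / 4 * d ^ (-(κ - 1)) := by
        gcongr
    _ = _ := by ring

theorem exists_forall_norm_gradient_le_rpow (hΩ : IsOpen Ω) (ha : a ∈ frontier Ω) (hr : r ≤ 1)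
    (hp : 0 ≤ p) (hγ : 0 ≤ γ) (hκ1 : 1 ≤ κ) (hκ : 1 + γ * p ≤ 2 * κ) (hA : 0 ≤ A) (hC : 0 ≤ C)
    (hM : 0 ≤ M) :
    ∃ K ≥ 0, ∀ (w : E → ℝ) (g : E → E),
      (∀ x ∈ Ω, ∃ L, HasLaplacianAt w (g x) L x ∧ |L + ‖g x‖ ^ p| ≤ M) →
      (∀ x ∈ Ω, ‖x - a‖ ≤ r → |w x| ≤ A * infDist x (frontier Ω)) →
      (∀ x ∈ Ω, ‖x - a‖ ≤ r → ‖g x‖ ≤ C * infDist x (frontier Ω) ^ (-γ)) →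
      ∀ x ∈ Ω, ‖x - a‖ ≤ r / 2 → ‖g x‖ ≤ K * infDist x (frontier Ω) ^ (-(κ - 1)) := by
  refine ⟨2 * finrank ℝ E * (2 * A) + (M + 1 + (C * 2 ^ γ) ^ p) / 4, by positivity,
    fun w g hL hw hg x hx hxa => ?_⟩
  have hd := infDist_frontier_pos hΩ ⟨a, ha⟩ hx
  have hda : infDist x (frontier Ω) ≤ ‖x - a‖ :=
    (infDist_le_dist_of_mem ha).trans_eq (dist_eq_norm x a)
  have hball := ball_infDist_frontier_subset hΩ hx
  set d := infDist x (frontier Ω)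
  have hκd : d ^ κ ≤ d := by
    simpa using Real.rpow_le_rpow_of_exponent_ge hd (by linarith) hκ1
  have hnear (y) (hy : y ∈ closedBall x (d ^ κ / 2)) : y ∈ Ω ∧ d / 2 ≤ infDist y (frontier Ω) ∧
      infDist y (frontier Ω) ≤ 2 * d ∧ ‖y - a‖ ≤ r := by
    rw [mem_closedBall] at hy
    have hxy : d ≤ infDist y (frontier Ω) + dist x y := infDist_le_infDist_add_dist
    have hyx : infDist y (frontier Ω) ≤ d + dist y x := infDist_le_infDist_add_dist
    have := dist_triangle y x a
    rw [dist_eq_norm y a, dist_eq_norm x a] at this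
    rw [dist_comm] at hxy
    refine ⟨hball (mem_ball.2 (by linarith)), ?_, ?_, ?_⟩ <;> linarith
  refine norm_gradient_le_rpow_of_bounds_on_closedBall hp hγ hκ hd (by linarith) (by positivity)
    (by positivity) hM (fun y hy => hL y (hnear y hy).1) (fun y hy => ?_) fun y hy => ?_
  · obtain ⟨hyΩ, -, hyd, hya⟩ := hnear y hy
    exact (hw y hyΩ hya).trans (by nlinarith)
  · obtain ⟨hyΩ, hyd, -, hya⟩ := hnear y hy
    calc ‖g y‖ ≤ C * infDist y (frontier Ω) ^ (-γ) := hg y hyΩ hya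
      _ ≤ C * (d / 2) ^ (-γ) := mul_le_mul_of_nonneg_left
          (Real.rpow_le_rpow_of_nonpos (by positivity) hyd (neg_nonpos.2 hγ)) hC
      _ = C * 2 ^ γ * d ^ (-γ) := by
          rw [Real.div_rpow hd.le zero_le_two, Real.rpow_neg zero_le_two]
          field_simp

-- Two applications of the previous estimate: the exponent `β` improves to `β / 2`, then to `0`.
theorem exists_forall_norm_gradient_le_of_linear_growth (hΩ : IsOpen Ω) (ha : a ∈ frontier Ω)
    (hr : 0 ≤ r) (hr1 : r ≤ 1) (hβ : IsBlowupExponent p β) (hA : 0 ≤ A) (hC : 0 ≤ C)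
    (hM : 0 ≤ M) :
    ∃ K, ∀ (w : E → ℝ) (g : E → E), IsApproxSteady Ω p β M C w g →
      (∀ x ∈ Ω, ‖x - a‖ ≤ r → |w x| ≤ A * infDist x (frontier Ω)) →
      ∀ x ∈ Ω, ‖x - a‖ ≤ r / 4 → ‖g x‖ ≤ K := by
  have hβ0 := hβ.pos
  have hp : 0 ≤ p := by linarith [hβ.two_lt]
  have hβp := hβ.mul_eq
  obtain ⟨K₁, hK₁, h₁⟩ := exists_forall_norm_gradient_le_rpow (κ := 1 + β / 2) hΩ ha hr1 hp
    hβ0.le (by linarith) (by linarith) hA hC hM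
  obtain ⟨K₂, -, h₂⟩ := exists_forall_norm_gradient_le_rpow (r := r / 2) (γ := β / 2) (κ := 1)
    hΩ ha (by linarith) hp (by linarith) le_rfl (by linarith [hβ.lt_one]) hA hK₁ hM
  refine ⟨K₂, fun w g hw hlin x hx hxa => ?_⟩
  have hdist (y) (hya : ‖y - a‖ ≤ r) : infDist y (frontier Ω) ≤ 1 :=
    (infDist_le_dist_of_mem ha).trans (by rw [dist_eq_norm]; exact hya.trans hr1)
  have hhalf := h₁ w g hw.hasLaplacianAt hlin fun y hy hya =>
    hw.norm_gradient_le y hy (hdist y hya)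
  rw [show -(1 + β / 2 - 1) = -(β / 2) by ring] at hhalf
  simpa using h₂ w g hw.hasLaplacianAt (fun y hy hya => hlin y hy (by linarith)) hhalf x hx
    (by linarith)

end LinearGrowth

/-! ### The lower bound at a gradient blow-up point -/

section LowerBound

variable {E : Type*} [NormedAddCommGroup E] {Ω : Set E} {a ν : E} {p β η s R ε A C M Λ T₀ T : ℝ}
  {w w₀ : E → ℝ}

/-- The gradient `G` is unbounded in `Ω` near the point `a` as `t → T⁻`. -/
def IsGradientBlowupPoint (Ω : Set E) (G : E → ℝ → E) (T : ℝ) (a : E) : Prop :=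
  ∀ K : ℝ, ∃ᶠ q in 𝓝 a ×ˢ 𝓝[<] T, q.1 ∈ Ω ∧ K ≤ ‖G q.1 q.2‖

theorem isGradientBlowupPoint_of_forall_exists {G : E → ℝ → E}
    (h : ∀ K : ℝ, ∀ η > 0, ∃ x ∈ Ω, ∃ t ∈ Ioo (T - η) T,
      dist x a < η ∧ K ≤ ‖G x t‖) : IsGradientBlowupPoint Ω G T a := by
  intro K
  rw [(nhds_basis_ball.prod (nhdsLT_basis T)).frequently_iff]
  rintro ⟨ε, l⟩ ⟨hε, hl⟩
  obtain ⟨x, hx, t, ht, hxa, hK⟩ := h K (min ε (T - l)) (lt_min hε (sub_pos.2 hl))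
  have : l < t := by linarith [ht.1, min_le_right ε (T - l)]
  exact ⟨(x, t), ⟨hxa.trans_le (min_le_left _ _), this, ht.2⟩, hx, hK⟩

theorem abs_apply_le_mul_infDist_of_frontier [ProperSpace E] (ha : a ∈ frontier Ω)
    (h : ∀ b ∈ frontier Ω, ‖b - a‖ ≤ s → ∀ x ∈ closure Ω, ‖x - b‖ ≤ s / 4 →
      |w x| ≤ A * ‖x - b‖) :
    ∀ x ∈ Ω, ‖x - a‖ ≤ s / 8 → |w x| ≤ A * infDist x (frontier Ω) := by
  intro x hx hxa
  obtain ⟨b, hb, hxb⟩ := (isClosed_frontier (s := Ω)).exists_infDist_eq_dist ⟨a, ha⟩ x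
  have hle : infDist x (frontier Ω) ≤ dist x a := infDist_le_dist_of_mem ha
  have hba := dist_triangle_left b a x
  rw [← dist_eq_norm] at hxa
  have hs := dist_nonneg.trans hxa
  rw [hxb] at hle ⊢
  rw [dist_eq_norm x b]
  refine h b hb ?_ x (subset_closure hx) ?_ <;> rw [← dist_eq_norm] <;> linarith

variable [InnerProductSpace ℝ E]

theorem rescale_le_rescale_add {x : E} (hs : 0 < s)
    (h : |w (a + s • x) - w₀ (a + s • x)| ≤ η * s ^ (1 - β)) :
    rescale β a s w x ≤ rescale β a s w₀ x + η := by
  have hcancel : s ^ (-(1 - β)) * (η * s ^ (1 - β)) = η := by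
    rw [mul_left_comm, ← Real.rpow_add hs, neg_add_cancel, Real.rpow_zero, mul_one]
  have := mul_le_mul_of_nonneg_left (abs_le.1 h).2 (Real.rpow_nonneg hs.le (-(1 - β)))
  rw [hcancel, mul_sub] at this
  unfold rescale
  linarith

theorem abs_apply_le_of_abs_rescale_le (hs : 0 < s)
    (h : ∀ b ∈ frontier ((fun y => a + s • y) ⁻¹' Ω), ‖b‖ ≤ 1 →
      ∀ x ∈ closure ((fun y => a + s • y) ⁻¹' Ω), ‖x - b‖ ≤ 1 / 4 →
        |rescale β a s w x| ≤ A * ‖x - b‖) :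
    ∀ b ∈ frontier Ω, ‖b - a‖ ≤ s → ∀ x ∈ closure Ω, ‖x - b‖ ≤ s / 4 →
      |w x| ≤ A * s ^ (-β) * ‖x - b‖ := by
  intro b hb hba x hx hxb
  let e : E ≃ₜ E := (Homeomorph.smulOfNeZero s hs.ne').trans (Homeomorph.addLeft a)
  have he (z : E) : a + s • s⁻¹ • (z - a) = z := by rw [smul_inv_smul₀ hs.ne', add_sub_cancel]
  have hnorm (z : E) : ‖s⁻¹ • z‖ = ‖z‖ / s := by
    rw [norm_smul, norm_inv, Real.norm_of_nonneg hs.le, inv_mul_eq_div]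
  have hsub : s⁻¹ • (x - a) - s⁻¹ • (b - a) = s⁻¹ • (x - b) := by
    rw [← smul_sub, sub_sub_sub_cancel_right]
  have hb' : s⁻¹ • (b - a) ∈ frontier (e ⁻¹' Ω) := by
    rw [← e.preimage_frontier]
    change a + s • s⁻¹ • (b - a) ∈ frontier Ω
    rwa [he]
  have hx' : s⁻¹ • (x - a) ∈ closure (e ⁻¹' Ω) := by
    rw [← e.preimage_closure]
    change a + s • s⁻¹ • (x - a) ∈ closure Ω
    rwa [he]
  have := h _ hb' (by rwa [hnorm, div_le_one hs]) _ hx'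
    (by rw [hsub, hnorm, div_le_iff₀ hs]; linarith)
  rw [rescale, he, hsub, hnorm, abs_mul, abs_of_pos (Real.rpow_pos_of_pos hs _),
    Real.rpow_neg hs.le, inv_mul_le_iff₀ (Real.rpow_pos_of_pos hs _)] at this
  refine this.trans_eq ?_
  rw [sub_eq_add_neg, Real.rpow_add hs, Real.rpow_one]
  field_simp

variable [FiniteDimensional ℝ E] {r : E → ℝ}

theorem IsDefiningFunctionAt.eventually_isHalfSpaceDefiningFunction (ha : a ∈ frontier Ω)
    (hr : IsDefiningFunctionAt Ω ν r Λ a) (hR : 0 < R) (hε : 0 < ε) :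
    ∀ᶠ s in 𝓝[>] 0, IsHalfSpaceDefiningFunction ν R ε ((fun y => a + s • y) ⁻¹' Ω)
      (fun y => s⁻¹ * r (a + s • y)) := by
  have hra : r a = 0 := hr.mem_frontier_iff.self_of_nhds.1 ha
  have hlin := (hasGradientAt_iff_hasFDerivAt.1 hr.hasGradientAt).isLittleO.def
    (show 0 < ε / R by positivity)
  filter_upwards [Ioo_mem_nhdsGT (show 0 < ε / (|Λ| + 1) by positivity),
    eventually_forall_add_smul hr.mem_iff R, eventually_forall_add_smul hr.mem_frontier_iff R,
    eventually_forall_add_smul (hr.hasLaplacianAt ε hε) R, eventually_forall_add_smul hlin R]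
    with s ⟨hs, hsΛ⟩ hmem hfrontier hlap happrox
  rw [lt_div_iff₀ (by positivity)] at hsΛ
  refine ⟨fun x hx => ?_, fun x hxD hx => ?_, fun x hxD hx => ?_, fun x hx => ?_⟩
  · obtain ⟨v, L, hL, hv, hLΛ⟩ := hlap x hx
    refine ⟨_, _, (hL.comp_const_add_smul a s).const_mul s⁻¹, ?_, ?_⟩
    · rwa [inv_smul_smul₀ hs.ne']
    · rw [show s⁻¹ * (s ^ 2 * L) = s * L by field_simp, abs_mul, abs_of_pos hs]
      nlinarith [le_abs_self Λ]
  · exact mul_pos (inv_pos.2 hs) ((hmem x hx).1 hxD)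
  · have : a + s • x ∈ frontier Ω :=
      (show Continuous fun y : E => a + s • y by fun_prop).frontier_preimage_subset Ω hxD
    rw [(hfrontier x hx).1 this, mul_zero]
  · have : |r (a + s • x) - s * ⟪ν, x⟫| ≤ ε / R * (s * ‖x‖) := by
      simpa [hra, inner_smul_right, norm_smul, abs_of_pos hs] using happrox x hx
    rw [show s⁻¹ * r (a + s • x) - ⟪ν, x⟫ = s⁻¹ * (r (a + s • x) - s * ⟪ν, x⟫) by field_simp,
      abs_mul, abs_of_pos (inv_pos.2 hs), inv_mul_le_iff₀ hs]
    calc |r (a + s • x) - s * ⟪ν, x⟫| ≤ ε / R * (s * R) := this.trans (by gcongr)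
      _ = s * ε := by field_simp

-- The barrier argument is run for a slice `w` at an earlier time, the smallness being known only
-- for the final slice `w₀`.
theorem IsDefiningFunctionAt.exists_eventually_abs_apply_le_infDist (hΩ : IsOpen Ω)
    (ha : a ∈ frontier Ω) (hν : ‖ν‖ = 1) (hβ : IsBlowupExponent p β)
    (hr : IsDefiningFunctionAt Ω ν r Λ a) (hM : 0 ≤ M) (hC : 0 < C) (hη : 0 < η)
    (hη1 : η < profile β 1) :
    ∃ A > 0, ∀ᶠ s in 𝓝[>] 0, ∀ w g w₀ g₀, IsApproxSteady Ω p β M C w g →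
      IsApproxSteady Ω p β M C w₀ g₀ → rescale β a s w₀ ν ≤ profile β 1 - 3 * η →
      (∀ x ∈ Ω, |w x - w₀ x| ≤ η * s ^ (1 - β)) →
      ∀ x ∈ Ω, ‖x - a‖ ≤ s / 8 → |w x| ≤ A * s ^ (-β) * infDist x (frontier Ω) := by
  obtain ⟨R₁, hR₁, ε₁, hε₁, A, hA, hgrowth⟩ :=
    exists_forall_abs_apply_le_mul_norm_sub hν hβ (show 0 < 2 * C by positivity) hη hη1
  obtain ⟨R₂, -, ε₂, hε₂, htan⟩ := exists_forall_apply_le_add_of_inner_eq_one hν hβ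
    (show 0 < 2 * C by positivity) hη (max R₁ 1)
  set ε := min (min ε₁ ε₂) (1 / 2)
  have hε : 0 < ε := by positivity
  have hmono {D : Set E} {R' ε' : ℝ} {w : E → ℝ} {g : E → E} (hR : R' ≤ max R₁ R₂) (hε' : ε ≤ ε')
      (h : IsHalfSpaceApproxSteady ν p β (2 * C) (max R₁ R₂) ε D w g) :=
    h.mono hβ.lt_one.le (by positivity) hε.le hR hε'
  refine ⟨A, hA, ?_⟩
  filter_upwards [self_mem_nhdsWithin, hr.eventually_isHalfSpaceDefiningFunction ha hR₁ hε₁,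
    (hr.hasInnerNormalAt hΩ ha).eventually_isHalfSpaceApproxSteady (R := max R₁ R₂) hΩ ha hν hβ
      hM hC.le (lt_max_of_lt_left hR₁) hε] with s hs hdef hsteady w g w₀ g₀ hw hw₀ hval hclose
  have hW := hsteady w g hw
  have hνν : ⟪ν, ν⟫ = (1 : ℝ) := by rw [real_inner_self_eq_norm_sq, hν, one_pow]
  have htop (x : E) (hx : ⟪ν, x⟫ = (1 : ℝ)) (hxR : ‖x‖ ≤ R₁) :
      rescale β a s w x ≤ profile β 1 - η := by
    have hmem : a + s • x ∈ Ω := by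
      by_contra hout
      have := hW.inner_le_of_notMem x hout (hxR.trans (le_max_left _ _))
      have : ε ≤ 1 / 2 := min_le_right _ _
      linarith
    have h₀ := htan _ _ _ (hmono (le_max_right _ _) ((min_le_left _ _).trans (min_le_right _ _))
      (hsteady w₀ g₀ hw₀)) ν x hνν hx (hν.trans_le (le_max_right _ _))
      (hxR.trans (le_max_left _ _))
    linarith [rescale_le_rescale_add hs (hclose _ hmem)]
  exact abs_apply_le_mul_infDist_of_frontier ha (abs_apply_le_of_abs_rescale_le hs
    (hgrowth _ _ _ _ (hmono (le_max_left _ _) ((min_le_left _ _).trans (min_le_left _ _)) hW)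
      hdef htop))

variable {u : E → ℝ → ℝ} {G : E → ℝ → E}

theorem IsDefiningFunctionAt.eventually_profile_one_sub_le_rescale (hΩ : IsOpen Ω)
    (ha : a ∈ frontier Ω) (hν : ‖ν‖ = 1) (hβ : IsBlowupExponent p β)
    (hr : IsDefiningFunctionAt Ω ν r Λ a) (hM : 0 ≤ M) (hC : 0 < C) (hT : T₀ < T)
    (hu : ∀ t ∈ Ioc T₀ T, IsApproxSteady Ω p β M C (fun x => u x t) (fun x => G x t))
    (hlip : ∀ x ∈ Ω, ∀ t ∈ Ioc T₀ T, |u x t - u x T| ≤ M * (T - t))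
    (hG : IsGradientBlowupPoint Ω G T a) (hη : 0 < η) :
    ∀ᶠ s in 𝓝[>] 0, profile β 1 - η ≤ rescale β a s (fun x => u x T) ν := by
  have hprofile := profile_pos (τ := 1) hβ.pos hβ.lt_one one_pos
  set η' := min (η / 3) (profile β 1 / 2)
  have hη'0 : 0 < η' := by positivity
  obtain ⟨A, hA, hgrowth⟩ := hr.exists_eventually_abs_apply_le_infDist hΩ ha hν hβ hM hC hη'0
    ((min_le_right _ _).trans_lt (half_lt_self hprofile))
  filter_upwards [hgrowth, Ioo_mem_nhdsGT one_pos] with s hs ⟨hs0, hs1⟩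
  by_contra! hlt
  have hval : rescale β a s (fun x => u x T) ν ≤ profile β 1 - 3 * η' := by
    linarith [min_le_left (η / 3) (profile β 1 / 2)]
  obtain ⟨K, hK⟩ := exists_forall_norm_gradient_le_of_linear_growth (r := s / 8) (C := C) hΩ ha
    (by positivity) (by linarith) hβ (show 0 ≤ A * s ^ (-β) by positivity) hC.le hM
  have htime : ∀ᶠ t in 𝓝[<] T, M * (T - t) ≤ η' * s ^ (1 - β) := by
    have hlim : Tendsto (fun t => M * (T - t)) (𝓝[<] T) (𝓝 (M * (T - T))) :=
      (Continuous.tendsto (by fun_prop) T).mono_left nhdsWithin_le_nhds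
    rw [sub_self, mul_zero] at hlim
    exact hlim.eventually_le_const (by positivity)
  have hnear : ∀ᶠ x in 𝓝 a, ‖x - a‖ ≤ s / 8 / 4 := by
    simp_rw [← dist_eq_norm]
    exact closedBall_mem_nhds a (by positivity)
  obtain ⟨⟨x, t⟩, ⟨hx, hxt⟩, hxa, htM, htT⟩ := ((hG (K + 1)).and_eventually
    (hnear.prod_mk (htime.and (Ioo_mem_nhdsLT hT)))).exists
  have ht : t ∈ Ioc T₀ T := ⟨htT.1, htT.2.le⟩
  have hbound := hK _ _ (hu t ht) (hs _ _ _ _ (hu t ht) (hu T ⟨hT, le_rfl⟩) hval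
    fun y hy => (hlip y hy t ht).trans htM) x hx hxa
  linarith [show K + 1 ≤ ‖G x t‖ from hxt]

end LowerBound

/-! ### The final profile -/

section FinalProfile

theorem eventually_forall_mul {P : ℝ → Prop} (h : ∀ᶠ s in 𝓝[>] 0, P s) (K : ℝ) :
    ∀ᶠ s in 𝓝[>] 0, ∀ ℓ ∈ Ioc 0 K, P (s * ℓ) := by
  obtain ⟨b, hb, hP⟩ := mem_nhdsGT_iff_exists_Ioo_subset.1 h
  rcases le_or_gt K 0 with hK | hK
  · exact Eventually.of_forall fun s ℓ hℓ => absurd (hℓ.1.trans_le hℓ.2) hK.not_gt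
  filter_upwards [Ioo_mem_nhdsGT (div_pos (mem_Ioi.1 hb) hK)] with s hs ℓ hℓ
  refine hP ⟨mul_pos hs.1 hℓ.1, ?_⟩
  calc s * ℓ ≤ s * K := mul_le_mul_of_nonneg_left hℓ.2 hs.1.le
    _ < b := (lt_div_iff₀ hK).1 hs.2

variable {E : Type*} [NormedAddCommGroup E] [InnerProductSpace ℝ E] {Ω D : Set E} {a ν : E}
  {p β M C R ε η θ s : ℝ} {w : E → ℝ} {g : E → E}

theorem rescale_mul_inv_smul {ℓ : ℝ} (hs : 0 ≤ s) (hℓ : 0 < ℓ) (y : E) :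
    ℓ ^ (1 - β) * rescale β a (s * ℓ) w (ℓ⁻¹ • y) = rescale β a s w y := by
  rw [rescale, rescale, mul_smul, smul_inv_smul₀ hℓ.ne', Real.mul_rpow hs hℓ.le,
    Real.rpow_neg hℓ.le]
  field_simp

theorem inner_norm_bounds_of_mem_closedBall (hν : ‖ν‖ = 1) {y : E} (hy : y ∈ closedBall ν (1 / 2)) :
    1 / 2 ≤ ⟪ν, y⟫ ∧ ⟪ν, y⟫ ≤ 3 / 2 ∧ ‖y‖ ≤ 3 / 2 := by
  rw [mem_closedBall, dist_eq_norm] at hy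
  have hinner := (abs_inner_le_norm_of_norm_eq_one hν (y - ν)).trans hy
  rw [inner_sub_right, real_inner_self_eq_norm_sq, hν, one_pow, abs_le] at hinner
  refine ⟨by linarith, by linarith, ?_⟩
  linarith [norm_le_norm_add_norm_sub' y ν]

variable [FiniteDimensional ℝ E]

theorem HasInnerNormalAt.eventually_abs_rescale_sub_profile_one_le (hΩ : IsOpen Ω)
    (ha : a ∈ frontier Ω) (hν : ‖ν‖ = 1) (hflat : HasInnerNormalAt Ω ν a)
    (hβ : IsBlowupExponent p β) (hM : 0 ≤ M) (hC : 0 < C) (hw : IsApproxSteady Ω p β M C w g)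
    (hlow : ∀ η > 0, ∀ᶠ s in 𝓝[>] 0, profile β 1 - η ≤ rescale β a s w ν) (K : ℝ) (hη : 0 < η) :
    ∀ᶠ s in 𝓝[>] 0, ∀ x, ⟪ν, x⟫ = 1 → ‖x‖ ≤ K → |rescale β a s w x - profile β 1| ≤ η := by
  have hC2 : 0 < 2 * C := by positivity
  obtain ⟨R₁, hR₁, ε₁, hε₁, hup⟩ := exists_forall_apply_le_profile_add hν hβ hC2 (half_pos hη)
  obtain ⟨R₂, -, ε₂, hε₂, htan⟩ :=
    exists_forall_apply_le_add_of_inner_eq_one hν hβ hC2 (half_pos hη) (max K 1)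
  filter_upwards [hlow _ (half_pos hη), hflat.eventually_isHalfSpaceApproxSteady (R := max R₁ R₂)
    hΩ ha hν hβ hM hC.le (lt_max_of_lt_left hR₁) (lt_min hε₁ hε₂)] with s hs hsteady x hx hxK
  have hmono {R' ε' : ℝ} (hR : R' ≤ max R₁ R₂) (hε : min ε₁ ε₂ ≤ ε') :=
    (hsteady w g hw).mono hβ.lt_one.le hC2.le (lt_min hε₁ hε₂).le hR hε
  have hνν : ⟪ν, ν⟫ = (1 : ℝ) := by rw [real_inner_self_eq_norm_sq, hν, one_pow]
  have hνK : ‖ν‖ ≤ max K 1 := hν.trans_le (le_max_right _ _)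
  have hosc := htan _ _ _ (hmono (le_max_right _ _) (min_le_right _ _))
  have hxν := hosc ν x hνν hx hνK (hxK.trans (le_max_left _ _))
  have hνx := hosc x ν hx hνν (hxK.trans (le_max_left _ _)) hνK
  have hνup := hup _ _ _ (hmono (le_max_left _ _) (min_le_left _ _))
  exact abs_le.2 ⟨by linarith, by linarith⟩

-- The scale is shifted from `s` to `s * ⟪ν, y⟫`, so that `y` moves to the hyperplane `⟪ν, x⟫ = 1`.
theorem HasInnerNormalAt.eventually_abs_rescale_sub_profile_le (hΩ : IsOpen Ω)
    (ha : a ∈ frontier Ω) (hν : ‖ν‖ = 1) (hflat : HasInnerNormalAt Ω ν a)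
    (hβ : IsBlowupExponent p β) (hM : 0 ≤ M) (hC : 0 < C) (hw : IsApproxSteady Ω p β M C w g)
    (hlow : ∀ η > 0, ∀ᶠ s in 𝓝[>] 0, profile β 1 - η ≤ rescale β a s w ν) (hη : 0 < η) :
    ∀ᶠ s in 𝓝[>] 0, ∀ y ∈ closedBall ν (1 / 2), |rescale β a s w y - profile β ⟪ν, y⟫| ≤ η := by
  have hline := hflat.eventually_abs_rescale_sub_profile_one_le hΩ ha hν hβ hM hC hw hlow 3
    (half_pos hη)
  filter_upwards [eventually_forall_mul hline 2, self_mem_nhdsWithin] with s hs hs0 y hy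
  obtain ⟨hlow, hup, hnorm⟩ := inner_norm_bounds_of_mem_closedBall hν hy
  have hℓ : 0 < ⟪ν, y⟫ := by linarith
  have hβ1 := sub_pos.2 hβ.lt_one
  have hpow : ⟪ν, y⟫ ^ (1 - β) ≤ 2 :=
    calc ⟪ν, y⟫ ^ (1 - β) ≤ (2 : ℝ) ^ (1 - β) :=
          Real.rpow_le_rpow hℓ.le (by linarith) hβ1.le
      _ ≤ 2 := Real.rpow_le_self_of_one_le one_le_two (by linarith [hβ.pos])
  have hprof := hs ⟪ν, y⟫ ⟨hℓ, by linarith⟩ (⟪ν, y⟫⁻¹ • y)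
    (by rw [inner_smul_right, inv_mul_cancel₀ hℓ.ne'])
    (by rw [norm_smul, norm_inv, Real.norm_of_nonneg hℓ.le, inv_mul_le_iff₀ hℓ]; linarith)
  rw [← rescale_mul_inv_smul (mem_Ioi.1 hs0).le hℓ, profile_eq_profile_one_mul β ⟪ν, y⟫,
    mul_comm (profile β 1), ← mul_sub, abs_mul, abs_of_pos (Real.rpow_pos_of_pos hℓ _)]
  calc _ ≤ 2 * (η / 2) := mul_le_mul hpow hprof (abs_nonneg _) zero_le_two
    _ = η := by ring

theorem IsHalfSpaceApproxSteady.norm_gradient_sub_smul_le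
    (h : IsHalfSpaceApproxSteady ν p β C 2 (1 / 4) D w g) (hν : ‖ν‖ = 1)
    (hβ : IsBlowupExponent p β) (hC : 0 ≤ C) (hθ : 0 < θ) (hθ1 : θ ≤ 1 / 2) (hη : 0 ≤ η)
    (hw : ∀ y ∈ closedBall ν θ, |w y - profile β ⟪ν, y⟫| ≤ η) :
    ‖g ν - β ^ β • ν‖ ≤ finrank ℝ E * η / θ
      + (1 + (C * (1 / 2) ^ (-β)) ^ p + profileDeriv β (1 / 2) ^ p) * θ / 2 := by
  have hp : 0 ≤ p := by linarith [hβ.two_lt]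
  have hlap (y : E) (hy : y ∈ closedBall ν θ) : ∃ L,
      HasLaplacianAt (fun y => w y - profile β ⟪ν, y⟫) (g y - profileDeriv β ⟪ν, y⟫ • ν) L y ∧
        |L| < 1 + (C * (1 / 2) ^ (-β)) ^ p + profileDeriv β (1 / 2) ^ p := by
    obtain ⟨hlow, -, hnorm⟩ :=
      inner_norm_bounds_of_mem_closedBall hν (closedBall_subset_closedBall hθ1 hy)
    have hy0 : 0 < ⟪ν, y⟫ := by linarith
    have hyD : y ∈ D := by
      by_contra hout
      linarith [h.inner_le_of_notMem y hout (by linarith)]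
    obtain ⟨L, hL, hLε⟩ := h.hasLaplacianAt y hyD
    have hprofile := hasLaplacianAt_const_mul_profile hβ one_pos (HasLaplacianAt.inner ν y) hy0
    simp only [one_mul, Real.one_rpow, hν, one_pow, mul_one, mul_zero, add_zero] at hprofile
    refine ⟨_, hL.sub hprofile, ?_⟩
    have hg : ‖g y‖ ^ p ≤ (C * (1 / 2) ^ (-β)) ^ p := by
      refine Real.rpow_le_rpow (norm_nonneg _) ((h.norm_gradient_le y hyD (by linarith) hy0
        (by linarith)).trans (mul_le_mul_of_nonneg_left ?_ hC)) hp
      exact Real.rpow_le_rpow_of_nonpos one_half_pos hlow (neg_nonpos.2 hβ.pos.le)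
    have hU : profileDeriv β ⟪ν, y⟫ ^ p ≤ profileDeriv β (1 / 2) ^ p :=
      Real.rpow_le_rpow (profileDeriv_pos hβ.pos hy0).le
        (profileDeriv_le_profileDeriv hβ.pos.le one_half_pos hlow) hp
    have : 0 ≤ profileDeriv β ⟪ν, y⟫ ^ p := Real.rpow_nonneg (profileDeriv_pos hβ.pos hy0).le _
    have : 0 ≤ ‖g y‖ ^ p := by positivity
    rw [abs_le] at hLε
    exact abs_lt.2 ⟨by linarith, by linarith⟩
  obtain ⟨_, hL, -⟩ := hlap ν (mem_closedBall_self hθ.le)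
  have hgrad := hL.hasGradientAt
  rw [real_inner_self_eq_norm_sq, hν, one_pow, profileDeriv_one] at hgrad
  exact norm_gradient_le_of_laplacian_bound hθ hη hw (fun y hy => ⟨_, hlap y hy⟩) hgrad

theorem HasInnerNormalAt.tendsto_rpow_smul_gradient (hΩ : IsOpen Ω)
    (ha : a ∈ frontier Ω) (hν : ‖ν‖ = 1) (hflat : HasInnerNormalAt Ω ν a)
    (hβ : IsBlowupExponent p β) (hM : 0 ≤ M) (hC : 0 < C) (hw : IsApproxSteady Ω p β M C w g)
    (hlow : ∀ η > 0, ∀ᶠ s in 𝓝[>] 0, profile β 1 - η ≤ rescale β a s w ν) :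
    Tendsto (fun s : ℝ => s ^ β • g (a + s • ν)) (𝓝[>] 0) (𝓝 (β ^ β • ν)) := by
  have : Nontrivial E := ⟨ν, 0, by rintro rfl; simp at hν⟩
  have hn : (0 : ℝ) < finrank ℝ E := mod_cast Module.finrank_pos
  have hU := profileDeriv_pos hβ.pos one_half_pos
  set N := 1 + (2 * C * (1 / 2) ^ (-β)) ^ p + profileDeriv β (1 / 2) ^ p
  have hN : 0 < N := by positivity
  rw [tendsto_iff_norm_sub_tendsto_zero]
  refine tendsto_order.2 ⟨fun b hb => Eventually.of_forall fun s => hb.trans_le (norm_nonneg _),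
    fun ε hε => ?_⟩
  set θ := min (1 / 2) (ε / N)
  have hθ : 0 < θ := by positivity
  have hNθ : N * θ ≤ ε := by
    rw [mul_comm]
    exact (le_div_iff₀ hN).1 (min_le_right _ _)
  have hη : 0 < ε * θ / (4 * finrank ℝ E) := by positivity
  filter_upwards [hflat.eventually_abs_rescale_sub_profile_le hΩ ha hν hβ hM hC hw hlow hη,
    hflat.eventually_isHalfSpaceApproxSteady (R := 2) (ε := 1 / 4) hΩ ha hν hβ hM hC.le two_pos
      (by norm_num)] with s hclose hsteady
  have hgrad := (hsteady w g hw).norm_gradient_sub_smul_le hν hβ (by positivity) hθ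
    (min_le_left _ _) hη.le fun y hy =>
      hclose y (closedBall_subset_closedBall (min_le_left _ _) hy)
  calc _ ≤ finrank ℝ E * (ε * θ / (4 * finrank ℝ E)) / θ + N * θ / 2 := hgrad
    _ = ε / 4 + N * θ / 2 := by field_simp
    _ < ε := by linarith

end FinalProfile

/-! ### Convergence to the profile -/

section Main

theorem isClassicalSolution_of_sum_inner_single {n : ℕ} {Ω : Set (EuclideanSpace ℝ (Fin n))}
    {p T₀ T : ℝ} {u u' : EuclideanSpace ℝ (Fin n) → ℝ → ℝ}
    {G : EuclideanSpace ℝ (Fin n) → ℝ → EuclideanSpace ℝ (Fin n)}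
    {H : EuclideanSpace ℝ (Fin n) → ℝ → EuclideanSpace ℝ (Fin n) →L[ℝ] EuclideanSpace ℝ (Fin n)}
    (hu : ContinuousOn (fun q : EuclideanSpace ℝ (Fin n) × ℝ => u q.1 q.2)
      (closure Ω ×ˢ Icc T₀ T))
    (hu0 : ∀ b ∈ frontier Ω, ∀ t ∈ Icc T₀ T, u b t = 0)
    (hG : ∀ t ∈ Ioc T₀ T, ∀ x ∈ Ω, HasGradientAt (fun y => u y t) (G x t) x)
    (hH : ∀ t ∈ Ioc T₀ T, ∀ x ∈ Ω, HasFDerivAt (fun y => G y t) (H x t) x)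
    (hu' : ∀ t ∈ Ioc T₀ T, ∀ x ∈ Ω, HasDerivAt (fun s => u x s) (u' x t) t)
    (hGc : ContinuousOn (fun q : EuclideanSpace ℝ (Fin n) × ℝ => G q.1 q.2) (Ω ×ˢ Ioc T₀ T))
    (heq : ∀ t ∈ Ioc T₀ T, ∀ x ∈ Ω, u' x t - ∑ i : Fin n,
      ⟪H x t (EuclideanSpace.single i (1 : ℝ)), EuclideanSpace.single i (1 : ℝ)⟫ = ‖G x t‖ ^ p) :
    IsClassicalSolution Ω p T₀ T u G H u' where
  continuousOn t ht := hu.comp (f := fun x => (x, t)) (by fun_prop)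
    fun x hx => ⟨hx, Ioc_subset_Icc_self ht⟩
  eq_zero t ht b hb := hu0 b hb t (Ioc_subset_Icc_self ht)
  hasGradientAt := hG
  hasFDerivAt := hH
  hasDerivAt := hu'
  continuousOn_gradient x hx := hGc.comp (f := fun t => (x, t)) (by fun_prop) fun t ht => ⟨hx, ht⟩
  equation t ht x hx := by
    rw [← heq t ht x hx, LinearMap.trace_eq_sum_inner _ (EuclideanSpace.basisFun (Fin n) ℝ)]
    simp only [EuclideanSpace.basisFun_apply, ContinuousLinearMap.coe_coe, real_inner_comm]

theorem stmt7_general {E : Type*} [NormedAddCommGroup E] [InnerProductSpace ℝ E]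
    [FiniteDimensional ℝ E] {p β : ℝ} (hβ : IsBlowupExponent p β) {Ω : Set E} (hΩ : IsOpen Ω)
    {a ν : E} (ha : a ∈ frontier Ω) (hC2 : IsC2BoundaryAt Ω a) (hν : ‖ν‖ = 1) {ρ : ℝ} (hρ : 0 < ρ)
    (hball : ball (a + ρ • ν) ρ ⊆ Ω) {T₀ T : ℝ} (hT : T₀ < T) {u u' : E → ℝ → ℝ} {G : E → ℝ → E}
    {H : E → ℝ → E →L[ℝ] E} (hu : IsClassicalSolution Ω p T₀ T u G H u') {M C₀ : ℝ}
    (hM : ∀ x ∈ Ω, ∀ t ∈ Ioc T₀ T, |u' x t| ≤ M)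
    (hG : ∀ x ∈ Ω, ∀ t ∈ Ioo T₀ T, ‖G x t‖ ≤ C₀ * (infDist x (frontier Ω) ^ (-β) + 1))
    (hblowup : IsGradientBlowupPoint Ω G T a) :
    Tendsto (fun s : ℝ => s ^ β • G (a + s • ν) T) (𝓝[>] 0) (𝓝 (β ^ β • ν)) := by
  have hTmem : T ∈ Ioc T₀ T := right_mem_Ioc.2 hT
  have hM0 : 0 ≤ M := (abs_nonneg _).trans (hM _ (hball (mem_ball_self hρ)) T hTmem)
  obtain ⟨C, hC, hslice⟩ := hu.exists_forall_isApproxSteady hΩ ⟨a, ha⟩ hβ hT hM hG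
  obtain ⟨r, Λ, hr⟩ := exists_isDefiningFunctionAt hC2 ha hν hρ hball
  exact (hr.hasInnerNormalAt hΩ ha).tendsto_rpow_smul_gradient hΩ ha hν hβ hM0 hC
    (hslice T hTmem) fun η hη => hr.eventually_profile_one_sub_le_rescale hΩ ha hν hβ hM0 hC hT
      hslice (fun x hx t ht => hu.abs_sub_le hM hx ht) hblowup hη

end Main

theorem stmt7 {n : ℕ} (hn : 1 ≤ n)
    -- the exponents and constants
    (p β cp dp : ℝ) (hp : 2 < p) (hβ : β = 1 / (p - 1))
    (hcp : cp = β ^ β / (1 - β)) (hdp : dp = β ^ β)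
    -- the bounded domain Ω with C² boundary
    (Ω : Set (EuclideanSpace ℝ (Fin n))) (hΩo : IsOpen Ω) (hΩb : Bornology.IsBounded Ω) (hΩc2 : IsC2Boundary Ω)
    -- the distance to the boundary
    (δ : EuclideanSpace ℝ (Fin n) → ℝ) (hδ : ∀ x, δ x = infDist x (frontier Ω))
    -- δ₀ and the boundary neighborhood Ωδ = {x ∈ Ω : δ(x) < δ₀}
    (δ₀ : ℝ) (hδ₀ : 0 < δ₀)
    (Ωδ : Set (EuclideanSpace ℝ (Fin n))) (hΩδ : Ωδ = {x ∈ Ω | δ x < δ₀})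
    -- δ is C² on Ωδ
    (hδC2 : ContDiffOn ℝ 2 δ Ωδ)
    -- every x ∈ Ωδ has a unique nearest boundary point P x
    (P : EuclideanSpace ℝ (Fin n) → EuclideanSpace ℝ (Fin n))
    (hP : ∀ x ∈ Ωδ, P x ∈ frontier Ω ∧ dist x (P x) = δ x ∧
      ∀ b ∈ frontier Ω, dist x b = δ x → b = P x)
    -- interior sphere condition of radius δ₀ at every boundary point
    (hsph : ∀ b ∈ frontier Ω, ∃ y, ball y δ₀ ⊆ Ω ∧ dist y b = δ₀)
    -- the inward unit normal field ν
    (ν : EuclideanSpace ℝ (Fin n) → EuclideanSpace ℝ (Fin n))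
    (hν1 : ∀ b ∈ frontier Ω, ‖ν b‖ = 1 ∧
      ∀ s ∈ Ioo (0 : ℝ) δ₀, b + s • ν b ∈ Ω ∧ δ (b + s • ν b) = s)
    (hν2 : ∀ x ∈ Ωδ, ν x = ν (P x) ∧ HasGradientAt δ (ν x) x)
    -- the solution u on [0,T], with spatial gradient G, spatial Hessian H and
    -- time derivative u'
    (T : ℝ) (hT : 0 < T)
    (u : EuclideanSpace ℝ (Fin n) → ℝ → ℝ)
    (G : EuclideanSpace ℝ (Fin n) → ℝ → EuclideanSpace ℝ (Fin n))
    (H : EuclideanSpace ℝ (Fin n) → ℝ → (EuclideanSpace ℝ (Fin n) →L[ℝ] EuclideanSpace ℝ (Fin n)))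
    (u' : EuclideanSpace ℝ (Fin n) → ℝ → ℝ)
    -- u is continuous on Ω̄ × [0,T] and vanishes on ∂Ω × [0,T]
    (hu_cont : ContinuousOn (fun q : EuclideanSpace ℝ (Fin n) × ℝ => u q.1 q.2) (closure Ω ×ˢ Icc 0 T))
    (hu_bd : ∀ b ∈ frontier Ω, ∀ t ∈ Icc (0 : ℝ) T, u b t = 0)
    -- u is continuously differentiable in x on Ω̄ × [0,T), with spatial gradient G
    (hG : ∀ t ∈ Ico (0 : ℝ) T, ∀ x ∈ closure Ω,
      HasGradientWithinAt (fun y => u y t) (G x t) (closure Ω) x)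
    (hG_cont : ContinuousOn (fun q : EuclideanSpace ℝ (Fin n) × ℝ => G q.1 q.2) (closure Ω ×ˢ Ico 0 T))
    -- on Ω × (0,T], u has spatial gradient G, spatial Hessian H and time derivative u',
    -- all continuous there
    (hG2 : ∀ t ∈ Ioc (0 : ℝ) T, ∀ x ∈ Ω, HasGradientAt (fun y => u y t) (G x t) x)
    (hH : ∀ t ∈ Ioc (0 : ℝ) T, ∀ x ∈ Ω, HasFDerivAt (fun y => G y t) (H x t) x)
    (hu' : ∀ t ∈ Ioc (0 : ℝ) T, ∀ x ∈ Ω, HasDerivAt (fun s => u x s) (u' x t) t)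
    (hreg : ContinuousOn (fun q : EuclideanSpace ℝ (Fin n) × ℝ =>
      (u q.1 q.2, G q.1 q.2, H q.1 q.2, u' q.1 q.2)) (Ω ×ˢ Ioc 0 T))
    -- the PDE uₜ - Δu = |∇u|^p on Ω × (0,T]
    (hPDE : ∀ t ∈ Ioc (0 : ℝ) T, ∀ x ∈ Ω,
      u' x t - ∑ i : Fin n, ⟪H x t (EuclideanSpace.single i (1 : ℝ)),
        EuclideanSpace.single i (1 : ℝ)⟫ = ‖G x t‖ ^ p)
    -- a priori bounds: |uₜ| ≤ M on Ω × [T/2,T] and the Bernstein estimate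
    (M : ℝ) (hM : ∀ x ∈ Ω, ∀ t ∈ Icc (T / 2) T, |u' x t| ≤ M)
    (C₀ : ℝ) (hC₀ : ∀ x ∈ Ω, ∀ t ∈ Ico (0 : ℝ) T, ‖G x t‖ ≤ C₀ * ((δ x) ^ (-β) + 1))
    -- a ∈ ∂Ω is a gradient blow-up point:
    -- limsup of |∇u(x,t)| as t → T⁻, x → a equals ∞
    (a : EuclideanSpace ℝ (Fin n)) (ha : a ∈ frontier Ω)
    (hGBU : ∀ K : ℝ, ∀ η > 0, ∃ x ∈ Ω, ∃ t ∈ Ioo (T - η) T,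
      0 < t ∧ dist x a < η ∧ K ≤ ‖G x t‖)
    :
    Tendsto (fun s : ℝ => s ^ β • G (a + s • ν a) T)
      (nhdsWithin 0 (Ioi 0)) (nhds (dp • ν a)) := by
  obtain rfl : δ = fun x => infDist x (frontier Ω) := funext hδ
  subst hβ hdp
  obtain ⟨hν, hray⟩ := hν1 a ha
  obtain ⟨hmem, hdist⟩ := hray (δ₀ / 2) ⟨half_pos hδ₀, half_lt_self hδ₀⟩
  have hball : ball (a + (δ₀ / 2) • ν a) (δ₀ / 2) ⊆ Ω :=
    (congrArg (ball _) hdist).symm.subset.trans (ball_infDist_frontier_subset hΩo hmem)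
  have hsol := isClassicalSolution_of_sum_inner_single hu_cont hu_bd hG2 hH hu' hreg.snd.fst hPDE
  exact stmt7_general (isBlowupExponent_one_div hp) hΩo ha (hΩc2 a ha) hν (half_pos hδ₀) hball
    (half_lt_self hT) (hsol.mono (half_pos hT).le) (fun x hx t ht => hM x hx t ⟨ht.1.le, ht.2⟩)
    (fun x hx t ht => hC₀ x hx t ⟨(half_pos hT).le.trans ht.1.le, ht.2⟩)
    (isGradientBlowupPoint_of_forall_exists fun K η hη =>
      let ⟨x, hx, t, ht, _, hxa, hK⟩ := hGBU K η hη
      ⟨x, hx, t, ht, hxa, hK⟩)
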